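/- arXiv:math/0007211 — 5 statements merged into one kernel-verified Lean document; each statement's English description precedes it below -/
import Mathlib

section
/- Let F = F₁ ∩ ⋯ ∩ Fₙ where each Fᵢ is a henselian algebraic extension of F inside a fixed separable closure, and the valuations v₁, …, vₙ induced on F by F₁, …, Fₙ are pairwise independent. Then each Fᵢ is a henselisation of (F, vᵢ). -/
/-- `(L, O)` is a henselisation of `K` (mapped into `L` by `f`): a minimal henselian
separably algebraic valued extension. -/
def IsHenselisation {K L : Type*} [Field K] [Field L] (f : K →+* L)
    (O : ValuationSubring L) : Prop :=
  (∀ x : L, ∃ p : Polynomial K, p ≠ 0 ∧ p.Separable ∧ Polynomial.eval₂ f x p = 0) ∧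
  HenselianLocalRing ↥O ∧
  ∀ E : Subfield L, f.range ≤ E.toSubring → HenselianLocalRing ↥(O.comap (Subfield.subtype E)) → E = ⊤

/-- Independence of two valuation subrings of a field. -/
def VSIndependent {F : Type*} [Field F] (A B : ValuationSubring F) : Prop :=
  A ≠ ⊤ ∧ B ≠ ⊤ ∧ Subring.closure ((A : Set F) ∪ (B : Set F)) = ⊤

section helpers
open Polynomial

theorem hensel_nonmonic {R : Type*} [CommRing R] [HenselianLocalRing R] (q : R[X])
    (h0 : q.coeff 0 ∈ IsLocalRing.maximalIdeal R) (h1 : IsUnit (q.coeff 1)) :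
    ∃ y ∈ IsLocalRing.maximalIdeal R, q.eval y = 0 := by
  set m := q.coeff 0 with hm
  set c := q.coeff 1 with hc
  set w := q.divX.divX with hw
  have hq : q = X * (X * w + C c) + C m := by
    have e1 : q.divX = X * w + C c := by
      conv_lhs => rw [← X_mul_divX_add q.divX]
      simp [hw, hc, coeff_divX]
    rw [← e1, hm, X_mul_divX_add]
  set w' := w.comp (C m * X) with hw'
  set N := w'.natDegree
  set W := reflect N w' with hW
  have hWd : W.natDegree ≤ N := by
    refine (natDegree_reflect_le).trans ?_
    simp [N]
  let Q : R[X] := X ^ (N + 2) + (C c * X ^ (N + 1) + C m * W)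
  have hQ : Q.Monic := by
    refine monic_X_pow_add ?_
    refine lt_of_le_of_lt (degree_le_of_natDegree_le (n := N + 1) ?_) (by exact_mod_cast Nat.lt_succ_self _)
    refine natDegree_add_le_of_degree_le (natDegree_C_mul_X_pow_le _ _) ?_
    exact (natDegree_C_mul_le _ _).trans (hWd.trans (Nat.le_succ _))
  obtain ⟨z, hz, hzc⟩ := HenselianLocalRing.is_henselian Q hQ (-c) (by
    have : Q.eval (-c) = m * W.eval (-c) := by
      simp only [Q, eval_add, eval_mul, eval_pow, eval_X, eval_C]; ring
    rw [this]; exact Ideal.mul_mem_right _ _ h0) (by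
    have : Q.derivative.eval (-c) = (-c) ^ (N + 1) + m * W.derivative.eval (-c) := by
      simp only [Q, derivative_add, derivative_mul, derivative_X_pow, derivative_C, eval_add,
        eval_mul, eval_pow, eval_X, eval_C, eval_zero]
      simp only [Nat.add_sub_cancel, map_natCast, eval_natCast, Nat.cast_add, Nat.cast_ofNat,
        Nat.cast_one, Nat.succ_sub_one, Nat.add_one_sub_one, eval_add, eval_ofNat, eval_one]
      ring
    rw [this]
    by_contra hu
    have h2 := (IsLocalRing.mem_maximalIdeal _).2 hu
    have h3 := (Ideal.add_mem_iff_left _ (Ideal.mul_mem_right _ _ h0)).1 h2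
    exact (IsLocalRing.mem_maximalIdeal _).1 h3 (h1.neg.pow _))
  have hzu : IsUnit z := by
    by_contra hu
    have h2 := (IsLocalRing.mem_maximalIdeal _).2 hu
    have h3 := Ideal.sub_mem _ hzc h2
    refine (IsLocalRing.mem_maximalIdeal _).1 h3 ?_
    simpa using h1
  obtain ⟨z, rfl⟩ := hzu
  refine ⟨m * ↑z⁻¹, Ideal.mul_mem_right _ _ h0, ?_⟩
  have hz' : (z : R) ^ (N + 2) + (c * z ^ (N + 1) + m * W.eval (z : R)) = 0 := by
    simpa [Q, IsRoot] using hz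
  have hr : W.eval (z : R) * (↑z⁻¹ : R) ^ N = w'.eval (↑z⁻¹ : R) := by
    let _ : Invertible (↑z⁻¹ : R) := ⟨z, by simp, by simp⟩
    exact eval₂_reflect_mul_pow (RingHom.id R) (↑z⁻¹ : R) N w' le_rfl
  have hr' : w'.eval (↑z⁻¹ : R) = w.eval (m * ↑z⁻¹) := by simp [hw', eval_comp]
  rw [hq]
  simp only [eval_add, eval_mul, eval_X, eval_C]
  rw [← hr', ← hr]
  have hzz : (z : R) * ↑z⁻¹ = 1 := by simp
  have hzN : (z : R) ^ N * (↑z⁻¹ : R) ^ N = 1 := by rw [← mul_pow, hzz, one_pow]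
  generalize (↑z⁻¹ : R) = y at *
  generalize (z : R) = x at *
  generalize eval x W = W at *
  have : m * (y ^ N * y ^ 2) * (x ^ (N + 2) + (c * x ^ (N + 1) + m * W)) = 0 := by rw [hz', mul_zero]
  have e : m * (y ^ N * y ^ 2) * (x ^ (N + 2) + (c * x ^ (N + 1) + m * W)) =
    m * ((x ^ N * y ^ N) * (x * y) ^ 2 + c * (x ^ N * y ^ N) * (x * y) * y + m * W * y ^ N * y ^ 2) := by ring
  rw [e, hzN, hzz] at this
  linear_combination this


theorem hensel_val {L : Type*} [Field L] (O : ValuationSubring L) [HenselianLocalRing O] (p : L[X]) (a ε u : L) (hε : ε ≠ 0)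
    (hu : u ≠ 0)
    (h0 : O.valuation ((taylor a p).coeff 0 * ε ^ 0 / (ε * u)) < 1)
    (h1 : O.valuation ((taylor a p).coeff 1 * ε ^ 1 / (ε * u)) = 1)
    (hk : ∀ k, O.valuation ((taylor a p).coeff k * ε ^ k / (ε * u)) ≤ 1) :
    ∃ b, p.eval b = 0 ∧ O.valuation (b - a) < O.valuation ε := by
  set q : L[X] := C (ε * u)⁻¹ * (taylor a p).comp (C ε * X) with hq
  have hqc : ∀ k, q.coeff k = (taylor a p).coeff k * ε ^ k / (ε * u) := by
    intro k
    rw [hq, coeff_C_mul, comp_C_mul_X_coeff]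
    field_simp
  obtain ⟨q', hq'⟩ : q ∈ lifts O.subtype := by
    rw [lifts_iff_coeff_lifts]
    intro k
    exact ⟨⟨q.coeff k, O.mem_of_valuation_le_one _ (by rw [hqc]; exact hk k)⟩, rfl⟩
  have hq'c : ∀ k, ((q'.coeff k : O) : L) = q.coeff k := by
    intro k; rw [← hq']; simp
  obtain ⟨y, hy, hqy⟩ := hensel_nonmonic q' (by rw [O.valuation_lt_one_iff, hq'c, hqc]; exact h0)
    (by rw [O.valuation_eq_one_iff, hq'c, hqc]; exact h1)
  rw [O.valuation_lt_one_iff] at hy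
  have h2 : q.eval (y : L) = 0 := by
    have h3 := Polynomial.hom_eval₂ q' (RingHom.id _) O.subtype y
    have h4 : q'.eval₂ (RingHom.id _) y = 0 := hqy
    rw [h4] at h3
    rw [← hq']
    simp only [map_zero, RingHomCompTriple.comp_eq] at h3
    rw [coe_mapRingHom, eval_map]
    exact h3.symm
  refine ⟨ε * y + a, ?_, ?_⟩
  · rw [hq] at h2
    simpa [eval_comp, taylor_eval, hε, hu] using h2
  · rw [add_sub_cancel_right, map_mul]
    have : 0 < O.valuation ε := by simpa [zero_lt_iff] using hε
    exact mul_lt_of_lt_one_right this hy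

section approx
variable {K : Type*} [Field K]

/-- Independence gives a factorisation of every element. -/
theorem indep_mul (A B : ValuationSubring K)
    (h : Subring.closure ((A : Set K) ∪ (B : Set K)) = ⊤) (x : K) :
    ∃ a ∈ A, ∃ b ∈ B, x = a * b := by
  have key : ∀ x ∈ A, ∀ y ∈ B, ∃ a ∈ A, ∃ b ∈ B, x + y = a * b := by
    intro x hx y hy
    by_cases hx0 : x = 0
    · exact ⟨1, A.one_mem, y, hy, by simp [hx0]⟩
    rcases B.mem_or_inv_mem x with h1 | h1
    · exact ⟨1, A.one_mem, x + y, B.add_mem _ _ h1 hy, by simp⟩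
    · exact ⟨x, hx, 1 + x⁻¹ * y, B.add_mem _ _ B.one_mem (B.mul_mem _ _ h1 hy), by field_simp⟩
  have key2 : ∀ x ∈ A, ∀ y ∈ B, ∃ a ∈ A, ∃ b ∈ B, x * y + 1 = a * b := by
    intro x hx y hy
    by_cases hx0 : x = 0
    · exact ⟨1, A.one_mem, 1, B.one_mem, by simp [hx0]⟩
    rcases B.mem_or_inv_mem x with h1 | h1
    · exact ⟨1, A.one_mem, x * y + 1, B.add_mem _ _ (B.mul_mem _ _ h1 hy) B.one_mem, by simp⟩
    · exact ⟨x, hx, y + x⁻¹, B.add_mem _ _ hy h1, by field_simp⟩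
  have hx : x ∈ Subring.closure ((A : Set K) ∪ (B : Set K)) := by rw [h]; trivial
  induction hx using Subring.closure_induction with
  | mem x hx =>
    rcases hx with hx | hx
    · exact ⟨x, hx, 1, B.one_mem, by simp⟩
    · exact ⟨1, A.one_mem, x, hx, by simp⟩
  | zero => exact ⟨0, A.zero_mem, 0, B.zero_mem, by simp⟩
  | one => exact ⟨1, A.one_mem, 1, B.one_mem, by simp⟩
  | neg x _ ih =>
    obtain ⟨a, ha, b, hb, rfl⟩ := ih
    exact ⟨-a, A.neg_mem _ ha, b, hb, by ring⟩
  | mul x y _ _ ihx ihy =>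
    obtain ⟨a, ha, b, hb, rfl⟩ := ihx
    obtain ⟨a', ha', b', hb', rfl⟩ := ihy
    exact ⟨a * a', A.mul_mem _ _ ha ha', b * b', B.mul_mem _ _ hb hb', by ring⟩
  | add x y _ _ ihx ihy =>
    obtain ⟨a, ha, b, hb, rfl⟩ := ihx
    obtain ⟨a', ha', b', hb', rfl⟩ := ihy
    have main : ∀ a ∈ A, ∀ b ∈ B, ∀ a' ∈ A, ∀ b' ∈ B, a' ≠ 0 → a / a' ∈ A →
        ∃ c ∈ A, ∃ d ∈ B, a * b + a' * b' = c * d := by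
      intro a ha b hb a' ha' b' hb' h0 hd
      by_cases hb0 : b = 0
      · exact ⟨a', ha', b', hb', by simp [hb0]⟩
      by_cases hb0' : b' = 0
      · exact ⟨a, ha, b, hb, by simp [hb0']⟩
      rcases B.mem_or_inv_mem (b / b') with h1 | h1
      · obtain ⟨c, hc, d, hd', e⟩ := key2 _ hd _ h1
        refine ⟨a' * c, A.mul_mem _ _ ha' hc, b' * d, B.mul_mem _ _ hb' hd', ?_⟩
        have : a' * c * (b' * d) = a' * b' * (c * d) := by ring
        rw [this, ← e]; field_simp
      · rw [inv_div] at h1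
        obtain ⟨c, hc, d, hd', e⟩ := key _ hd _ h1
        refine ⟨a' * c, A.mul_mem _ _ ha' hc, b * d, B.mul_mem _ _ hb hd', ?_⟩
        have : a' * c * (b * d) = a' * b * (c * d) := by ring
        rw [this, ← e]; field_simp
    by_cases h0 : a = 0
    · exact ⟨a', ha', b', hb', by simp [h0]⟩
    by_cases h0' : a' = 0
    · exact ⟨a, ha, b, hb, by simp [h0']⟩
    rcases A.mem_or_inv_mem (a / a') with h1 | h1
    · exact main a ha b hb a' ha' b' hb' h0' h1
    · rw [inv_div] at h1
      rw [add_comm]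
      exact main a' ha' b' hb' a ha b hb h0 h1

theorem approx_pair (A B : ValuationSubring K)
    (h : Subring.closure ((A : Set K) ∪ (B : Set K)) = ⊤) (c d : K) (hc : c ≠ 0) (hd : d ≠ 0) :
    ∃ u : K, u ≠ 0 ∧ A.valuation u⁻¹ ≤ A.valuation c ∧ B.valuation u ≤ B.valuation d := by
  obtain ⟨a, ha, b, hb, e⟩ := indep_mul A B h (c * d)⁻¹
  have ha0 : a ≠ 0 := by rintro rfl; simp [hc, hd] at e
  have hb0 : b ≠ 0 := by rintro rfl; simp [hc, hd] at e
  refine ⟨d * b, mul_ne_zero hd hb0, ?_, ?_⟩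
  · have : (d * b)⁻¹ = c * a := by
      field_simp at e ⊢
      linear_combination e
    rw [this, map_mul]
    exact mul_le_of_le_one_right' ((A.valuation_le_one_iff _).2 ha)
  · rw [map_mul]
    exact mul_le_of_le_one_right' ((B.valuation_le_one_iff _).2 hb)

theorem val_frac_small {Γ : Type*} [LinearOrderedCommGroupWithZero Γ] (v : Valuation K Γ) {x : K}
    (h : v x < 1) : v (x / (1 + x)) = v x := by
  rw [map_div₀, v.map_one_add_of_lt h, div_one]

theorem val_frac_big {Γ : Type*} [LinearOrderedCommGroupWithZero Γ] (v : Valuation K Γ) {x : K}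
    (h0 : x ≠ 0) (h : v x⁻¹ < 1) : v (1 + x) = v x := by
  have : 1 + x = x * (1 + x⁻¹) := by field_simp; ring
  rw [this, map_mul, v.map_one_add_of_lt h, mul_one]

theorem approx_big {ι : Type*} (A : ι → ValuationSubring K)
    (i : ι) (s : Finset ι) (his : i ∉ s)
    (h : ∀ j ∈ s, Subring.closure ((A i : Set K) ∪ (A j : Set K)) = ⊤) :
    ∀ (c : ι → K) (_ : ∀ j, c j ≠ 0) (_ : (A i).valuation (c i) < 1)
      (_ : ∀ j ∈ s, (A j).valuation (c j) < 1),
    ∃ u : K, u ≠ 0 ∧ (A i).valuation u⁻¹ ≤ (A i).valuation (c i) ∧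
      ∀ j ∈ s, (A j).valuation u ≤ (A j).valuation (c j) := by
  classical
  induction s using Finset.induction_on with
  | empty => intro c hc _ _; exact ⟨(c i)⁻¹, inv_ne_zero (hc i), by simp, by simp⟩
  | insert n s hn ih =>
    intro c hc hci hcs
    obtain ⟨z, hz0, hzi, hzn⟩ := approx_pair (A i) (A n) (h n (by simp)) (c i) (c n) (hc i) (hc n)
    have his' : i ∉ s := fun h' => his (Finset.mem_insert_of_mem h')
    let c' : ι → K := fun k => if k = i then c i else
      if (A k).valuation z ≤ 1 then c k else c k / z
    have hc' : ∀ k, c' k ≠ 0 := by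
      intro k; simp only [c']; split_ifs
      · exact hc i
      · exact hc k
      · exact div_ne_zero (hc k) hz0
    have hci' : c' i = c i := by simp [c']
    have hc1 : ∀ k, k ≠ i → (A k).valuation (c' k) * (A k).valuation z ≤ (A k).valuation (c k) := by
      intro k hk
      simp only [c', hk, if_false]
      split_ifs with h1
      · exact mul_le_of_le_one_right' h1
      · rw [← map_mul, div_mul_cancel₀ _ hz0]
    have hc2 : ∀ k, k ≠ i → (A k).valuation (c' k) ≤ (A k).valuation (c k) := by
      intro k hk
      simp only [c', hk, if_false]
      split_ifs with h1
      · exact le_rfl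
      · rw [map_div₀]
        exact div_le_of_le_mul₀ zero_le' zero_le' (le_mul_of_one_le_right' (not_le.1 h1).le)
    have hne : ∀ k ∈ s, k ≠ i := fun k hk e => his' (e ▸ hk)
    have hc3 : ∀ k ∈ s, (A k).valuation (c' k) < 1 := fun k hk =>
      (hc2 k (hne k hk)).trans_lt (hcs k (Finset.mem_insert_of_mem hk))
    obtain ⟨x, hx0, hxi, hxs⟩ := ih his' (fun j hj => h j (Finset.mem_insert_of_mem hj)) c' hc'
      (by rw [hci']; exact hci) hc3
    rw [hci'] at hxi
    by_cases hxn : (A n).valuation x ≤ 1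
    · refine ⟨x * z, mul_ne_zero hx0 hz0, ?_, ?_⟩
      · rw [mul_inv, map_mul]
        exact (mul_le_of_le_one_left' (hxi.trans hci.le)).trans hzi
      · intro j hj
        rw [map_mul]
        rcases Finset.mem_insert.1 hj with rfl | hj
        · exact (mul_le_of_le_one_left' hxn).trans hzn
        · exact (mul_le_mul' (hxs j hj) le_rfl).trans (hc1 j (hne j hj))
    · have hxn' : (A n).valuation x⁻¹ < 1 := by
        rw [map_inv₀]; exact inv_lt_one_of_one_lt₀ (not_le.1 hxn)
      have hvi := val_frac_big (A i).valuation hx0 (hxi.trans_lt hci)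
      have hvn := val_frac_big (A n).valuation hx0 hxn'
      have h1x : 1 + x ≠ 0 := by
        intro h0
        rw [h0, map_zero] at hvi
        exact hx0 ((Valuation.zero_iff _).1 hvi.symm)
      have hvi1 : (A i).valuation (x / (1 + x)) = 1 := by
        rw [map_div₀, hvi, div_self]; exact (Valuation.ne_zero_iff _).2 hx0
      have hvn1 : (A n).valuation (x / (1 + x)) = 1 := by
        rw [map_div₀, hvn, div_self]; exact (Valuation.ne_zero_iff _).2 hx0
      refine ⟨x / (1 + x) * z, mul_ne_zero (div_ne_zero hx0 h1x) hz0, ?_, ?_⟩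
      · rw [mul_inv, map_mul, map_inv₀ _ (x / (1 + x)), hvi1, inv_one, one_mul]
        exact hzi
      · intro j hj
        rw [map_mul]
        rcases Finset.mem_insert.1 hj with rfl | hj
        · rw [hvn1, one_mul]; exact hzn
        · rw [val_frac_small _ ((hxs j hj).trans_lt (hc3 j hj))]
          exact (mul_le_mul' (hxs j hj) le_rfl).trans (hc1 j (hne j hj))

theorem approx_idem {ι : Type*} (A : ι → ValuationSubring K)
    (i : ι) (s : Finset ι) (his : i ∉ s)
    (h : ∀ j ∈ s, Subring.closure ((A i : Set K) ∪ (A j : Set K)) = ⊤)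
    (c : ι → K) (hc : ∀ j, c j ≠ 0) (hci : (A i).valuation (c i) < 1)
    (hcs : ∀ j ∈ s, (A j).valuation (c j) < 1) :
    ∃ e : K, (A i).valuation (e - 1) ≤ (A i).valuation (c i) ∧
      ∀ j ∈ s, (A j).valuation e ≤ (A j).valuation (c j) := by
  obtain ⟨x, hx0, hxi, hxs⟩ := approx_big A i s his h c hc hci hcs
  have hvi := val_frac_big (A i).valuation hx0 (hxi.trans_lt hci)
  have h1x : 1 + x ≠ 0 := by
    intro h0
    rw [h0, map_zero] at hvi
    exact hx0 ((Valuation.zero_iff _).1 hvi.symm)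
  refine ⟨x / (1 + x), ?_, fun j hj => ?_⟩
  · have : x / (1 + x) - 1 = - (1 + x)⁻¹ := by field_simp; ring
    rw [this, Valuation.map_neg, map_inv₀, hvi, ← map_inv₀]
    exact hxi
  · rw [val_frac_small _ ((hxs j hj).trans_lt (hcs j hj))]
    exact hxs j hj

end approx

section small
variable {L : Type*} [Field L]

/-- `P t` holds for all sufficiently small `t`. -/
def SmallV (O : ValuationSubring L) (P : L → Prop) : Prop :=
  ∃ δ : L, δ ≠ 0 ∧ ∀ t, O.valuation t ≤ O.valuation δ → P t

theorem SmallV.mono {O : ValuationSubring L} {P Q : L → Prop} (h : SmallV O P)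
    (hpq : ∀ t, P t → Q t) : SmallV O Q := by
  obtain ⟨δ, h0, h⟩ := h
  exact ⟨δ, h0, fun t ht => hpq _ (h t ht)⟩

theorem SmallV.and {O : ValuationSubring L} {P Q : L → Prop} (h : SmallV O P)
    (hq : SmallV O Q) : SmallV O (fun t => P t ∧ Q t) := by
  obtain ⟨δ, h0, h⟩ := h
  obtain ⟨η, h0', h'⟩ := hq
  rcases le_total (O.valuation δ) (O.valuation η) with hle | hle
  · exact ⟨δ, h0, fun t ht => ⟨h t ht, h' t (ht.trans hle)⟩⟩
  · exact ⟨η, h0', fun t ht => ⟨h t (ht.trans hle), h' t ht⟩⟩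

theorem SmallV.all {O : ValuationSubring L} {ι : Type*} (s : Finset ι) {P : ι → L → Prop}
    (h : ∀ k ∈ s, SmallV O (P k)) : SmallV O (fun t => ∀ k ∈ s, P k t) := by
  classical
  induction s using Finset.induction_on with
  | empty => exact ⟨1, one_ne_zero, by simp⟩
  | insert n s hn ih =>
    refine ((h n (by simp)).and (ih fun k hk => h k (by simp [hk]))).mono ?_
    intro t ht
    simpa using ht

theorem poly_bound (O : ValuationSubring L) (P : L[X]) :
    ∃ M : L, M ≠ 0 ∧ ∀ s, O.valuation s ≤ 1 → O.valuation (P.eval s) ≤ O.valuation M := by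
  induction P using Polynomial.induction_on' with
  | add p q hp hq =>
    obtain ⟨M, hM, h⟩ := hp
    obtain ⟨N, hN, h'⟩ := hq
    rcases le_total (O.valuation M) (O.valuation N) with hle | hle
    · exact ⟨N, hN, fun s hs => by
        rw [eval_add]; exact Valuation.map_add_le _ ((h s hs).trans hle) (h' s hs)⟩
    · exact ⟨M, hM, fun s hs => by
        rw [eval_add]; exact Valuation.map_add_le _ (h s hs) ((h' s hs).trans hle)⟩
  | monomial n a =>
    by_cases ha : a = 0
    · exact ⟨1, one_ne_zero, by simp [ha]⟩
    · refine ⟨a, ha, fun s hs => ?_⟩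
      rw [eval_monomial, map_mul, map_pow]
      exact mul_le_of_le_one_right' (pow_le_one' hs n)

theorem small_eval (O : ValuationSubring L) (π : L) (hπ : π ≠ 0) (hπ1 : O.valuation π < 1)
    (P : L[X]) (hP : P.eval 0 = 0) (η : L) (hη : η ≠ 0) :
    SmallV O (fun t => O.valuation (P.eval t) < O.valuation η) := by
  obtain ⟨M, hM, h⟩ := poly_bound O P.divX
  have h1 : SmallV O (fun t => O.valuation t ≤ 1) := ⟨1, one_ne_zero, fun t ht => by simpa using ht⟩
  have h2 : SmallV O (fun t => O.valuation t ≤ O.valuation (η * π / M)) :=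
    ⟨_, by simp [hη, hπ, hM], fun t ht => ht⟩
  refine (h1.and h2).mono ?_
  rintro t ⟨ht1, ht2⟩
  have e : P.eval t = t * P.divX.eval t := by
    conv_lhs => rw [← X_mul_divX_add P]
    rw [coeff_zero_eq_eval_zero, hP]; simp
  have h0 : 0 < O.valuation η := by simpa [zero_lt_iff] using hη
  calc O.valuation (P.eval t) = O.valuation t * O.valuation (P.divX.eval t) := by rw [e, map_mul]
    _ ≤ O.valuation (η * π / M) * O.valuation M := mul_le_mul' ht2 (h t ht1)
    _ = O.valuation η * O.valuation π := by rw [← map_mul, div_mul_cancel₀ _ hM, map_mul]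
    _ < O.valuation η := mul_lt_of_lt_one_right h0 hπ1

theorem smallV_sub_eval (O : ValuationSubring L) (π : L) (hπ : π ≠ 0) (hπ1 : O.valuation π < 1)
    (P : L[X]) (a : L) (η : L) (hη : η ≠ 0) :
    SmallV O (fun t => O.valuation (P.eval (a + t) - P.eval a) < O.valuation η) := by
  refine (small_eval O π hπ hπ1 (P.comp (C a + X) - C (P.eval a)) (by simp) η hη).mono ?_
  intro t ht
  simpa using ht

/-- choice of the scaling factor -/
theorem exists_scale (O : ValuationSubring L) (π : L) (hπ : π ≠ 0) (hπ1 : O.valuation π < 1)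
    (c : ℕ → L) (u : L) (N : ℕ) (η : L) (hη : η ≠ 0) :
    ∃ ε : L, ε ≠ 0 ∧ O.valuation ε < O.valuation η ∧
      ∀ k ∈ Finset.range N, 2 ≤ k → O.valuation (c k * ε ^ k / (ε * u)) < 1 := by
  have h1 := small_eval O π hπ hπ1 X (by simp) η hη
  have h2 : SmallV O (fun t => ∀ k ∈ Finset.range N, 2 ≤ k →
      O.valuation ((C (c k / u) * X ^ (k - 1)).eval t) < O.valuation 1) := by
    refine SmallV.all _ fun k _ => ?_
    by_cases hk : 2 ≤ k
    · refine (small_eval O π hπ hπ1 (C (c k / u) * X ^ (k - 1)) ?_ 1 one_ne_zero).mono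
        fun t ht _ => ht
      have : k - 1 ≠ 0 := by omega
      simp [this]
    · exact ⟨1, one_ne_zero, fun t _ h => absurd h hk⟩
  obtain ⟨ε, h0, h⟩ := h1.and h2
  obtain ⟨h3, h4⟩ := h ε le_rfl
  refine ⟨ε, h0, by simpa using h3, fun k hk hk2 => ?_⟩
  have h5 := h4 k hk hk2
  rw [map_one] at h5
  convert h5 using 2
  obtain ⟨m, rfl⟩ : ∃ m, k = m + 1 := ⟨k - 1, by omega⟩
  simp only [eval_mul, eval_C, eval_pow, eval_X, Nat.add_sub_cancel, pow_succ]
  by_cases hu : u = 0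
  · simp [hu]
  · field_simp

theorem newton (O : ValuationSubring L) [HenselianLocalRing O] (π : L) (hπ : π ≠ 0)
    (hπ1 : O.valuation π < 1) (P Q : L[X]) (a : L) (hP : P.eval a = 0)
    (hP' : P.derivative.eval a ≠ 0) (η : L) (hη : η ≠ 0) :
    SmallV O (fun t => ∃ b, (P + C t * Q).eval b = 0 ∧ O.valuation (b - a) < O.valuation η) := by
  set u := P.derivative.eval a with hu
  set N := max (P.natDegree + 1) (max (Q.natDegree + 1) 2) with hN
  obtain ⟨ε, hε, hεη, hk⟩ := exists_scale O π hπ hπ1 (taylor a P).coeff u N η hη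
  have h1 : SmallV O (fun t => ∀ k ∈ Finset.range N,
      O.valuation ((C ((taylor a Q).coeff k * ε ^ k / (ε * u)) * X).eval t) < O.valuation 1) :=
    SmallV.all _ fun k _ => small_eval O π hπ hπ1 _ (by simp) 1 one_ne_zero
  refine h1.mono fun t ht => ?_
  have hd : ∀ k ∈ Finset.range N,
      O.valuation (t * (taylor a Q).coeff k * ε ^ k / (ε * u)) < 1 := by
    intro k hk
    have h2 := ht k hk
    rw [map_one] at h2
    convert h2 using 2
    simp; ring
  have hco : ∀ k, (taylor a (P + C t * Q)).coeff k * ε ^ k / (ε * u) =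
      (taylor a P).coeff k * ε ^ k / (ε * u) + t * (taylor a Q).coeff k * ε ^ k / (ε * u) := by
    intro k
    rw [map_add, taylor_mul, taylor_C, coeff_add, coeff_C_mul]
    ring
  have w1 : O.valuation ((taylor a (P + C t * Q)).coeff 1 * ε ^ 1 / (ε * u)) = 1 := by
    rw [hco, taylor_coeff_one, ← hu]
    have : u * ε ^ 1 / (ε * u) = 1 := by field_simp
    rw [this]
    exact Valuation.map_one_add_of_lt _ (hd 1 (by simp [hN]))
  have w0 : O.valuation ((taylor a (P + C t * Q)).coeff 0 * ε ^ 0 / (ε * u)) < 1 := by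
    rw [hco, taylor_coeff_zero, hP, zero_mul, zero_div, zero_add]
    exact hd 0 (by simp [hN])
  obtain ⟨b, hb, hba⟩ := hensel_val O (P + C t * Q) a ε u hε hP' w0 w1 (by
    intro k
    by_cases hkN : k < N
    · rcases Nat.lt_or_ge k 2 with h2 | h2
      · interval_cases k
        · exact w0.le
        · exact w1.le
      · rw [hco]
        exact (Valuation.map_add_lt _ (hk k (by simpa using hkN) h2)
          (hd k (by simpa using hkN))).le
    · rw [hco, coeff_eq_zero_of_natDegree_lt, coeff_eq_zero_of_natDegree_lt]
      · simp
      · rw [natDegree_taylor]; omega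
      · rw [natDegree_taylor]; omega)
  exact ⟨b, hb, hba.trans hεη⟩

theorem comap_val_le {E : Type*} [Field E] (f : E →+* L) (O : ValuationSubring L) (x y : E) :
    (O.comap f).valuation x ≤ (O.comap f).valuation y ↔
      O.valuation (f x) ≤ O.valuation (f y) := by
  by_cases hy : y = 0
  · simp [hy]
  have h1 : 0 < (O.comap f).valuation y := by simpa [zero_lt_iff] using hy
  have h2 : 0 < O.valuation (f y) := by simpa [zero_lt_iff] using hy
  rw [← div_le_one₀ h1, ← div_le_one₀ h2, ← map_div₀, ← map_div₀, ← map_div₀,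
    ValuationSubring.valuation_le_one_iff, ValuationSubring.valuation_le_one_iff,
    ValuationSubring.mem_comap]

theorem comap_val_lt {E : Type*} [Field E] (f : E →+* L) (O : ValuationSubring L) (x y : E) :
    (O.comap f).valuation x < (O.comap f).valuation y ↔
      O.valuation (f x) < O.valuation (f y) := by
  rw [← not_le, ← not_le, comap_val_le]

/-- A dense henselian subfield is closed under simple roots. -/
theorem dense_root {E : Type*} [Field E] (f : E →+* L) (O : ValuationSubring L)
    (hH : HenselianLocalRing (O.comap f)) (π : L) (hπ : π ≠ 0)
    (hπ1 : O.valuation π < 1)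
    (hdense : ∀ x η : L, η ≠ 0 → ∃ y : E, O.valuation (f y - x) ≤ O.valuation η)
    (p : E[X]) (α : L) (hp : (p.map f).eval α = 0) (hp' : (p.map f).derivative.eval α ≠ 0) :
    ∃ b : E, p.eval b = 0 := by
  have hle1 : ∀ x : E, (O.comap f).valuation x ≤ 1 ↔ O.valuation (f x) ≤ 1 := fun x => by
    simpa using comap_val_le f O x 1
  have hlt1 : ∀ x : E, (O.comap f).valuation x < 1 ↔ O.valuation (f x) < 1 := fun x => by
    simpa using comap_val_lt f O x 1
  set P := p.map f with hP
  set u := P.derivative.eval α with hu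
  set N := max (P.natDegree + 1) 2 with hN
  obtain ⟨ε', hε', -, hk'⟩ := exists_scale O π hπ hπ1 (taylor α P).coeff u N 1 one_ne_zero
  -- a scaling factor from `E`
  obtain ⟨ε, hε⟩ := hdense ε' (ε' * π) (mul_ne_zero hε' hπ)
  have hεv : O.valuation (f ε) = O.valuation ε' := by
    have h0 : 0 < O.valuation ε' := by simpa [zero_lt_iff] using hε'
    have : O.valuation (f ε - ε') < O.valuation ε' := by
      refine hε.trans_lt ?_
      rw [map_mul]
      exact mul_lt_of_lt_one_right h0 hπ1
    have h2 := Valuation.map_add_eq_of_lt_left O.valuation this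
    simpa using h2
  have hε0 : ε ≠ 0 := by
    rintro rfl
    rw [map_zero, map_zero] at hεv
    exact hε' ((Valuation.zero_iff _).1 hεv.symm)
  have hfε0 : f ε ≠ 0 := by simpa using hε0
  have hk : ∀ k ∈ Finset.range N, 2 ≤ k →
      O.valuation ((taylor α P).coeff k * f ε ^ k / (f ε * u)) < 1 := by
    intro k hkN hk2
    have := hk' k hkN hk2
    simpa only [map_div₀, map_mul, map_pow, hεv] using this
  -- the approximation
  obtain ⟨δ, hδ0, hδ⟩ : SmallV O (fun t => ∀ k ∈ Finset.range N,
      O.valuation ((hasseDeriv k P).eval (α + t) - (hasseDeriv k P).eval α) <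
        O.valuation (f ε * u / f ε ^ k)) :=
    SmallV.all _ fun k _ => smallV_sub_eval O π hπ hπ1 _ _ _
      (div_ne_zero (mul_ne_zero hfε0 hp') (pow_ne_zero _ hfε0))
  obtain ⟨β, hβ⟩ := hdense α δ hδ0
  have hδ := hδ _ hβ
  simp only [add_sub_cancel, ← taylor_coeff] at hδ
  have hdiff : ∀ k ∈ Finset.range N, O.valuation
      ((taylor (f β) P).coeff k * f ε ^ k / (f ε * u) -
        (taylor α P).coeff k * f ε ^ k / (f ε * u)) < 1 := by
    intro k hkN
    have h1 := hδ k hkN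
    have h2 : (taylor (f β) P).coeff k * f ε ^ k / (f ε * u) -
        (taylor α P).coeff k * f ε ^ k / (f ε * u) =
        ((taylor (f β) P).coeff k - (taylor α P).coeff k) / (f ε * u / f ε ^ k) := by
      field_simp
    have h3 : 0 < O.valuation (f ε * u / f ε ^ k) := zero_le'.trans_lt h1
    rw [h2, map_div₀]
    exact (div_lt_one₀ h3).2 h1
  have w0 : O.valuation ((taylor (f β) P).coeff 0 * f ε ^ 0 / (f ε * u)) < 1 := by
    have h1 := hdiff 0 (by simp [hN])
    rw [taylor_coeff_zero _ P, taylor_coeff_zero _ P, hp, zero_mul, zero_div, sub_zero] at h1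
    rw [taylor_coeff_zero]
    exact h1
  have w1 : O.valuation ((taylor (f β) P).coeff 1 * f ε ^ 1 / (f ε * u)) = 1 := by
    have h1 := hdiff 1 (by simp [hN])
    have h2 : (taylor α P).coeff 1 * f ε ^ 1 / (f ε * u) = 1 := by
      rw [taylor_coeff_one, ← hu]; field_simp
    rw [h2] at h1
    have h3 := Valuation.map_one_add_of_lt _ h1
    simpa using h3
  have wk : ∀ k, O.valuation ((taylor (f β) P).coeff k * f ε ^ k / (f ε * u)) ≤ 1 := by
    intro k
    by_cases hkN : k < N
    · rcases Nat.lt_or_ge k 2 with h2 | h2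
      · interval_cases k
        · exact w0.le
        · exact w1.le
      · have h3 := Valuation.map_add_lt _ (hdiff k (by simpa using hkN)) (hk k (by simpa using hkN) h2)
        rw [sub_add_cancel] at h3
        exact h3.le
    · rw [coeff_eq_zero_of_natDegree_lt]
      · simp
      · rw [natDegree_taylor]; omega
  -- replace `u` by the derivative at `β`
  set u' := (taylor β p).coeff 1 with hu'
  have hmap : ∀ k, f ((taylor β p).coeff k) = (taylor (f β) P).coeff k := by
    intro k
    rw [hP, ← coeff_map, map_taylor]
  have huu : O.valuation (f u') = O.valuation u := by
    rw [← hmap 1, ← hu'] at w1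
    have : f u' * f ε ^ 1 / (f ε * u) = f u' / u := by field_simp
    rw [this, map_div₀] at w1
    exact eq_of_div_eq_one w1
  have hu0 : u' ≠ 0 := by
    intro h
    rw [h, map_zero, map_zero] at huu
    exact hp' ((Valuation.zero_iff _).1 huu.symm)
  have hconv : ∀ k, O.valuation (f ((taylor β p).coeff k * ε ^ k / (ε * u'))) =
      O.valuation ((taylor (f β) P).coeff k * f ε ^ k / (f ε * u)) := by
    intro k
    simp only [map_div₀, map_mul, map_pow, huu, hmap]
  obtain ⟨b, hb, -⟩ := hensel_val (O.comap f) p β ε u' hε0 hu0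
    (by rw [hlt1, hconv]; exact w0)
    (by
      rw [← hu', pow_one, mul_comm u', div_self (mul_ne_zero hε0 hu0), map_one])
    (fun k => by rw [hle1, hconv]; exact wk k)
  exact ⟨b, hb⟩

/-- Value groups of algebraic extensions are cofinal. -/
theorem exists_small_of_algebraic {K : Type*} [Field K] (f : K →+* L)
    (O : ValuationSubring L) (hint : ∀ x : L, f.IsIntegralElem x) (x : L) (hx : x ≠ 0) :
    ∃ c : K, c ≠ 0 ∧ O.valuation (f c) ≤ O.valuation x := by
  let S : Subring L :=
    { carrier := {y | ∃ c : K, c ≠ 0 ∧ f c * y ∈ O}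
      mul_mem' := by
        rintro a b ⟨c, hc, h⟩ ⟨d, hd, h'⟩
        refine ⟨c * d, mul_ne_zero hc hd, ?_⟩
        have : f (c * d) * (a * b) = (f c * a) * (f d * b) := by rw [map_mul]; ring
        rw [this]; exact O.mul_mem _ _ h h'
      one_mem' := ⟨1, one_ne_zero, by simpa using O.one_mem⟩
      zero_mem' := ⟨1, one_ne_zero, by simpa using O.zero_mem⟩
      add_mem' := by
        rintro a b ⟨c, hc, h⟩ ⟨d, hd, h'⟩
        rcases O.mem_or_inv_mem (f (c / d)) with h1 | h1
        · refine ⟨c, hc, ?_⟩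
          have hd' : f d ≠ 0 := by simpa using hd
          have : f c * (a + b) = f c * a + f (c / d) * (f d * b) := by
            rw [map_div₀]; field_simp
          rw [this]; exact O.add_mem _ _ h (O.mul_mem _ _ h1 h')
        · refine ⟨d, hd, ?_⟩
          have hc' : f c ≠ 0 := by simpa using hc
          have : f d * (a + b) = (f (c / d))⁻¹ * (f c * a) + f d * b := by
            rw [map_div₀]; field_simp
          rw [this]; exact O.add_mem _ _ (O.mul_mem _ _ h1 h) h'
      neg_mem' := by
        rintro a ⟨c, hc, h⟩
        exact ⟨c, hc, by rw [mul_neg]; exact O.neg_mem _ h⟩ }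
  let O' : ValuationSubring L := O.ofLE S (fun y hy => ⟨1, one_ne_zero, by simpa using hy⟩)
  have hmem : ∀ y, y ∈ O' ↔ ∃ c : K, c ≠ 0 ∧ f c * y ∈ O := fun y => Iff.rfl
  have hK : ∀ k : K, f k ∈ O' := by
    intro k
    by_cases hk : k = 0
    · rw [hk, map_zero]; exact O'.zero_mem
    · exact (hmem _).2 ⟨k⁻¹, inv_ne_zero hk, by
        rw [← map_mul, inv_mul_cancel₀ hk, map_one]; exact O.one_mem⟩
  have hall : ∀ y, y ∈ O' := by
    intro y
    obtain ⟨p, hp, hpy⟩ := hint y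
    let g : K →+* O' := f.codRestrict O'.toSubring hK
    have hy : IsIntegral O' y := by
      refine ⟨p.map g, hp.map g, ?_⟩
      rw [eval₂_map]
      exact hpy
    obtain ⟨z, hz⟩ := IsIntegrallyClosed.isIntegral_iff.1 hy
    rw [← hz]
    exact z.2
  obtain ⟨c, hc, h⟩ := (hmem _).1 (hall x⁻¹)
  refine ⟨c, hc, ?_⟩
  have h1 := (O.valuation_le_one_iff _).2 h
  have h0 : 0 < O.valuation x := by simpa [zero_lt_iff] using hx
  rw [map_mul, map_inv₀, ← div_eq_mul_inv] at h1
  exact (div_le_one₀ h0).1 h1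

end small

theorem smallV_pullback {K L : Type*} [Field K] [Field L] (f : K →+* L)
    (O : ValuationSubring L) (hint : ∀ x : L, f.IsIntegralElem x)
    (π : K) (hπ : π ≠ 0) (hπ1 : O.valuation (f π) < 1) {P : L → Prop} (hP : SmallV O P) :
    ∃ c : K, c ≠ 0 ∧ (O.comap f).valuation c < 1 ∧
      ∀ t : K, (O.comap f).valuation t ≤ (O.comap f).valuation c → P (f t) := by
  have h2 : SmallV O (fun t => O.valuation t ≤ O.valuation (f π)) :=
    ⟨f π, by simpa using hπ, fun t ht => ht⟩
  obtain ⟨δ, hδ, h⟩ := hP.and h2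
  obtain ⟨c, hc, hcδ⟩ := exists_small_of_algebraic f O hint δ hδ
  refine ⟨c, hc, ?_, fun t ht => (h _ (((comap_val_le f O _ _).1 ht).trans hcδ)).1⟩
  have h3 := comap_val_lt f O c 1
  rw [map_one, map_one, map_one] at h3
  exact h3.2 ((h _ hcδ).2.trans_lt hπ1)

theorem exists_pi {K : Type*} [Field K] (A : ValuationSubring K) (h : A ≠ ⊤) :
    ∃ π : K, π ≠ 0 ∧ A.valuation π < 1 := by
  obtain ⟨x, hx⟩ : ∃ x, x ∉ A := by
    by_contra hcon
    push Not at hcon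
    exact h (by ext x; simp [hcon x])
  have hx0 : x ≠ 0 := fun h0 => hx (h0 ▸ A.zero_mem)
  refine ⟨x⁻¹, inv_ne_zero hx0, ?_⟩
  rw [map_inv₀]
  refine inv_lt_one_of_one_lt₀ ?_
  rw [← not_le, A.valuation_le_one_iff]
  exact hx

theorem infinite_of_pi {K : Type*} [Field K] (A : ValuationSubring K) (π : K) (h0 : π ≠ 0)
    (h : A.valuation π < 1) : Infinite K := by
  by_contra hfin
  rw [not_infinite_iff_finite] at hfin
  have h1 := pow_card_eq_one' (G := Kˣ) (x := Units.mk0 π h0)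
  have h2 : π ^ Nat.card Kˣ = 1 := by
    have h1' := congrArg Units.val h1
    rw [Units.val_pow_eq_pow_val] at h1'
    exact h1'
  have h3 : A.valuation π ^ Nat.card Kˣ < 1 := pow_lt_one₀ zero_le' h Nat.card_pos.ne'
  rw [← map_pow, h2, map_one] at h3
  exact lt_irrefl _ h3

/-- Roots near distinct centres: all roots of `g` lie in the subfield. -/
theorem split_step {K L Ω : Type*} [Field K] [Field L] [Field Ω] (f : K →+* L) (ι : L →+* Ω)
    (O : ValuationSubring L) [HenselianLocalRing O] (π : L) (hπ : π ≠ 0)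
    (hπ1 : O.valuation π < 1) (s : Finset K) (D : K[X])
    (hD : D.degree < s.card) :
    SmallV O (fun t => ∀ β : Ω,
      (((∏ r ∈ s, (X - C r)).map f + C t * D.map f).map ι).eval β = 0 → β ∈ ι.range) := by
  classical
  set h : K[X] := ∏ r ∈ s, (X - C r) with hh
  have hmon : h.Monic := monic_prod_of_monic _ _ fun r _ => monic_X_sub_C r
  have hdeg : h.degree = s.card := by rw [hh, degree_prod]; simp
  have hroot : ∀ r ∈ s, (h.map f).eval (f r) = 0 := by
    intro r hr
    rw [eval_map_apply, hh, eval_prod, Finset.prod_eq_zero hr (by simp), map_zero]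
  have hroot' : ∀ r ∈ s, (h.map f).derivative.eval (f r) ≠ 0 := by
    intro r hr
    rw [derivative_map, eval_map_apply, _root_.map_ne_zero]
    have hsep : h.Separable := separable_prod_X_sub_C_iff'.2 (fun x _ y _ e => e)
    have : h.eval r = 0 := by rw [hh, eval_prod, Finset.prod_eq_zero hr (by simp)]
    exact hsep.eval₂_derivative_ne_zero (RingHom.id K) this
  -- minimal distance
  obtain ⟨η, hη, hηs⟩ : SmallV O (fun t => ∀ q ∈ s ×ˢ s, q.1 ≠ q.2 →
      O.valuation t ≤ O.valuation (f q.1 - f q.2)) := by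
    refine SmallV.all _ fun q _ => ?_
    by_cases hq : q.1 = q.2
    · exact ⟨1, one_ne_zero, fun t _ h => absurd hq h⟩
    · exact ⟨f q.1 - f q.2, sub_ne_zero.2 (fun e => hq (f.injective e)), fun t ht _ => ht⟩
  have hηs := hηs η le_rfl
  have hN : SmallV O (fun t => ∀ r ∈ s, ∃ b, (h.map f + C t * D.map f).eval b = 0 ∧
      O.valuation (b - f r) < O.valuation η) :=
    SmallV.all _ fun r hr => newton O π hπ hπ1 _ _ _ (hroot r hr) (hroot' r hr) η hη
  refine hN.mono fun t ht β hβ => ?_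
  set g := h.map f + C t * D.map f with hg
  choose! b hb hbr using ht
  have hinj : Set.InjOn b s := by
    intro r hr r' hr' e
    by_contra hne
    have h1 := hηs (r, r') (Finset.mem_product.2 ⟨hr, hr'⟩) hne
    have h2 := Valuation.map_sub_lt O.valuation (hbr r' hr') (hbr r hr)
    rw [← e, sub_sub_sub_cancel_left] at h2
    exact absurd h1 (not_le.2 h2)
  have hdl : (C t * D.map f).degree < (h.map f).degree := by
    rw [degree_map, hdeg]
    refine lt_of_le_of_lt ((degree_mul_le _ _).trans (add_le_of_nonpos_left degree_C_le)) ?_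
    rw [degree_map]; exact hD
  have hgm : g.Monic := (hmon.map f).add_of_left hdl
  have hgd : g.natDegree = s.card := by
    apply natDegree_eq_of_degree_eq_some
    rw [hg, degree_add_eq_left_of_degree_lt hdl, degree_map, hdeg]
  have hg0 : g.map ι ≠ 0 := (hgm.map ι).ne_zero
  set T : Finset Ω := s.image (fun r => ι (b r)) with hT
  have hTc : T.card = s.card :=
    Finset.card_image_of_injOn fun r hr r' hr' e => hinj hr hr' (ι.injective e)
  have hsub : T ⊆ (g.map ι).roots.toFinset := by
    intro x hx
    obtain ⟨r, hr, rfl⟩ := Finset.mem_image.1 hx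
    rw [Multiset.mem_toFinset, mem_roots hg0, IsRoot, eval_map_apply, hb r hr, map_zero]
  have hcard : (g.map ι).roots.toFinset.card ≤ T.card := by
    rw [hTc, ← hgd, ← natDegree_map ι (p := g)]
    exact (Multiset.toFinset_card_le _).trans (card_roots' _)
  have hEq := Finset.eq_of_subset_of_card_le hsub hcard
  have hβm : β ∈ T := by
    rw [hEq, Multiset.mem_toFinset, mem_roots hg0]; exact hβ
  obtain ⟨r, hr, rfl⟩ := Finset.mem_image.1 hβm
  exact ⟨b r, rfl⟩


end helpers

open Polynomial

set_option maxHeartbeats 1000000 in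
theorem stmt7 {Ω : Type*} [Field Ω] {n : ℕ} (Fs : Fin n → Subfield Ω)
    (F : Subfield Ω) (hF : F = ⨅ i, Fs i)
    -- each `Fs i` is a separably algebraic extension of `F` (all inside a fixed
    -- separable closure):
    (halg : ∀ x : Ω, ∃ p : Polynomial ↥F, p ≠ 0 ∧ p.Separable ∧
      Polynomial.eval₂ F.subtype x p = 0)
    (hle : ∀ i, F ≤ Fs i)
    -- valuations: each `Fs i` carries a valuation subring `Os i` and is henselian:
    (Os : ∀ i, ValuationSubring ↥(Fs i))
    (hhens : ∀ i, HenselianLocalRing ↥(Os i))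
    -- the induced valuations on `F` are pairwise independent:
    (hindep : ∀ i j, i ≠ j →
      @VSIndependent ↥F _ ((Os i).comap (Subfield.inclusion (hle i)))
        ((Os j).comap (Subfield.inclusion (hle j)))) :
    ∀ i, IsHenselisation (Subfield.inclusion (hle i)) (Os i) := by
  classical
  intro i
  have hintΩ : ∀ x : Ω, F.subtype.IsIntegralElem x := by
    intro x
    obtain ⟨p, hp0, -, hpx⟩ := halg x
    exact (isAlgebraic_iff_isIntegral (K := F) (A := Ω)).1 ⟨p, hp0, hpx⟩
  have hcomp : ∀ j (x : F), (Fs j).subtype (Subfield.inclusion (hle j) x) = F.subtype x :=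
    fun j x => rfl
  have hcompr : ∀ j, (Fs j).subtype.comp (Subfield.inclusion (hle j)) = F.subtype :=
    fun j => rfl
  have hint : ∀ j (x : Fs j), (Subfield.inclusion (hle j)).IsIntegralElem x := by
    intro j x
    obtain ⟨p, hp, hpx⟩ := hintΩ x
    refine ⟨p, hp, (Fs j).subtype.injective ?_⟩
    rw [hom_eval₂, hcompr, map_zero]
    exact hpx
  refine ⟨?_, hhens i, ?_⟩
  · intro x
    obtain ⟨p, hp0, hps, hpx⟩ := halg x
    refine ⟨p, hp0, hps, (Fs i).subtype.injective ?_⟩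
    rw [hom_eval₂, hcompr, map_zero]
    exact hpx
  intro E hFE hE
  rw [eq_top_iff]
  intro α _
  by_cases hex : ∃ j, j ≠ i
  swap
  · push Not at hex
    have hFi : (α : Ω) ∈ F := by
      rw [hF, Subfield.mem_iInf]
      intro j
      rw [hex j]
      exact α.2
    exact hFE ⟨⟨α, hFi⟩, Subtype.ext rfl⟩
  obtain ⟨j₀, hj₀⟩ := hex
  let A : Fin n → ValuationSubring F := fun j => (Os j).comap (Subfield.inclusion (hle j))
  have hAtop : ∀ j, A j ≠ ⊤ := by
    intro j
    by_cases hj : j = i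
    · subst hj
      exact (hindep _ _ hj₀).2.1
    · exact (hindep _ _ hj).1
  choose π hπ0 hπA using fun j => exists_pi (A j) (hAtop j)
  have hπ : ∀ j, (Os j).valuation (Subfield.inclusion (hle j) (π j)) < 1 := by
    intro j
    have h3 := comap_val_lt (Subfield.inclusion (hle j)) (Os j) (π j) 1
    rw [map_one, map_one, map_one] at h3
    exact h3.1 (hπA j)
  have hπ0' : ∀ j, Subfield.inclusion (hle j) (π j) ≠ 0 := fun j => by simpa using hπ0 j
  have hinf : Infinite F := infinite_of_pi (A i) (π i) (hπ0 i) (hπA i)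
  -- density
  have hdense : ∀ x η : Fs i, η ≠ 0 → ∃ y : F,
      (Os i).valuation (Subfield.inclusion (hle i) y - x) ≤ (Os i).valuation η := by
    intro x η hη
    have hxint : IsIntegral F (x : Ω) := hintΩ x
    set f : F[X] := minpoly F (x : Ω) with hf
    have hfm : f.Monic := minpoly.monic hxint
    have hfs : f.Separable := by
      obtain ⟨p, hp0, hps, hpx⟩ := halg x
      exact hps.of_dvd (minpoly.dvd F _ hpx)
    obtain ⟨s, hs⟩ := Infinite.exists_subset_card_eq F f.natDegree
    set h : F[X] := ∏ r ∈ s, (X - C r) with hh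
    have hhm : h.Monic := monic_prod_of_monic _ _ fun r _ => monic_X_sub_C r
    have hhd : h.degree = s.card := by rw [hh, degree_prod]; simp
    have hfd : f.degree = s.card := by rw [hs, degree_eq_natDegree hfm.ne_zero]
    have hDd : (f - h).degree < s.card := by
      rw [← hfd]
      exact degree_sub_lt (by rw [hfd, hhd]) hfm.ne_zero (by rw [hfm, hhm])
    have hfx : (f.map (Subfield.inclusion (hle i))).eval x = 0 := by
      apply (Fs i).subtype.injective
      rw [eval_map, hom_eval₂, hcompr, map_zero]
      exact minpoly.aeval F (x : Ω)
    have hfx' : (f.map (Subfield.inclusion (hle i))).derivative.eval x ≠ 0 :=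
      (hfs.map (f := Subfield.inclusion (hle i))).eval₂_derivative_ne_zero (RingHom.id _) hfx
    have hSi := newton (Os i) _ (hπ0' i) (hπ i) _ ((f - h).map (Subfield.inclusion (hle i)))
      x hfx hfx' η hη
    have hSj := fun j => split_step (Subfield.inclusion (hle j)) (Fs j).subtype (Os j) _
      (hπ0' j) (hπ j) s (f - h) hDd
    obtain ⟨ci, hci0, hci1, hci⟩ := smallV_pullback _ (Os i) (hint i) _ (hπ0 i) (hπ i) hSi
    choose cj hcj0 hcj1 hcj using fun j =>
      smallV_pullback _ (Os j) (hint j) _ (hπ0 j) (hπ j) (hSj j)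
    obtain ⟨e, hei, hej⟩ := approx_idem A i (Finset.univ.erase i) (by simp)
      (fun j hj => (hindep i j (Finset.ne_of_mem_erase hj).symm).2.2)
      (fun j => if j = i then ci else cj j)
      (fun j => by split_ifs; exacts [hci0, hcj0 j])
      (by simpa using hci1)
      (fun j hj => by
        simp only [Finset.ne_of_mem_erase hj, if_false]; exact hcj1 j)
    rw [if_pos rfl] at hei
    obtain ⟨β, hβ, hβx⟩ := hci _ hei
    have hβF : (β : Ω) ∈ F := by
      rw [hF, Subfield.mem_iInf]
      intro j
      by_cases hj : j = i
      · rw [hj]; exact β.2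
      have h1 := hej j (by simp [hj])
      rw [if_neg hj] at h1
      have h2 := hcj j e h1 (β : Ω) ?_
      · obtain ⟨y, hy⟩ := h2
        rw [← hy]; exact y.2
      · have e1 : ((h.map (Subfield.inclusion (hle j)) + C (Subfield.inclusion (hle j) e) *
            (f - h).map (Subfield.inclusion (hle j))).map (Fs j).subtype) =
            ((f.map (Subfield.inclusion (hle i)) + C (Subfield.inclusion (hle i) (e - 1)) *
            (f - h).map (Subfield.inclusion (hle i))).map (Fs i).subtype) := by
          have e2 : h + C e * (f - h) = f + C (e - 1) * (f - h) := by
            rw [C_sub, C_1]; ring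
          have e3 := congrArg (Polynomial.map F.subtype) e2
          rw [Polynomial.map_add, Polynomial.map_mul, map_C, Polynomial.map_add,
            Polynomial.map_mul, map_C] at e3
          rw [Polynomial.map_add, Polynomial.map_mul, map_C, Polynomial.map_add,
            Polynomial.map_mul, map_C, Polynomial.map_map, Polynomial.map_map,
            Polynomial.map_map, Polynomial.map_map]
          exact e3
        rw [e1]
        have h3 := eval_map_apply (f := (Fs i).subtype) (p := (f.map (Subfield.inclusion (hle i)) +
            C (Subfield.inclusion (hle i) (e - 1)) *
            (f - h).map (Subfield.inclusion (hle i)))) β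
        rw [hβ, map_zero] at h3
        exact h3
    exact ⟨⟨β, hβF⟩, hβx.le⟩
  -- conclusion
  have hdenseE : ∀ x η : Fs i, η ≠ 0 → ∃ y : E,
      (Os i).valuation (E.subtype y - x) ≤ (Os i).valuation η := by
    intro x η hη
    obtain ⟨y, hy⟩ := hdense x η hη
    exact ⟨⟨Subfield.inclusion (hle i) y, hFE ⟨y, rfl⟩⟩, hy⟩
  let g : F →+* E := (Subfield.inclusion (hle i)).codRestrict E fun y => hFE ⟨y, rfl⟩
  have hαint : IsIntegral E α := by
    obtain ⟨p, hp, hpx⟩ := hint i α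
    exact ⟨p.map g, hp.map g, by rw [eval₂_map]; exact hpx⟩
  have hsep : (minpoly E α).Separable := by
    obtain ⟨p, hp0, hps, hpx⟩ := halg α
    refine (hps.map (f := g)).of_dvd (minpoly.dvd E _ ?_)
    rw [aeval_def, eval₂_map]
    apply (Fs i).subtype.injective
    rw [hom_eval₂, map_zero]
    exact hpx
  have hr : ((minpoly E α).map E.subtype).eval α = 0 := by
    rw [eval_map]
    exact minpoly.aeval E α
  obtain ⟨b, hb⟩ := dense_root E.subtype (Os i) hE _ (hπ0' i) (hπ i) hdenseE (minpoly E α) α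
    hr ((hsep.map (f := E.subtype)).eval₂_derivative_ne_zero (RingHom.id _) hr)
  have hdeg := degree_eq_one_of_irreducible_of_root (minpoly.irreducible hαint) hb
  obtain ⟨y, hy⟩ := minpoly.mem_range_of_degree_eq_one E α hdeg
  rw [← hy]
  exact y.2
end

section
/- Let (F', v') / (F, v) be an immediate extension of valued fields, with (F', v') henselian and absolutely defectless, and with F relatively algebraically closed in F'. Then (F, v) is henselian and absolutely defectless, and the restriction map res : G_{F'} → G_F between absolute Galois groups is an isomorphism. -/
namespace Stmt8Aux
open Polynomial

section Hens

variable {R K N Γ : Type*} [CommRing R] [IsDomain R] [HenselianLocalRing R] [IsIntegrallyClosed R]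
  [Field K] [Algebra R K] [IsFractionRing R K] [Field N] [Algebra K N] [Algebra R N]
  [IsScalarTower R K N] [LinearOrderedCommGroupWithZero Γ]

theorem int_le_one {R N Γ : Type*} [CommRing R] [Field N] [Algebra R N]
    [LinearOrderedCommGroupWithZero Γ] (v : Valuation N Γ)
    (hV : ∀ r : R, v (algebraMap R N r) ≤ 1) {x : N} (hx : IsIntegral R x) : v x ≤ 1 := by
  obtain ⟨f, hf, h0⟩ := hx
  let φ : R →+* v.integer := (algebraMap R N).codRestrict v.integer hV
  have : IsIntegral v.integer x := by
    refine ⟨f.map φ, hf.map _, ?_⟩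
    rw [eval₂_map]
    exact h0
  exact (Valuation.integer.integers v).mem_of_integral this

theorem eval_sub_lt {R N Γ : Type*} [CommRing R] [Field N] [Algebra R N]
    [LinearOrderedCommGroupWithZero Γ] (v : Valuation N Γ)
    (hV : ∀ r : R, v (algebraMap R N r) ≤ 1) (g : R[X]) {a b : N} (ha : v a ≤ 1) (hb : v b ≤ 1)
    (hab : v (a - b) < 1) : v (aeval a g - aeval b g) < 1 := by
  let φ : R →+* v.integer := (algebraMap R N).codRestrict v.integer hV
  have h := sub_dvd_eval_sub (⟨a, ha⟩ : v.integer) ⟨b, hb⟩ (g.map φ)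
  obtain ⟨c, hc⟩ := h
  have h2 := congrArg (algebraMap v.integer N) hc
  have key : ∀ y : v.integer, algebraMap v.integer N (eval y (g.map φ)) = aeval (y : N) g := by
    intro y
    rw [eval_map, hom_eval₂, aeval_def]
    rfl
  rw [map_sub, key, key, map_mul] at h2
  have h3 : aeval a g - aeval b g = (a - b) * (c : N) := h2
  rw [h3, map_mul]
  exact mul_lt_one_of_lt_of_le hab c.2

theorem sub_one_mul {N Γ : Type*} [Field N] [LinearOrderedCommGroupWithZero Γ] (v : Valuation N Γ)
    (x y : N) (hx : v (x - 1) < 1) (hy : v (y - 1) < 1) : v (x * y - 1) < 1 := by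
  have : x * y - 1 = (x - 1) * (y - 1) + (x - 1) + (y - 1) := by ring
  rw [this]
  refine v.map_add_lt (v.map_add_lt ?_ hx) hy
  rw [map_mul]
  exact mul_lt_one_of_lt_of_le hx hy.le

theorem exists_inv_mod {R N Γ : Type*} [CommRing R] [IsLocalRing R] [Field N] [Algebra R N]
    [LinearOrderedCommGroupWithZero Γ] (v : Valuation N Γ)
    (hV : ∀ r : R, v (algebraMap R N r) ≤ 1)
    (hm : ∀ r ∈ IsLocalRing.maximalIdeal R, v (algebraMap R N r) < 1)
    (b : N) (hb : IsIntegral R b) (h1 : v b = 1) :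
    ∃ c, IsIntegral R c ∧ v (b * c - 1) < 1 := by
  let B := integralClosure R N
  let P : Ideal B :=
    { carrier := {x | v (x : N) < 1}
      add_mem' := fun {x y} hx hy => v.map_add_lt hx hy
      zero_mem' := by simp
      smul_mem' := fun c x hx => by
        show v ((c : N) * (x : N)) < 1
        rw [map_mul, mul_comm]
        exact mul_lt_one_of_lt_of_le hx (int_le_one v hV c.2) }
  have hP : ∀ x : B, x ∈ P ↔ v (x : N) < 1 := fun x => Iff.rfl
  have hprime : P.IsPrime := by
    refine ⟨fun h => ?_, fun {x y} hxy => ?_⟩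
    · have := (hP 1).1 (h ▸ Submodule.mem_top)
      simp at this
    · by_contra hh
      push Not at hh
      rw [hP, hP, not_lt, not_lt] at hh
      have := (hP _).1 hxy
      have h2 : v ((x * y : B) : N) = v (x : N) * v (y : N) := map_mul v _ _
      rw [h2] at this
      exact absurd this (not_lt.2 (one_le_mul hh.1 hh.2))
  have hcomap : P.comap (algebraMap R B) = IsLocalRing.maximalIdeal R := by
    refine le_antisymm (IsLocalRing.le_maximalIdeal (Ideal.IsPrime.ne_top (Ideal.comap_isPrime _ _))) ?_
    intro r hr
    exact hm r hr
  have hmax : P.IsMaximal := by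
    apply Ideal.isMaximal_of_isIntegral_of_isMaximal_comap (R := R)
    rw [hcomap]; infer_instance
  have hbP : (⟨b, hb⟩ : B) ∉ P := by
    rw [hP]; simp [h1]
  obtain ⟨c, i, hi, hc⟩ := hmax.exists_inv hbP
  refine ⟨c, c.2, ?_⟩
  have h2 : (c : N) * b + (i : N) = 1 := congrArg (Subtype.val) hc
  have : b * c - 1 = -(i : N) := by rw [← h2]; ring
  rw [this, Valuation.map_neg]
  exact hi

/-- Galois conjugation preserves the ideal of the valuation in the integral closure. -/
theorem conj_lt_one [FiniteDimensional K N] [IsGalois K N] (v : Valuation N Γ)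
    (hV : ∀ r : R, v (algebraMap R N r) ≤ 1)
    (hm : ∀ r ∈ IsLocalRing.maximalIdeal R, v (algebraMap R N r) < 1)
    (τ : N ≃ₐ[K] N) (b : N) (hb : IsIntegral R b) : v b < 1 ↔ v (τ b) < 1 := by
  classical
  have hInteg : ∀ (τ : N ≃ₐ[K] N) (b : N), IsIntegral R b → IsIntegral R (τ b) := by
    intro τ b hb
    exact hb.map (τ.restrictScalars R)
  let D : Subgroup (N ≃ₐ[K] N) :=
    { carrier := {τ | ∀ b, IsIntegral R b → (v b < 1 ↔ v (τ b) < 1)}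
      mul_mem' := fun {s t} hs ht b hb => (ht b hb).trans (hs _ (hInteg t b hb))
      one_mem' := fun b hb => Iff.rfl
      inv_mem' := fun {s} hs b hb => by
        have := hs (s⁻¹ b) (hInteg _ b hb)
        rw [this]
        rw [← AlgEquiv.mul_apply, mul_inv_cancel, AlgEquiv.one_apply] }
  have hD : ∀ s, s ∈ D ↔ ∀ b, IsIntegral R b → (v b < 1 ↔ v (s b) < 1) := fun s => Iff.rfl
  suffices h : τ ∈ D from (hD τ).1 h b hb
  by_contra hτ
  have step : ∀ s : N ≃ₐ[K] N, s ∉ D → ∃ β, IsIntegral R β ∧ v (β - 1) < 1 ∧ v (s β) < 1 := by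
    intro s hs
    rw [hD] at hs
    push Not at hs
    obtain ⟨b, hb, h | h⟩ := hs
    · obtain ⟨c, hc, hc1⟩ := exists_inv_mod v hV hm (s b) (hInteg s b hb)
        (le_antisymm (int_le_one v hV (hInteg s b hb)) h.2)
      have hc2 := hInteg s⁻¹ c hc
      have hsc : s (s⁻¹ c) = c := by
        rw [← AlgEquiv.mul_apply, mul_inv_cancel, AlgEquiv.one_apply]
      refine ⟨1 - b * s⁻¹ c, isIntegral_one.sub (hb.mul hc2), ?_, ?_⟩
      · have : 1 - b * s⁻¹ c - 1 = - (b * s⁻¹ c) := by ring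
        rw [this, Valuation.map_neg, map_mul]
        exact mul_lt_one_of_lt_of_le h.1 (int_le_one v hV hc2)
      · rw [map_sub, map_one, map_mul, hsc, Valuation.map_sub_swap]
        exact hc1
    · obtain ⟨c, hc, hc1⟩ := exists_inv_mod v hV hm b hb
        (le_antisymm (int_le_one v hV hb) h.1)
      refine ⟨b * c, hb.mul hc, hc1, ?_⟩
      rw [map_mul, map_mul]
      exact mul_lt_one_of_lt_of_le h.2 (int_le_one v hV (hInteg s c hc))
  choose! β hβint hβ1 hβ2 using step
  let β0 : N := ∏ s ∈ Finset.univ.filter (fun s => s ∉ D), β s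
  have hbetaInt : IsIntegral R β0 :=
    IsIntegral.prod _ (fun s hs => hβint s (Finset.mem_filter.1 hs).2)
  have hβ01 : v (β0 - 1) < 1 := by
    refine Finset.prod_induction (fun s => β s) (fun x => v (x - 1) < 1) (sub_one_mul v) (by simp) ?_
    intro s hs
    exact hβ1 s (Finset.mem_filter.1 hs).2
  have hβ02 : ∀ s, s ∉ D → v (s β0) < 1 := by
    intro s hs
    have : β0 = β s * ∏ t ∈ (Finset.univ.filter (fun s => s ∉ D)).erase s, β t := by
      rw [Finset.mul_prod_erase]; simpa using hs
    rw [this, map_mul, map_mul]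
    refine mul_lt_one_of_lt_of_le (hβ2 s hs) (int_le_one v hV (hInteg s _ ?_))
    exact IsIntegral.prod _ (fun t ht => hβint t (Finset.mem_filter.1 (Finset.mem_of_mem_erase ht)).2)
  let γ : N := ∏ d : D, (d : N ≃ₐ[K] N) β0
  have hγint : IsIntegral R γ := IsIntegral.prod _ (fun d _ => hInteg _ _ hbetaInt)
  have hγ1 : v (γ - 1) < 1 := by
    refine Finset.prod_induction (fun d : D => (d : N ≃ₐ[K] N) β0) (fun x => v (x - 1) < 1)
      (sub_one_mul v) (by simp) ?_
    intro d _
    have h := ((hD d).1 d.2 (β0 - 1) (hbetaInt.sub isIntegral_one)).1 hβ01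
    simpa using h
  have hγ2 : ∀ s, s ∉ D → v (s γ) < 1 := by
    intro s hs
    show v (s (∏ d : D, (d : N ≃ₐ[K] N) β0)) < 1
    rw [map_prod, ← Finset.mul_prod_erase _ _ (Finset.mem_univ (1 : D)), map_mul]
    refine mul_lt_one_of_lt_of_le ?_ (int_le_one v hV ?_)
    · simpa using hβ02 s hs
    · exact IsIntegral.prod _ (fun d _ => hInteg _ _ (hInteg _ _ hbetaInt))
  have hγ3 : ∀ s, s ∈ D → s γ = γ := by
    intro s hs
    show s (∏ d : D, (d : N ≃ₐ[K] N) β0) = _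
    rw [map_prod]
    exact Fintype.prod_equiv (Equiv.mulLeft (⟨s, hs⟩ : D)) _ _ (fun d => rfl)
  have hγle : v γ ≤ 1 := int_le_one v hV hγint
  -- the minimal polynomial
  let f := minpoly R γ
  have hf : f.Monic := minpoly.monic hγint
  have hfK : minpoly K γ = f.map (algebraMap R K) :=
    minpoly.isIntegrallyClosed_eq_field_fractions' K hγint
  have hγK : IsIntegral K γ := Algebra.IsIntegral.isIntegral γ
  have hu : ∀ r : R, v (algebraMap R N r - 1) < 1 → IsUnit r := by
    intro r hr
    by_contra hr2
    have h1 := hm r ((IsLocalRing.mem_maximalIdeal r).2 hr2)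
    have h2 := v.map_sub_lt h1 hr
    simp at h2
  have e1 : v (algebraMap R N (f.eval 1)) < 1 := by
    have h := eval_sub_lt v hV f (a := 1) (b := γ) (by simp) hγle (by rwa [Valuation.map_sub_swap])
    rw [minpoly.aeval, sub_zero] at h
    have h3 : aeval (1 : N) f = algebraMap R N (f.eval 1) := by
      rw [← map_one (algebraMap R N), aeval_algebraMap_apply]; simp
    rwa [h3] at h
  have e2 : v (algebraMap R N (f.derivative.eval 1) - 1) < 1 := by
    have h := eval_sub_lt v hV f.derivative (a := 1) (b := γ) (by simp) hγle
      (by rwa [Valuation.map_sub_swap])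
    have h3 : aeval (1 : N) f.derivative = algebraMap R N (f.derivative.eval 1) := by
      rw [← map_one (algebraMap R N), aeval_algebraMap_apply]; simp
    rw [h3] at h
    have h4 : v (aeval γ f.derivative - 1) < 1 := by
      have hsp : ((minpoly K γ).map (algebraMap K N)).Splits := Normal.splits inferInstance γ
      have hroot : γ ∈ ((minpoly K γ).map (algebraMap K N)).roots := by
        rw [mem_roots ((minpoly.monic hγK).map _).ne_zero, IsRoot, eval_map_algebraMap, minpoly.aeval]
      have h5 := hsp.eval_root_derivative ((minpoly.monic hγK).map _) hroot
      have h6 : aeval γ f.derivative = eval γ ((minpoly K γ).map (algebraMap K N)).derivative := by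
        rw [hfK, Polynomial.map_map, ← IsScalarTower.algebraMap_eq, derivative_map,
          eval_map_algebraMap]
      rw [h6, h5]
      have hnd : ((minpoly K γ).map (algebraMap K N)).roots.Nodup :=
        nodup_roots (Polynomial.Separable.map
          (show (minpoly K γ).Separable from Algebra.IsSeparable.isSeparable K γ))
      refine Multiset.prod_induction (fun x => v (x - 1) < 1) _ (sub_one_mul v) (by simp) ?_
      intro z hz
      obtain ⟨y, hy, rfl⟩ := Multiset.mem_map.1 hz
      have hyγ : y ≠ γ := by
        rintro rfl
        exact hnd.notMem_erase hy
      have hyr := Multiset.mem_of_mem_erase hy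
      rw [mem_roots ((minpoly.monic hγK).map _).ne_zero, IsRoot, eval_map_algebraMap] at hyr
      obtain ⟨s, hs⟩ := (isConjRoot_iff_exists_algEquiv).1
        ((isConjRoot_iff_aeval_eq_zero hγK).2 hyr).symm
      have hsD : s ∉ D := fun h => hyγ (by rw [← hs, hγ3 s h])
      have h7 := hγ2 s hsD
      rw [hs] at h7
      have : γ - y - 1 = (γ - 1) - y := by ring
      rw [this]
      exact v.map_sub_lt hγ1 h7
    have : algebraMap R N (f.derivative.eval 1) - 1 =
      (algebraMap R N (f.derivative.eval 1) - aeval γ f.derivative) +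
        (aeval γ f.derivative - 1) := by ring
    rw [this]
    exact v.map_add_lt h h4
  have e1' : f.eval 1 ∈ IsLocalRing.maximalIdeal R := by
    rw [IsLocalRing.mem_maximalIdeal]
    intro hun
    obtain ⟨w, hw⟩ := hun.exists_right_inv
    have h1 : v (algebraMap R N (f.eval 1)) * v (algebraMap R N w) = 1 := by
      rw [← map_mul, ← map_mul, hw]; simp
    exact absurd h1 (mul_lt_one_of_lt_of_le e1 (hV w)).ne
  obtain ⟨a, ha, -⟩ := HenselianLocalRing.is_henselian f hf 1 e1' (hu _ e2)
  have hdeg : (minpoly K γ).degree = 1 := by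
    refine degree_eq_one_of_irreducible_of_root (minpoly.irreducible hγK)
      (x := algebraMap R K a) ?_
    rw [hfK, IsRoot, eval_map_algebraMap, aeval_algebraMap_apply]
    have : aeval a f = 0 := by simpa using ha
    rw [this, map_zero]
  obtain ⟨k, hk⟩ := minpoly.degree_eq_one_iff.1 hdeg
  have h8 := hγ2 τ hτ
  rw [← hk, AlgEquiv.commutes, hk] at h8
  have h9 := v.map_sub_lt h8 hγ1
  simp at h9

end Hens
end Stmt8Aux

namespace Stmt8Aux
open Polynomial

section Val

variable {K N : Type*} [Field K] [Field N] [Algebra K N]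

theorem val_lt_map {K L : Type*} [Field K] [Field L] (A : ValuationSubring K)
    (B : ValuationSubring L) (f : K →+* L) (h : ∀ x, x ∈ A ↔ f x ∈ B) (a b : K) :
    A.valuation a < A.valuation b ↔ B.valuation (f a) < B.valuation (f b) := by
  have hle : ∀ a b : K, A.valuation a ≤ A.valuation b ↔ B.valuation (f a) ≤ B.valuation (f b) := by
    intro a b
    by_cases hb : b = 0
    · subst hb; simp
    · have h1 : 0 < A.valuation b := by simpa [zero_lt_iff] using hb
      have h2 : 0 < B.valuation (f b) := by simpa [zero_lt_iff] using hb
      rw [← div_le_one₀ h1, ← div_le_one₀ h2, ← map_div₀, ← map_div₀, ← map_div₀,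
        ValuationSubring.valuation_le_one_iff, ValuationSubring.valuation_le_one_iff, h]
  rw [← not_le, ← not_le, hle]

theorem val_torsion {Γ : Type*} [LinearOrderedCommGroupWithZero Γ] (v : Valuation N Γ) (x : N)
    (hx0 : x ≠ 0) (hx : IsAlgebraic K x) :
    ∃ n : ℕ, 0 < n ∧ ∃ a : K, a ≠ 0 ∧ v x ^ n = v (algebraMap K N a) := by
  classical
  obtain ⟨p, hp, h0⟩ := hx
  have hne : p.support.Nonempty := by simpa using hp
  obtain ⟨j, hj, hmax⟩ := p.support.exists_max_image
    (fun i => v (algebraMap K N (p.coeff i) * x ^ i)) hne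
  have hsum : aeval x p = ∑ i ∈ p.support, algebraMap K N (p.coeff i) * x ^ i := by
    rw [aeval_def, eval₂_eq_sum, Polynomial.sum]
  have hvx : v x ≠ 0 := by simpa using hx0
  have key : ∀ i j : ℕ, i < j → p.coeff i ≠ 0 → p.coeff j ≠ 0 →
      v (algebraMap K N (p.coeff i) * x ^ i) = v (algebraMap K N (p.coeff j) * x ^ j) →
      ∃ n : ℕ, 0 < n ∧ ∃ a : K, a ≠ 0 ∧ v x ^ n = v (algebraMap K N a) := by
    intro i j hij hi hj h
    refine ⟨j - i, by omega, p.coeff i / p.coeff j, div_ne_zero hi hj, ?_⟩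
    have hvj : v (algebraMap K N (p.coeff j)) ≠ 0 := by simpa using hj
    rw [map_div₀, map_div₀, eq_div_iff hvj]
    have h2 : v x ^ j = v x ^ (j - i) * v x ^ i := by rw [← pow_add]; congr 1; omega
    rw [map_mul, map_mul, map_pow, map_pow, h2] at h
    apply mul_right_cancel₀ (pow_ne_zero i hvx)
    rw [h]; ac_rfl
  by_contra hcon
  have hlt : ∀ i ∈ p.support \ {j}, v (algebraMap K N (p.coeff i) * x ^ i) <
      v (algebraMap K N (p.coeff j) * x ^ j) := by
    intro i hi
    rw [Finset.mem_sdiff, Finset.mem_singleton] at hi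
    refine lt_of_le_of_ne (hmax i hi.1) fun he => hcon ?_
    rcases lt_or_gt_of_ne hi.2 with h | h
    · exact key i j h (mem_support_iff.1 hi.1) (mem_support_iff.1 hj) he
    · exact key j i h (mem_support_iff.1 hj) (mem_support_iff.1 hi.1) he.symm
  have := v.map_sum_eq_of_lt hj hlt
  rw [← hsum, h0, map_zero] at this
  have h3 : algebraMap K N (p.coeff j) * x ^ j ≠ 0 :=
    mul_ne_zero (by simpa using hj) (pow_ne_zero _ hx0)
  exact h3 (by simpa using this.symm)

theorem exists_prim (O : ValuationSubring K) (x : N) (hx : IsAlgebraic K x) :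
    ∃ (g : O[X]) (k : ℕ), aeval x g = 0 ∧ g.coeff k = 1 ∧
      ∀ i, k < i → O.valuation (g.coeff i : K) < 1 := by
  classical
  obtain ⟨p, hp, h0⟩ := hx
  have hne : p.support.Nonempty := by simpa using hp
  obtain ⟨k, hk, hmax⟩ := p.support.exists_max_image
    (fun i => toLex (O.valuation (p.coeff i), i)) hne
  have hk0 : p.coeff k ≠ 0 := mem_support_iff.1 hk
  have hvk : 0 < O.valuation (p.coeff k) := by simpa [zero_lt_iff] using hk0
  have hle : ∀ i, O.valuation (p.coeff i) ≤ O.valuation (p.coeff k) := by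
    intro i
    by_cases hi : p.coeff i = 0
    · simp [hi]
    · have := hmax i (mem_support_iff.2 hi)
      rw [Prod.Lex.toLex_le_toLex] at this
      rcases this with h | h
      · exact h.le
      · exact h.1.le
  have hlt : ∀ i, k < i → O.valuation (p.coeff i) < O.valuation (p.coeff k) := by
    intro i hki
    by_cases hi : p.coeff i = 0
    · simpa [hi] using hvk
    · have := hmax i (mem_support_iff.2 hi)
      rw [Prod.Lex.toLex_le_toLex] at this
      rcases this with h | h
      · exact h
      · exact absurd h.2 (not_le.2 hki)
  have hl : C (p.coeff k)⁻¹ * p ∈ lifts (algebraMap O K) := by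
    rw [lifts_iff_coeff_lifts]
    intro i
    refine ⟨⟨(p.coeff k)⁻¹ * p.coeff i, ?_⟩, by simp⟩
    rw [← ValuationSubring.valuation_le_one_iff, map_mul, map_inv₀, mul_comm, ← div_eq_mul_inv]
    exact (div_le_one₀ hvk).2 (hle i)
  obtain ⟨g, hg⟩ := (mem_lifts _).1 hl
  have hc : ∀ i, (g.coeff i : K) = (p.coeff k)⁻¹ * p.coeff i := by
    intro i
    have := congrArg (fun q => q.coeff i) hg
    simpa using this
  refine ⟨g, k, ?_, ?_, ?_⟩
  · rw [← aeval_map_algebraMap K, hg, map_mul, h0, mul_zero]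
  · apply Subtype.ext
    rw [hc, inv_mul_cancel₀ hk0]; rfl
  · intro i hi
    rw [hc, map_mul, map_inv₀, mul_comm, ← div_eq_mul_inv]
    exact (div_lt_one₀ hvk).2 (hlt i hi)

theorem isIntegral_of_forall (O : ValuationSubring K) (x : N)
    (h : ∀ U : ValuationSubring N, (∀ a : O, algebraMap O N a ∈ U) → x ∈ U) : IsIntegral O x := by
  have h1 : x ∈ (⨅ V : {V : ValuationSubring N // ((algebraMap O N).range : Set N) ⊆ V.toSubring},
      V.1.toSubring) := by
    rw [Subring.mem_iInf]
    rintro ⟨U, hU⟩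
    exact h U (fun a => hU ⟨a, rfl⟩)
  rw [iInf_valuationSubring_superset] at h1
  have h2 : IsIntegral (Subring.closure ((algebraMap O N).range : Set N)) x := h1
  rw [Subring.closure_eq] at h2
  obtain ⟨p, hp, hp0⟩ := h2
  have hsurj : Function.Surjective (algebraMap O N).rangeRestrict :=
    (algebraMap O N).rangeRestrict_surjective
  have hl : p ∈ lifts (algebraMap O N).rangeRestrict := by
    rw [lifts_iff_coeff_lifts]
    intro i
    exact hsurj _
  obtain ⟨q, hq, -, hqm⟩ := lifts_and_degree_eq_and_monic hl hp
  refine ⟨q, hqm, ?_⟩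
  rw [← hq, eval₂_map] at hp0
  exact hp0

theorem frac_rep (O : ValuationSubring K) (V : ValuationSubring N)
    (hVO : V.comap (algebraMap K N) = O) (x : N) (hx : IsAlgebraic K x) (hxV : x ∈ V) :
    ∃ s t : N, IsIntegral O s ∧ IsIntegral O t ∧ V.valuation s = 1 ∧ s * x = t := by
  by_cases hx0 : x = 0
  · exact ⟨1, 0, isIntegral_one, isIntegral_zero, by simp, by simp [hx0]⟩
  obtain ⟨g, k, hg0, hk, hlt⟩ := exists_prim O x hx
  have hOV : ∀ a : K, a ∈ O ↔ algebraMap K N a ∈ V := by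
    intro a; rw [← hVO, ValuationSubring.mem_comap]
  have hkn : k ≤ g.natDegree := le_natDegree_of_ne_zero (by rw [hk]; exact one_ne_zero)
  obtain ⟨m, hm⟩ := Nat.exists_eq_add_of_le hkn
  let a : ℕ → N := fun i => algebraMap O N (g.coeff i)
  have hsum : ∑ i ∈ Finset.range k, a i * x ^ i +
      x ^ k * ∑ j ∈ Finset.range (m + 1), a (k + j) * x ^ j = 0 := by
    rw [← hg0, aeval_eq_sum_range, hm, add_assoc, Finset.sum_range_add _ k (m + 1), Finset.mul_sum]
    congr 1
    · exact Finset.sum_congr rfl fun i _ => (Algebra.smul_def _ _).symm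
    · refine Finset.sum_congr rfl fun i _ => ?_
      rw [Algebra.smul_def, pow_add]
      show _ = a (k + i) * _
      ring
  set s : N := ∑ j ∈ Finset.range (m + 1), a (k + j) * x ^ j with hs
  have hsx : s * x = - ∑ i ∈ Finset.range k, a i * x⁻¹ ^ (k - 1 - i) := by
    have h1 : x ^ k * (s * x) = x ^ k * (- ∑ i ∈ Finset.range k, a i * x⁻¹ ^ (k - 1 - i)) := by
      have h2 : x ^ k * s = - ∑ i ∈ Finset.range k, a i * x ^ i :=
        eq_neg_of_add_eq_zero_right hsum
      rw [← mul_assoc, h2, neg_mul, mul_neg, Finset.sum_mul, Finset.mul_sum]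
      congr 1
      refine Finset.sum_congr rfl fun i hi => ?_
      have hik := Finset.mem_range.1 hi
      have h3 : x ^ k = x ^ i * x * x ^ (k - 1 - i) := by
        rw [← pow_succ, ← pow_add]; congr 1; omega
      rw [h3, inv_pow]
      field_simp
    exact mul_left_cancel₀ (pow_ne_zero k hx0) h1
  have hboth : ∀ U : ValuationSubring N, (∀ b : O, algebraMap O N b ∈ U) → s ∈ U ∧ s * x ∈ U := by
    intro U hU
    rcases U.mem_or_inv_mem x with h | h
    · have : s ∈ U := sum_mem fun j _ => mul_mem (hU _) (pow_mem h _)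
      exact ⟨this, mul_mem this h⟩
    · have : s * x ∈ U := by
        rw [hsx]
        exact neg_mem (sum_mem fun j _ => mul_mem (hU _) (pow_mem h _))
      refine ⟨?_, this⟩
      have h2 := mul_mem this h
      rwa [mul_assoc, mul_inv_cancel₀ hx0, mul_one] at h2
  refine ⟨s, s * x, isIntegral_of_forall O s fun U hU => (hboth U hU).1,
    isIntegral_of_forall O _ fun U hU => (hboth U hU).2, ?_, rfl⟩
  have hs1 : V.valuation (∑ j ∈ Finset.range m, a (k + (j + 1)) * x ^ (j + 1)) < 1 := by
    refine Valuation.map_sum_lt' _ zero_lt_one fun j _ => ?_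
    rw [map_mul]
    refine mul_lt_one_of_lt_of_le ?_ ((V.valuation_le_one_iff _).2 (pow_mem hxV _))
    have := (val_lt_map O V (algebraMap K N) hOV (g.coeff (k + (j + 1)) : K) 1).1
      (by simpa using hlt _ (by omega))
    rw [map_one, map_one] at this
    exact this
  have hs2 : s = ∑ j ∈ Finset.range m, a (k + (j + 1)) * x ^ (j + 1) + 1 := by
    rw [hs, Finset.sum_range_succ']
    congr 1
    simp [a, hk]
  rw [hs2, add_comm]
  exact Valuation.map_one_add_of_lt _ hs1

/-- A valuation on a Galois extension of a henselian field is preserved by the Galois group. -/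
theorem hens_preserve [IsGalois K N] (O : ValuationSubring K) (hO : HenselianLocalRing O)
    (V : ValuationSubring N)
    (hVO : V.comap (algebraMap K N) = O) (σ : N ≃ₐ[K] N) (x : N) (hxV : x ∈ V) : σ x ∈ V := by
  have hOV : ∀ a : K, a ∈ O ↔ algebraMap K N a ∈ V := by
    intro a; rw [← hVO, ValuationSubring.mem_comap]
  have hV : ∀ r : O, V.valuation (algebraMap O N r) ≤ 1 := fun r =>
    (V.valuation_le_one_iff _).2 ((hOV r).1 r.2)
  have hm : ∀ r ∈ IsLocalRing.maximalIdeal O, V.valuation (algebraMap O N r) < 1 := by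
    intro r hr
    have h1 := (O.valuation_lt_one_iff r).1 hr
    have := (val_lt_map O V (algebraMap K N) hOV (r : K) 1).1 (by simpa using h1)
    rw [map_one, map_one] at this
    exact this
  have hInteg : ∀ b : N, IsIntegral O b → IsIntegral O (σ b) := fun b hb =>
    hb.map (σ.restrictScalars O)
  have hconj : ∀ b : N, IsIntegral O b → (V.valuation b < 1 ↔ V.valuation (σ b) < 1) := by
    intro b hb
    let E := (FiniteGaloisIntermediateField.adjoin K {b}).toIntermediateField
    have hbE : b ∈ E := FiniteGaloisIntermediateField.subset_adjoin K {b} rfl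
    have : FiniteDimensional K E := (FiniteGaloisIntermediateField.adjoin K {b}).finiteDimensional
    have : IsGalois K E := (FiniteGaloisIntermediateField.adjoin K {b}).isGalois
    have h := conj_lt_one (R := O) (K := K) (N := E) (V.valuation.comap (algebraMap E N))
      (fun r => hV r) (fun r hr => hm r hr) (σ.restrictNormal E) ⟨b, hbE⟩ ?_
    · rw [Valuation.comap_apply, Valuation.comap_apply, AlgEquiv.restrictNormal_commutes] at h
      exact h
    · exact (isIntegral_algHom_iff (IsScalarTower.toAlgHom O E N)
        (algebraMap E N).injective).1 hb
  obtain ⟨s, t, hs, ht, hs1, hst⟩ := frac_rep O V hVO x (Algebra.IsAlgebraic.isAlgebraic x) hxV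
  have h1 : V.valuation (σ s) = 1 := by
    refine le_antisymm (int_le_one _ hV (hInteg s hs)) ?_
    rw [← not_lt, ← hconj s hs, hs1]
    exact lt_irrefl _
  have h2 := int_le_one _ hV (hInteg t ht)
  rw [← hst, map_mul, map_mul, h1, one_mul] at h2
  exact (V.valuation_le_one_iff _).1 h2

end Val
end Stmt8Aux

namespace Stmt8Aux
open Polynomial

section Approx

theorem val_eq_map {K L : Type*} [Field K] [Field L] (A : ValuationSubring K)
    (B : ValuationSubring L) (f : K →+* L) (h : ∀ x, x ∈ A ↔ f x ∈ B) (a b : K)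
    (hab : A.valuation a = A.valuation b) : B.valuation (f a) = B.valuation (f b) := by
  rcases lt_trichotomy (B.valuation (f a)) (B.valuation (f b)) with h1 | h1 | h1
  · exact absurd hab ((val_lt_map A B f h a b).2 h1).ne
  · exact h1
  · exact absurd hab ((val_lt_map A B f h b a).2 h1).ne'

theorem residue_zero_iff {L : Type*} [Field L] (W : ValuationSubring L) (w : W) :
    IsLocalRing.residue W w = 0 ↔ W.valuation (w : L) < 1 := by
  rw [IsLocalRing.residue_eq_zero_iff, ValuationSubring.valuation_lt_one_iff]

theorem root_one {L : Type*} [Field L] (W : ValuationSubring L) (q n : ℕ)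
    [ExpChar (IsLocalRing.ResidueField W) q] (ρ : L) (h : W.valuation (ρ ^ (q ^ n) - 1) < 1) :
    W.valuation (ρ - 1) < 1 := by
  have hq : q ^ n ≠ 0 := pow_ne_zero _ (expChar_ne_zero (IsLocalRing.ResidueField W) q)
  have hW : ρ ∈ W := by
    rw [← W.valuation_le_one_iff]
    by_contra hh
    rw [not_le] at hh
    have h2 : 1 < W.valuation (ρ ^ (q ^ n)) := by
      rw [map_pow]; exact one_lt_pow₀ hh hq
    have h3 : W.valuation (ρ ^ (q ^ n)) ≤ 1 := by
      have : ρ ^ (q ^ n) = (ρ ^ (q ^ n) - 1) + 1 := by ring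
      rw [this]
      exact Valuation.map_add_le _ h.le (by simp)
    exact absurd h2 (not_lt.2 h3)
  have h4 : IsLocalRing.residue W ((⟨ρ, hW⟩ : W) ^ (q ^ n) - 1) = 0 := by
    rw [residue_zero_iff]; exact h
  rw [map_sub, map_pow, map_one] at h4
  have h5 : (IsLocalRing.residue W (⟨ρ, hW⟩ : W) - 1) ^ (q ^ n) = 0 := by
    rw [sub_pow_expChar_pow, one_pow, h4]
  have h6 := pow_eq_zero_iff hq |>.1 h5
  have h7 : IsLocalRing.residue W ((⟨ρ, hW⟩ : W) - 1) = 0 := by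
    rw [map_sub, map_one, h6]
  rw [residue_zero_iff] at h7
  exact h7

variable {F F' Ω : Type*} [Field F] [Field F'] [Field Ω]
    [Algebra F F'] [Algebra F' Ω] [Algebra F Ω] [IsScalarTower F F' Ω]

theorem mem_sepClosure {F Ω : Type*} [Field F] [Field Ω] [Algebra F Ω] (p : F[X])
    (hp : p.Separable) (x : Ω) (hx : aeval x p = 0) : x ∈ separableClosure F Ω := by
  rw [mem_separableClosure_iff]
  exact hp.of_dvd (minpoly.dvd F x hx)

theorem approx_val [IsSepClosed Ω] [Algebra.IsAlgebraic F' Ω]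
    (O' : ValuationSubring F') (W : ValuationSubring Ω)
    (hOW' : ∀ x, x ∈ O' ↔ algebraMap F' Ω x ∈ W)
    (O : ValuationSubring F)
    (hval : ∀ y : F', y ≠ 0 → ∃ x : F, x ≠ 0 ∧
      O'.valuation (algebraMap F F' x) = O'.valuation y)
    (q : ℕ) [ExpChar (IsLocalRing.ResidueField O) q] (x : Ω) (hx : x ≠ 0) :
    ∃ e : ℕ, ∃ y ∈ separableClosure F Ω, y ≠ 0 ∧ W.valuation (x ^ (q ^ e)) = W.valuation y := by
  obtain ⟨n, hn, a, ha, hna⟩ := val_torsion (K := F') W.valuation x hx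
    (Algebra.IsAlgebraic.isAlgebraic x)
  obtain ⟨b, hb, hba⟩ := hval a ha
  have hab := val_eq_map O' W _ hOW' _ _ hba
  rw [← IsScalarTower.algebraMap_apply] at hab
  obtain ⟨e, n', hn', hnn⟩ : ∃ e n' : ℕ, ((n' : IsLocalRing.ResidueField O) ≠ 0) ∧
      n = q ^ e * n' := by
    cases ‹ExpChar (IsLocalRing.ResidueField O) q› with
    | zero => exact ⟨0, n, by exact_mod_cast hn.ne', by simp⟩
    | prime hq =>
      obtain ⟨e, n', h1, h2⟩ := Nat.exists_eq_pow_mul_and_not_dvd hn.ne' q hq.ne_one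
      exact ⟨e, n', fun h => h1 ((CharP.cast_eq_zero_iff _ q n').1 h), h2⟩
  have hnpos : n' ≠ 0 := by rintro rfl; simp at hn'
  have hF : (n' : F) ≠ 0 := by
    intro h
    apply hn'
    have h1 : (n' : O) = 0 := by
      apply Subtype.ext; simpa using h
    have := congrArg (IsLocalRing.residue O) h1
    simpa using this
  have : NeZero (n' : Ω) := ⟨fun h => hF (by
    apply (algebraMap F Ω).injective; simpa using h)⟩
  obtain ⟨y, hy⟩ := IsSepClosed.exists_pow_nat_eq (algebraMap F Ω b) n'
  refine ⟨e, y, mem_sepClosure _ (separable_X_pow_sub_C b hF hb) y (by simp [hy]), ?_, ?_⟩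
  · rintro rfl
    rw [zero_pow hnpos] at hy
    exact hb ((algebraMap F Ω).injective (by simpa using hy.symm))
  · have h1 : W.valuation (x ^ q ^ e) ^ n' = W.valuation y ^ n' := by
      rw [← map_pow, ← map_pow, hy, hab, ← hna, ← pow_mul, ← hnn, map_pow]
    exact (pow_left_inj₀ zero_le' zero_le' hnpos).1 h1

theorem approx_res [IsSepClosed Ω] [Algebra.IsAlgebraic F' Ω]
    (O' : ValuationSubring F') (W : ValuationSubring Ω)
    (hOW' : ∀ x, x ∈ O' ↔ algebraMap F' Ω x ∈ W)
    (O : ValuationSubring F) (hOO : ∀ x, x ∈ O ↔ algebraMap F F' x ∈ O')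
    (hres : ∀ y : F', y ∈ O' → ∃ x : F, algebraMap F F' x ∈ O' ∧
      O'.valuation (y - algebraMap F F' x) < 1)
    (q : ℕ) [ExpChar (IsLocalRing.ResidueField O) q] :
    ExpChar (IsLocalRing.ResidueField W) q ∧
    ∀ (u : Ω) (hu : W.valuation u = 1),
    ∃ e : ℕ, ∃ c ∈ separableClosure F Ω, W.valuation (u ^ (q ^ e) - c) < 1 := by
  classical
  have hOW : ∀ x, x ∈ O ↔ algebraMap F Ω x ∈ W := by
    intro x; rw [hOO, hOW', ← IsScalarTower.algebraMap_apply]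
  let φ : O →+* W := ((algebraMap F Ω).comp (algebraMap O F)).codRestrict W.toSubring
    (fun r => (hOW r).1 r.2)
  have hφ : ∀ r : O, ((φ r : W) : Ω) = algebraMap F Ω r := fun r => rfl
  have hlt : ∀ r : O, O.valuation (r : F) < 1 ↔ W.valuation (algebraMap F Ω r) < 1 := by
    intro r
    have := val_lt_map O W (algebraMap F Ω) hOW r 1
    rwa [map_one, map_one, map_one] at this
  have hloc : IsLocalHom φ := by
    refine ⟨fun r hr => ?_⟩
    by_contra hr2
    have h1 := (O.valuation_lt_one_iff r).1 ((IsLocalRing.mem_maximalIdeal r).2 hr2)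
    have h2 := (W.valuation_lt_one_iff (φ r)).2 ((hlt r).1 h1)
    exact (IsLocalRing.mem_maximalIdeal _).1 h2 hr
  let alg : Algebra (IsLocalRing.ResidueField O) (IsLocalRing.ResidueField W) :=
    (IsLocalRing.ResidueField.map φ).toAlgebra
  have halg : ∀ r : O, algebraMap (IsLocalRing.ResidueField O) (IsLocalRing.ResidueField W)
      (IsLocalRing.residue O r) = IsLocalRing.residue W (φ r) := fun r => rfl
  refine ⟨expChar_of_injective_algebraMap (algebraMap (IsLocalRing.ResidueField O)
    (IsLocalRing.ResidueField W)).injective q, ?_⟩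
  -- evaluating polynomials
  have heval : ∀ (h : O[X]) (w : W), W.valuation (aeval (w : Ω) (h.map (algebraMap O F))) < 1 ↔
      aeval (IsLocalRing.residue W w) (h.map (IsLocalRing.residue O)) = 0 := by
    intro h w
    have h1 : aeval (w : Ω) (h.map (algebraMap O F)) = ((eval₂ φ w h : W) : Ω) := by
      rw [aeval_def, eval₂_map]
      have := hom_eval₂ h φ W.subtype w
      exact this.symm
    have h2 : aeval (IsLocalRing.residue W w) (h.map (IsLocalRing.residue O)) =
        IsLocalRing.residue W (eval₂ φ w h) := by
      rw [aeval_def, eval₂_map, hom_eval₂]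
      rfl
    rw [h1, h2, residue_zero_iff]
  intro u hu
  have huW : u ∈ W := (W.valuation_le_one_iff u).1 hu.le
  let ub : IsLocalRing.ResidueField W := IsLocalRing.residue W ⟨u, huW⟩
  have hub : IsAlgebraic (IsLocalRing.ResidueField O) ub := by
    obtain ⟨g, k, hg0, hk, -⟩ := exists_prim O' u (Algebra.IsAlgebraic.isAlgebraic u)
    choose a ha1 ha2 using fun i => hres (g.coeff i : F') (g.coeff i).2
    let b : ℕ → O := fun i => ⟨a i, (hOO _).2 (ha1 i)⟩
    have hab : ∀ i, W.valuation (algebraMap O' Ω (g.coeff i) - algebraMap F Ω (b i)) < 1 := by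
      intro i
      have := (val_lt_map O' W (algebraMap F' Ω) hOW' _ 1).1 (by simpa using ha2 i)
      rw [map_one, map_one, map_sub, ← IsScalarTower.algebraMap_apply] at this
      exact this
    let h : O[X] := ∑ i ∈ Finset.range (g.natDegree + 1), monomial i (b i)
    have hkn : k ≤ g.natDegree := le_natDegree_of_ne_zero (by rw [hk]; exact one_ne_zero)
    refine ⟨h.map (IsLocalRing.residue O), ?_, ?_⟩
    · intro h0
      have h1 := congrArg (fun p => p.coeff k) h0
      have h2 : h.coeff k = b k := by
        simp only [h, finset_sum_coeff, coeff_monomial]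
        rw [Finset.sum_ite_eq' (Finset.range (g.natDegree + 1)) k, if_pos]
        simpa [Nat.lt_succ_iff] using hkn
      simp only [coeff_map, h2, coeff_zero, residue_zero_iff] at h1
      have h3 := (hlt _).1 h1
      have h4 := W.valuation.map_add_lt (hab k) h3
      rw [hk] at h4
      simp at h4
    · rw [← heval]
      have h1 : aeval u (h.map (algebraMap O F)) =
          ∑ i ∈ Finset.range (g.natDegree + 1), algebraMap F Ω (b i) * u ^ i := by
        simp [h, Polynomial.map_sum, aeval_monomial]
      have h2 : aeval u (h.map (algebraMap O F)) =
        - ∑ i ∈ Finset.range (g.natDegree + 1),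
          (algebraMap O' Ω (g.coeff i) - algebraMap F Ω (b i)) * u ^ i := by
        rw [aeval_eq_sum_range] at hg0
        simp only [sub_mul, Finset.sum_sub_distrib, ← Algebra.smul_def] at *
        rw [h1, hg0]; simp
      show W.valuation (aeval u (h.map (algebraMap O F))) < 1
      rw [h2, Valuation.map_neg]
      refine Valuation.map_sum_lt' _ zero_lt_one fun i _ => ?_
      rw [map_mul, map_pow, hu, one_pow, mul_one]
      exact hab i
  obtain ⟨g, hgsep, e, hge⟩ := (minpoly.irreducible hub.isIntegral).hasSeparableContraction q
  have hg0 : aeval (ub ^ q ^ e) g = 0 := by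
    simpa only [expand_aeval, minpoly.aeval] using congr_arg (aeval ub) hge
  have hInteg : IsIntegral (IsLocalRing.ResidueField O) (ub ^ q ^ e) := hub.isIntegral.pow _
  have hsep0 : (minpoly (IsLocalRing.ResidueField O) (ub ^ q ^ e)).Separable :=
    hgsep.of_dvd (minpoly.dvd _ _ hg0)
  have hirr0 := minpoly.irreducible hInteg
  obtain ⟨G, hG, -, hGm⟩ := lifts_and_degree_eq_and_monic
    (f := IsLocalRing.residue O) (p := minpoly (IsLocalRing.ResidueField O) (ub ^ q ^ e)) (by
      rw [lifts_iff_coeff_lifts]; intro i; exact IsLocalRing.residue_surjective _)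
    (minpoly.monic hInteg)
  have hGirr : Irreducible (G.map (algebraMap O F)) :=
    (hGm.irreducible_iff_irreducible_map_fraction_map).1
      (hGm.irreducible_of_irreducible_map (IsLocalRing.residue O) G (hG ▸ hirr0))
  have hGsep : (G.map (algebraMap O F)).Separable := by
    rw [separable_iff_derivative_ne_zero hGirr, derivative_map]
    intro h0
    have h1 : derivative G = 0 := by
      refine Polynomial.map_injective (algebraMap O F) (IsFractionRing.injective O F) ?_
      rw [h0, Polynomial.map_zero]
    apply (separable_iff_derivative_ne_zero hirr0).1 hsep0
    rw [← hG, derivative_map, h1, Polynomial.map_zero]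
  have hGv : W.valuation (aeval (u ^ q ^ e) (G.map (algebraMap O F))) < 1 := by
    refine (heval G (⟨u, huW⟩ ^ q ^ e)).2 ?_
    rw [hG, map_pow]
    exact minpoly.aeval _ _
  have hsplit := IsSepClosed.splits_of_separable _ (hGsep.map (f := algebraMap F Ω))
  have hmon : ((G.map (algebraMap O F)).map (algebraMap F Ω)).Monic := (hGm.map _).map _
  rw [← eval_map_algebraMap, hsplit.eval_eq_prod_roots, hmon.leadingCoeff, one_mul,
    map_multiset_prod] at hGv
  by_contra hcon
  push Not at hcon
  refine absurd hGv (not_lt.2 ?_)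
  refine Multiset.prod_induction (fun z => 1 ≤ z) _ (fun a b ha hb => one_le_mul ha hb) le_rfl ?_
  intro z hz
  simp only [Multiset.map_map, Multiset.mem_map, Function.comp] at hz
  obtain ⟨c, hc, rfl⟩ := hz
  refine hcon e c (mem_sepClosure _ hGsep c ?_)
  rw [mem_roots hmon.ne_zero, IsRoot, eval_map_algebraMap] at hc
  exact hc

theorem approx [IsSepClosed Ω] [Algebra.IsAlgebraic F' Ω]
    (O' : ValuationSubring F') (W : ValuationSubring Ω)
    (hOW' : ∀ x, x ∈ O' ↔ algebraMap F' Ω x ∈ W)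
    (O : ValuationSubring F) (hOO : ∀ x, x ∈ O ↔ algebraMap F F' x ∈ O')
    (hres : ∀ y : F', y ∈ O' → ∃ x : F, algebraMap F F' x ∈ O' ∧
      O'.valuation (y - algebraMap F F' x) < 1)
    (hval : ∀ y : F', y ≠ 0 → ∃ x : F, x ≠ 0 ∧
      O'.valuation (algebraMap F F' x) = O'.valuation y) (x : Ω) (hx : x ≠ 0) :
    ∃ n : ℕ, ∃ z ∈ separableClosure F Ω, z ≠ 0 ∧ W.valuation (x ^ n - z) < W.valuation z ∧
      ∀ ρ : Ω, W.valuation (ρ ^ n - 1) < 1 → W.valuation (ρ - 1) < 1 := by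
  obtain ⟨q, hq⟩ := ExpChar.exists (IsLocalRing.ResidueField O)
  obtain ⟨hexp, H⟩ := approx_res O' W hOW' O hOO hres q
  obtain ⟨e, y, hyM, hy0, hxy⟩ := approx_val O' W hOW' O hval q x hx
  have hvy : W.valuation y ≠ 0 := by simpa using hy0
  obtain ⟨m, c, hcM, hc⟩ := H (x ^ q ^ e / y) (by rw [map_div₀, hxy, div_self hvy])
  have hvc : W.valuation c = 1 := by
    have h1 : W.valuation ((x ^ q ^ e / y) ^ q ^ m) = 1 := by
      rw [map_pow, map_div₀, hxy, div_self hvy, one_pow]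
    exact (Valuation.map_eq_of_sub_lt _ (by rw [h1, Valuation.map_sub_swap]; exact hc)).trans h1
  have hc0 : c ≠ 0 := by rintro rfl; simp at hvc
  refine ⟨q ^ (e + m), y ^ q ^ m * c, mul_mem (pow_mem hyM _) hcM,
    mul_ne_zero (pow_ne_zero _ hy0) hc0, ?_, fun ρ hρ => root_one W q _ ρ hρ⟩
  have h3 : x ^ q ^ (e + m) - y ^ q ^ m * c = y ^ q ^ m * ((x ^ q ^ e / y) ^ q ^ m - c) := by
    rw [mul_sub, ← mul_pow, mul_div_cancel₀ _ hy0, ← pow_mul, ← pow_add]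
  rw [h3, map_mul, map_mul, hvc]
  have h4 : 0 < W.valuation (y ^ q ^ m) := by
    rw [zero_lt_iff, Valuation.ne_zero_iff]; exact pow_ne_zero _ hy0
  exact mul_lt_mul_of_pos_left hc h4

theorem ram_of_sep [IsSepClosed Ω] [Algebra.IsAlgebraic F' Ω]
    (O' : ValuationSubring F') (W : ValuationSubring Ω)
    (hOW' : ∀ x, x ∈ O' ↔ algebraMap F' Ω x ∈ W)
    (O : ValuationSubring F) (hOO : ∀ x, x ∈ O ↔ algebraMap F F' x ∈ O')
    (hres : ∀ y : F', y ∈ O' → ∃ x : F, algebraMap F F' x ∈ O' ∧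
      O'.valuation (y - algebraMap F F' x) < 1)
    (hval : ∀ y : F', y ≠ 0 → ∃ x : F, x ≠ 0 ∧
      O'.valuation (algebraMap F F' x) = O'.valuation y)
    (σ : Ω ≃ₐ[F'] Ω) (hσ : ∀ x : Ω, x ∈ W ↔ σ x ∈ W)
    (h : ∀ z ∈ separableClosure F Ω, z ≠ 0 → W.valuation (σ z - z) < W.valuation z)
    (x : Ω) (hx : x ≠ 0) : W.valuation (σ x - x) < W.valuation x := by
  obtain ⟨n, z, hzM, hz0, hxz, hroot⟩ := approx O' W hOW' O hOO hres hval x hx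
  have hvx : 0 < W.valuation x := by rw [zero_lt_iff]; simpa using hx
  have h1 : W.valuation (σ x ^ n - σ z) < W.valuation (σ z) := by
    have := (val_lt_map W W (σ : Ω →+* Ω) hσ _ _).1 hxz
    simpa using this
  have h2 := h z hzM hz0
  have h3 : W.valuation (σ z) = W.valuation z := Valuation.map_eq_of_sub_lt _ h2
  have h4 : W.valuation (x ^ n) = W.valuation z := Valuation.map_eq_of_sub_lt _ hxz
  rw [h3] at h1
  have h5 : W.valuation (σ x ^ n - x ^ n) < W.valuation (x ^ n) := by
    have : σ x ^ n - x ^ n = (σ x ^ n - σ z) + (σ z - z) - (x ^ n - z) := by ring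
    rw [this, h4]
    exact Valuation.map_sub_lt _ (Valuation.map_add_lt _ h1 h2) hxz
  have hvxn : 0 < W.valuation (x ^ n) := by rw [map_pow]; exact pow_pos hvx n
  have h6 : W.valuation ((σ x / x) ^ n - 1) < 1 := by
    have : (σ x / x) ^ n - 1 = (σ x ^ n - x ^ n) / x ^ n := by
      rw [div_pow, sub_div, div_self (pow_ne_zero n hx)]
    rw [this, map_div₀]
    exact (div_lt_one₀ hvxn).2 h5
  have h7 := hroot _ h6
  have h8 : σ x / x - 1 = (σ x - x) / x := by field_simp
  rw [h8, map_div₀] at h7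
  exact (div_lt_one₀ hvx).1 h7

end Approx

section Restrict

variable {F F' Ω : Type*} [Field F] [Field F'] [Field Ω]
    [Algebra F F'] [Algebra F' Ω] [Algebra F Ω] [IsScalarTower F F' Ω]

theorem restrict_surj [IsSepClosure F' Ω]
    (hrac : ∀ x : F', IsAlgebraic F x → ∃ y : F, algebraMap F F' y = x)
    (τ : separableClosure F Ω ≃ₐ[F] separableClosure F Ω) :
    ∃ σ : Ω ≃ₐ[F'] Ω, ∀ x : separableClosure F Ω, σ (x : Ω) = ((τ x : separableClosure F Ω) : Ω) := by
  classical
  have : IsSepClosed Ω := IsSepClosure.sep_closed F'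
  have : IsGalois F' Ω := IsSepClosure.isGalois
  have : IsGalois F (separableClosure F Ω) := IsSepClosure.isGalois
  let r1 : (Ω ≃ₐ[F'] Ω) →* (Ω ≃ₐ[F] Ω) :=
    { toFun := fun σ => σ.restrictScalars F
      map_one' := rfl
      map_mul' := fun _ _ => rfl }
  let r : (Ω ≃ₐ[F'] Ω) →* (separableClosure F Ω ≃ₐ[F] separableClosure F Ω) :=
    (AlgEquiv.restrictNormalHom (separableClosure F Ω)).comp r1
  have hr : ∀ σ (x : separableClosure F Ω), ((r σ x : separableClosure F Ω) : Ω) = σ (x : Ω) :=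
    fun σ x => AlgEquiv.restrictNormal_commutes (σ.restrictScalars F) (separableClosure F Ω) x
  have hcont : Continuous r := by
    refine continuous_of_continuousAt_one r ?_
    intro s hs
    rw [map_one, krullTopology_mem_nhds_one_iff] at hs
    obtain ⟨E, hE, hEs⟩ := hs
    rw [Filter.mem_map, krullTopology_mem_nhds_one_iff]
    let bs := Module.finBasis F E
    let S : Set Ω := Set.range fun i => ((bs i : separableClosure F Ω) : Ω)
    refine ⟨IntermediateField.adjoin F' S,
      IntermediateField.finiteDimensional_adjoin (fun x _ => Algebra.IsIntegral.isIntegral x), ?_⟩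
    intro σ hσ
    apply hEs
    rw [SetLike.mem_coe, IntermediateField.mem_fixingSubgroup_iff] at hσ ⊢
    intro x hx
    have hlin : (r σ).toLinearMap.comp E.val.toLinearMap = E.val.toLinearMap := by
      refine bs.ext fun i => ?_
      apply Subtype.ext
      show ((r σ (bs i : separableClosure F Ω) : separableClosure F Ω) : Ω) = _
      rw [hr]
      exact hσ _ (IntermediateField.subset_adjoin F' S ⟨i, rfl⟩)
    exact LinearMap.congr_fun hlin ⟨x, hx⟩
  have hclosed : IsClosed (r.range : Set (separableClosure F Ω ≃ₐ[F] separableClosure F Ω)) := by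
    rw [MonoidHom.coe_range]
    exact (isCompact_range hcont).isClosed
  let H : ClosedSubgroup (separableClosure F Ω ≃ₐ[F] separableClosure F Ω) := ⟨r.range, hclosed⟩
  have hfix : IntermediateField.fixedField r.range = ⊥ := by
    rw [eq_bot_iff]
    intro x hx
    rw [IntermediateField.mem_fixedField_iff] at hx
    have h1 : (x : Ω) ∈ Set.range (algebraMap F' Ω) := by
      rw [InfiniteGalois.mem_range_algebraMap_iff_fixed]
      intro σ
      rw [← hr, hx _ ⟨σ, rfl⟩]
    obtain ⟨y, hy⟩ := h1
    have h2 : IsAlgebraic F y := by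
      have h3 : IsAlgebraic F (x : Ω) :=
        (Algebra.IsAlgebraic.isAlgebraic (R := F) x).algebraMap
      rw [← hy] at h3
      exact (isAlgebraic_algebraMap_iff (algebraMap F' Ω).injective).1 h3
    obtain ⟨z, hz⟩ := hrac y h2
    refine IntermediateField.mem_bot.2 ⟨z, ?_⟩
    apply Subtype.ext
    rw [← hy, ← hz, ← IsScalarTower.algebraMap_apply]
    rfl
  have hH := InfiniteGalois.fixingSubgroup_fixedField H
  have htop : r.range = ⊤ := by
    have h5 : (IntermediateField.fixedField r.range).fixingSubgroup = r.range := hH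
    rw [← h5, hfix, IntermediateField.fixingSubgroup_bot]
  have : τ ∈ r.range := by rw [htop]; trivial
  obtain ⟨σ, rfl⟩ := this
  exact ⟨σ, fun x => (hr σ x).symm⟩

end Restrict
end Stmt8Aux

namespace Stmt8Aux
open Polynomial

theorem hens_descend {F F' : Type*} [Field F] [Field F'] [Algebra F F']
    (hrac : ∀ x : F', IsAlgebraic F x → ∃ y : F, algebraMap F F' y = x)
    (O' : ValuationSubring F') (O : ValuationSubring F)
    (hOO : ∀ x, x ∈ O ↔ algebraMap F F' x ∈ O')
    (hhens : HenselianLocalRing O') : HenselianLocalRing O := by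
  let φ : O →+* O' := ((algebraMap F F').comp O.subtype).codRestrict O'.toSubring
    (fun x => (hOO x).1 x.2)
  have hφ : ∀ x : O, ((φ x : O') : F') = algebraMap F F' x := fun x => rfl
  have hmax : ∀ x : O, x ∈ IsLocalRing.maximalIdeal O ↔ φ x ∈ IsLocalRing.maximalIdeal O' := by
    intro x
    rw [ValuationSubring.valuation_lt_one_iff, ValuationSubring.valuation_lt_one_iff, hφ]
    have := val_lt_map O O' (algebraMap F F') hOO x 1
    simpa using this
  have hinj : Function.Injective φ := by
    intro a b hab
    have : algebraMap F F' a = algebraMap F F' b := by rw [← hφ, ← hφ, hab]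
    exact Subtype.ext ((algebraMap F F').injective this)
  refine ⟨fun f hf a₀ h1 h2 => ?_⟩
  obtain ⟨b, hb, hba⟩ := hhens.is_henselian (f.map φ) (hf.map φ) (φ a₀)
    (by rw [eval_map, eval₂_hom]; exact (hmax _).1 h1)
    (by rw [derivative_map, eval_map, eval₂_hom]; exact h2.map φ)
  have halg : IsAlgebraic F (b : F') := by
    refine ⟨f.map O.subtype, (hf.map _).ne_zero, ?_⟩
    rw [aeval_def, eval₂_map]
    have h3 : eval₂ φ b f = 0 := by rw [← eval_map]; exact hb
    have h4 := congrArg O'.subtype h3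
    rw [hom_eval₂, map_zero] at h4
    exact h4
  obtain ⟨y, hy⟩ := hrac _ halg
  have hyO : y ∈ O := (hOO y).2 (by rw [hy]; exact b.2)
  have hyb : φ ⟨y, hyO⟩ = b := Subtype.ext hy
  refine ⟨⟨y, hyO⟩, ?_, ?_⟩
  · apply hinj
    rw [map_zero, ← eval₂_hom, ← eval_map, hyb]
    exact hb
  · rw [hmax, map_sub, hyb]; exact hba

end Stmt8Aux

set_option maxHeartbeats 1000000 in
theorem stmt8 {F F' Ω' : Type*} [Field F] [Field F'] [Field Ω']
    [Algebra F F'] [Algebra F' Ω'] [Algebra F Ω'] [IsScalarTower F F' Ω']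
    -- `Ω'` is a fixed separable closure of `F'`:
    [IsSepClosure F' Ω']
    -- `F` is relatively algebraically closed in `F'`:
    (hrac : ∀ x : F', IsAlgebraic F x → ∃ y : F, algebraMap F F' y = x)
    -- valuations: `O'` on `F'`, `W` a prolongation to `Ω'`, `O` the restriction to `F`:
    (O' : ValuationSubring F') (W : ValuationSubring Ω')
    (hW : W.comap (algebraMap F' Ω') = O')
    (O : ValuationSubring F) (hO : O = O'.comap (algebraMap F F'))
    -- the extension `(F', O')/(F, O)` is immediate: same residue field and value group:
    (hres : ∀ y : F', y ∈ O' → ∃ x : F, algebraMap F F' x ∈ O' ∧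
      O'.valuation (y - algebraMap F F' x) < 1)
    (hval : ∀ y : F', y ≠ 0 → ∃ x : F, x ≠ 0 ∧
      O'.valuation (algebraMap F F' x) = O'.valuation y)
    -- `(F', O')` is henselian:
    (hhens : HenselianLocalRing ↥O')
    -- `(F', O')` is absolutely defectless: the ramification subgroup of the
    -- decomposition group of `W` in the absolute Galois group of `F'` is trivial:
    (hdefect : ∀ σ : Ω' ≃ₐ[F'] Ω', (∀ x : Ω', x ∈ W ↔ σ x ∈ W) →
      (∀ x : Ω', x ≠ 0 → W.valuation (σ x - x) < W.valuation x) → σ = 1) :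
    -- then `(F, O)` is henselian and absolutely defectless, and restriction to the
    -- separable closure `M` of `F` inside `Ω'` is an isomorphism of absolute Galois
    -- groups:
    HenselianLocalRing ↥O ∧
    (∀ τ : ↥(separableClosure F Ω') ≃ₐ[F] ↥(separableClosure F Ω'),
      (∀ x : ↥(separableClosure F Ω'),
        x ∈ W.comap (algebraMap ↥(separableClosure F Ω') Ω') ↔
        τ x ∈ W.comap (algebraMap ↥(separableClosure F Ω') Ω')) →
      (∀ x : ↥(separableClosure F Ω'), x ≠ 0 →
        (W.comap (algebraMap ↥(separableClosure F Ω') Ω')).valuation (τ x - x) <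
        (W.comap (algebraMap ↥(separableClosure F Ω') Ω')).valuation x) → τ = 1) ∧
    (∀ τ : ↥(separableClosure F Ω') ≃ₐ[F] ↥(separableClosure F Ω'),
      ∃! σ : Ω' ≃ₐ[F'] Ω',
        ∀ x : ↥(separableClosure F Ω'), σ (x : Ω') = ((τ x : ↥(separableClosure F Ω')) : Ω')) := by
  have hsc : IsSepClosed Ω' := IsSepClosure.sep_closed F'
  have hgal : IsGalois F' Ω' := IsSepClosure.isGalois
  have hOW' : ∀ x, x ∈ O' ↔ algebraMap F' Ω' x ∈ W := by
    intro x; rw [← hW, ValuationSubring.mem_comap]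
  have hOO : ∀ x, x ∈ O ↔ algebraMap F F' x ∈ O' := by
    intro x; rw [hO, ValuationSubring.mem_comap]
  have hpres : ∀ (σ : Ω' ≃ₐ[F'] Ω') (x : Ω'), x ∈ W ↔ σ x ∈ W := by
    intro σ x
    refine ⟨Stmt8Aux.hens_preserve O' hhens W hW σ x, fun h => ?_⟩
    have := Stmt8Aux.hens_preserve O' hhens W hW σ.symm _ h
    simpa using this
  have hone : ∀ σ : Ω' ≃ₐ[F'] Ω',
      (∀ z ∈ separableClosure F Ω', z ≠ 0 → W.valuation (σ z - z) < W.valuation z) → σ = 1 :=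
    fun σ h => hdefect σ (hpres σ)
      (Stmt8Aux.ram_of_sep O' W hOW' O hOO hres hval σ (hpres σ) h)
  refine ⟨Stmt8Aux.hens_descend hrac O' O hOO hhens, ?_, ?_⟩
  · intro τ _ hτ
    obtain ⟨σ, hσ⟩ := Stmt8Aux.restrict_surj hrac τ
    have hσ1 : σ = 1 := by
      refine hone σ fun z hz hz0 => ?_
      have h1 := hτ ⟨z, hz⟩ (fun h => hz0 (congrArg Subtype.val h))
      rw [Stmt8Aux.val_lt_map _ W (algebraMap (separableClosure F Ω') Ω')
        (fun x => ValuationSubring.mem_comap)] at h1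
      have h2 := hσ ⟨z, hz⟩
      simp only at h2
      rw [h2]
      exact h1
    ext x
    rw [← hσ, hσ1]
    rfl
  · intro τ
    obtain ⟨σ, hσ⟩ := Stmt8Aux.restrict_surj hrac τ
    refine ⟨σ, hσ, fun σ₂ hσ₂ => ?_⟩
    have h1 : σ⁻¹ * σ₂ = 1 := by
      refine hone _ fun z hz hz0 => ?_
      have h2 : (σ⁻¹ * σ₂) z = z := by
        have h3 := hσ ⟨z, hz⟩
        have h4 := (hσ₂ ⟨z, hz⟩).trans h3.symm
        simp only at h4
        rw [AlgEquiv.mul_apply, h4]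
        exact σ.symm_apply_apply z
      rw [h2, sub_self, map_zero, zero_lt_iff, Valuation.ne_zero_iff]
      exact hz0
    exact (inv_mul_eq_one.1 h1).symm
end

section
/- Let L₀/F₀ be a finite Galois extension and φ : Gal(L₀/F₀) ↪ A an embedding into a finite group A. Then there exists a Galois extension of valued fields (L, w)/(F, v) with residue fields Lw ≅ L₀ and Fv ≅ F₀, with Gal(L/F) ≅ A, such that φ(Gal(L₀/F₀)) is the decomposition subgroup of A with respect to w; moreover the extension is tame unramified (the inertia subgroup is trivial). -/
/-- A realization of the finite group `A` as Galois group of a valued Galois extension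
`(L, W)/(F, v)` with residue extension `L₀/F₀`, such that the image of
`Gal(L₀/F₀)` under `φ` is the decomposition subgroup, and the extension is tame
unramified (trivial inertia). -/
structure ValuedRealization (F₀ L₀ : Type) [Field F₀] [Field L₀] [Algebra F₀ L₀]
    (A : Type) [Group A] (φ : (L₀ ≃ₐ[F₀] L₀) →* A) where
  F : Type
  L : Type
  [fieldF : Field F]
  [fieldL : Field L]
  [alg : Algebra F L]
  [findim : FiniteDimensional F L]
  [galois : IsGalois F L]
  /-- the valuation (subring) on `L`; its restriction to `F` is `v`. -/
  W : ValuationSubring L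
  /-- `Gal(L/F) ≅ A`. -/
  e : (L ≃ₐ[F] L) ≃* A
  /-- the residue field of `W` is `L₀`. -/
  resL : IsLocalRing.ResidueField ↥W ≃+* L₀
  /-- the residue field of `v = W ∩ F` is `F₀`. -/
  resF : IsLocalRing.ResidueField ↥(W.comap (algebraMap F L)) ≃+* F₀
  /-- `φ (Gal(L₀/F₀))` is the decomposition subgroup of `A` w.r.t. `W`. -/
  decomp : ∀ a : A, a ∈ φ.range ↔
    ∃ σ : L ≃ₐ[F] L, (∀ x : L, x ∈ W ↔ σ x ∈ W) ∧ e σ = a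
  /-- the extension is tame unramified: the inertia subgroup is trivial. -/
  tame : ∀ σ : L ≃ₐ[F] L, (∀ x : L, x ∈ W ↔ σ x ∈ W) →
    (∀ x : L, x ∈ W → W.valuation (σ x - x) < 1) → σ = 1

open HahnSeries

section
variable {Γ K : Type} [AddCommGroup Γ] [LinearOrder Γ] [IsOrderedAddMonoid Γ] [Field K]

noncomputable def hV (Γ K : Type) [AddCommGroup Γ] [LinearOrder Γ] [IsOrderedAddMonoid Γ] [Field K] :
    ValuationSubring (HahnSeries Γ K) where
  carrier := {f | 0 ≤ f.orderTop}
  mul_mem' := by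
    intro a b ha hb
    simp only [Set.mem_ofPred_eq, ← addVal_apply] at *
    rw [AddValuation.map_mul]; exact add_nonneg ha hb
  one_mem' := by simp
  add_mem' := by
    intro a b ha hb
    have h : min a.orderTop b.orderTop ≤ (a + b).orderTop := min_orderTop_le_orderTop_add
    exact (le_min ha hb).trans h
  zero_mem' := by simp
  neg_mem' := by intro a ha; simpa using ha
  mem_or_inv_mem' := by
    intro a
    by_cases h : a = 0
    · left; simp [h]
    have : addVal Γ K (a * a⁻¹) = 0 := by
      rw [mul_inv_cancel₀ h]; simp
    rw [AddValuation.map_mul] at this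
    simp only [Set.mem_ofPred_eq, ← addVal_apply]
    by_contra! hc
    have h2 : addVal Γ K a + addVal Γ K a⁻¹ ≤ addVal Γ K a + 0 := by gcongr; exact hc.2.le
    rw [this, add_zero] at h2
    exact absurd hc.1 (not_lt.mpr h2)

theorem mem_hV (f : HahnSeries Γ K) : f ∈ hV Γ K ↔ ∀ g < 0, f.coeff g = 0 := by
  change 0 ≤ f.orderTop ↔ _
  constructor
  · intro h g hg
    apply coeff_eq_zero_of_lt_orderTop
    exact lt_of_lt_of_le (by exact_mod_cast hg) h
  · intro h
    by_contra! hc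
    have hf : f ≠ 0 := by rintro rfl; simp at hc
    rw [← order_eq_orderTop_of_ne_zero hf] at hc
    have := h f.order (by exact_mod_cast hc)
    exact coeff_order_eq_zero.not.mpr hf this

noncomputable def hres (Γ K : Type) [AddCommGroup Γ] [LinearOrder Γ] [IsOrderedAddMonoid Γ] [Field K] :
    hV Γ K →+* K where
  toFun f := (f : HahnSeries Γ K).coeff 0
  map_one' := by simp
  map_zero' := by simp
  map_add' := by simp
  map_mul' := by
    rintro ⟨a, ha⟩ ⟨b, hb⟩
    rw [mem_hV] at ha hb
    change (a * b).coeff 0 = a.coeff 0 * b.coeff 0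
    rw [coeff_mul]
    rw [Finset.sum_subset (s₂ := insert (0,0) (Finset.antidiagonal a.isPWO_support b.isPWO_support 0)) (Finset.subset_insert _ _)]
    · rw [Finset.sum_eq_single_of_mem (0,0) (Finset.mem_insert_self _ _)]
      rintro ⟨i, j⟩ hij hne
      simp only [Finset.mem_insert, hne, false_or, Finset.mem_antidiagonal] at hij
      rcases lt_trichotomy i 0 with h | h | h
      · simp [ha i h]
      · subst h; simp at hij; simp_all
      · have : j < 0 := by have := hij.2.2; rw [eq_neg_of_add_eq_zero_right this]; simpa using h
        simp [hb j this]
    · rintro ⟨i, j⟩ hij hne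
      simp only [Finset.mem_insert] at hij
      rcases hij with hij | hij
      · cases hij; simp at hne
        by_cases h : a.coeff 0 = 0
        · simp [h]
        · simp [hne h]
      · exact absurd hij hne

noncomputable def hmap (Γ : Type) {K : Type} [AddCommGroup Γ] [LinearOrder Γ] [IsOrderedAddMonoid Γ] [Field K]
   (g : K →+* K) : HahnSeries Γ K →+* HahnSeries Γ K where
  toFun f := f.map g
  map_one' := HahnSeries.map_one (g.toMonoidWithZeroHom : K →*₀ K)
  map_mul' _ _ := HahnSeries.map_mul (g : K →ₙ+* K)
  map_zero' := HahnSeries.map_zero (g : ZeroHom K K)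
  map_add' _ _ := HahnSeries.map_add (g : K →+ K)

theorem resEquiv {R k E : Type} [CommRing R] [IsLocalRing R] [Field k] [Field E] (ρ : R →+* E) (i : k →+* E)
    (h : ρ.range = i.range) : RingHom.ker ρ = IsLocalRing.maximalIdeal R ∧
      Nonempty (IsLocalRing.ResidueField R ≃+* k) := by
  have hk : RingHom.ker ρ = IsLocalRing.maximalIdeal R := by
    apply IsLocalRing.eq_maximalIdeal
    have e : R ⧸ RingHom.ker ρ ≃+* k := (RingHom.quotientKerEquivRange ρ).trans
      ((RingEquiv.subringCongr h).trans (RingHom.rangeRestrictFieldEquiv i).symm)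
    exact Ideal.Quotient.maximal_of_isField _ (e.toMulEquiv.isField (Field.toIsField k))
  refine ⟨hk, ⟨(Ideal.quotEquivOfEq hk.symm).trans ((RingHom.quotientKerEquivRange ρ).trans
      ((RingEquiv.subringCongr h).trans (RingHom.rangeRestrictFieldEquiv i).symm))⟩⟩

theorem exists_grp (A : Type) [Finite A] : ∃ (Γ : Type) (_ : AddCommGroup Γ) (_ : LinearOrder Γ) (_ : IsOrderedAddMonoid Γ)
    (γ : A → Γ), (∀ a, 0 < γ a) ∧ Function.Injective (fun m : A →₀ ℕ => m.sum fun a k => k • γ a) := by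
  classical
  let _ : LinearOrder A := linearOrderOfSTO WellOrderingRel
  refine ⟨Lex (A →₀ ℤ), inferInstance, inferInstance, inferInstance, fun a => toLex (Finsupp.single a 1), ?_, ?_⟩
  · intro a
    refine ⟨a, ?_, ?_⟩
    · intro b hb
      simp [hb.ne']
    · simp
  · intro m n h
    have key : ∀ m : A →₀ ℕ, (m.sum fun a k => k • toLex (Finsupp.single a (1:ℤ))) = toLex (m.mapRange (Nat.cast : ℕ → ℤ) rfl) := by
      intro m
      apply ofLex.injective
      induction m using Finsupp.induction_linear with
      | zero => simp
      | add f g hf hg => 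
        rw [Finsupp.sum_add_index' (by simp) (by intros; simp [add_smul]), ofLex_add, hf, hg]
        ext; simp
      | single a b => 
        rw [Finsupp.sum_single_index (by simp)]
        ext c
        change (b • Finsupp.single a (1:ℤ)) c = _
        simp [Finsupp.single_apply]
    simp only [key] at h
    exact Finsupp.mapRange_injective _ rfl Nat.cast_injective (toLex.injective h)
end

theorem core (F₀ L₀ : Type) [Field F₀] [Field L₀] [Algebra F₀ L₀]
    [FiniteDimensional F₀ L₀] [IsGalois F₀ L₀]
    (A : Type) [Group A] [Finite A]
    (φ : (L₀ ≃ₐ[F₀] L₀) →* A)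
    (Γ : Type) [AddCommGroup Γ] [LinearOrder Γ] [IsOrderedAddMonoid Γ]
    (L : Type) [Field L] [MulSemiringAction A L] (T : A → L) (hT : ∀ a b, a • T b = T (a * b))
    (hTi : Function.Injective T)
    (ι : F₀ →+* L) (hι : ∀ (a : A) c, a • ι c = ι c) (j : L →+* HahnSeries Γ L₀)
    (hj : ∀ (g : L₀ ≃ₐ[F₀] L₀) y, j (φ g • y) = hmap Γ (g : L₀ →+* L₀) (j y))
    (hjι : ∀ c, j (ι c) = C (algebraMap F₀ L₀ c))
    (hT0 : ∀ b, j (T b) ∈ hV Γ L₀)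
    (hT1 : ∀ g : L₀ ≃ₐ[F₀] L₀, (j (T (φ g))).coeff 0 = IsGalois.normalBasis F₀ L₀ g)
    (hT2 : ∀ a ∉ φ.range, (j (T a)).coeff 0 = 0) :
    Nonempty (ValuedRealization F₀ L₀ A φ) := by
  classical
  have : FaithfulSMul A L := ⟨fun {a b} h => by
    have := h (T 1)
    rw [hT, hT, mul_one, mul_one] at this
    exact hTi this⟩
  let W : ValuationSubring L := (hV Γ L₀).comap j
  let F := FixedPoints.subfield A L
  let ρ : W →+* L₀ := (hres Γ L₀).comp ((j.comp W.subtype).codRestrict (hV Γ L₀).toSubring (fun x => x.2))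
  have hρ : ∀ y : W, ρ y = (j y).coeff 0 := fun _ => rfl
  have hιW : ∀ c, ι c ∈ W := by
    intro c
    change j (ι c) ∈ hV Γ L₀
    rw [hjι, mem_hV]
    intro γ hγ
    simp [C_apply, coeff_single_of_ne hγ.ne]
  have hρι : ∀ c, ρ ⟨ι c, hιW c⟩ = algebraMap F₀ L₀ c := by
    intro c
    rw [hρ]; simp [hjι]
  have hTW : ∀ b, T b ∈ W := hT0
  have hsurj : ρ.range = (RingHom.id L₀).range := by
    apply le_antisymm (fun y _ => ⟨y, rfl⟩)
    intro y _
    rw [← (IsGalois.normalBasis F₀ L₀).sum_repr y]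
    apply Subring.sum_mem
    intro g _
    rw [Algebra.smul_def]
    apply Subring.mul_mem
    · exact ⟨_, hρι _⟩
    · exact ⟨⟨T (φ g), hTW _⟩, hT1 g⟩
  obtain ⟨hker, ⟨resL⟩⟩ := resEquiv ρ (RingHom.id L₀) hsurj
  let v : ValuationSubring F := W.comap (algebraMap F L)
  let ρF : v →+* L₀ := ρ.comp (((algebraMap F L).comp v.subtype).codRestrict W.toSubring (fun x => x.2))
  have hrF : ρF.range = (algebraMap F₀ L₀).range := by
    ext y
    constructor
    · rintro ⟨z, rfl⟩
      have : ∀ g : L₀ ≃ₐ[F₀] L₀, g (ρF z) = ρF z := by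
        intro g
        change g ((j (z : F)).coeff 0) = (j (z : F)).coeff 0
        have h1 := hj g (z : F)
        rw [show φ g • ((z : F) : L) = (z : F) from (z : F).2 (φ g)] at h1
        conv_rhs => rw [h1]
        rfl
      exact (IsGalois.mem_bot_iff_fixed _).mpr this
    · rintro ⟨c, rfl⟩
      refine ⟨⟨⟨ι c, fun a => hι a c⟩, hιW c⟩, hρι c⟩
  obtain ⟨-, ⟨resF⟩⟩ := resEquiv ρF (algebraMap F₀ L₀) hrF
  have hstab : ∀ (g : L₀ ≃ₐ[F₀] L₀) y, y ∈ W ↔ φ g • y ∈ W := by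
    intro g y
    change j y ∈ hV Γ L₀ ↔ j (φ g • y) ∈ hV Γ L₀
    rw [hj, mem_hV, mem_hV]
    refine forall₂_congr fun γ _ => ?_
    change _ ↔ g ((j y).coeff γ) = 0
    simp
  have hx : IsGalois.normalBasis F₀ L₀ 1 ≠ 0 := (IsGalois.normalBasis F₀ L₀).ne_zero 1
  have hdec : ∀ a : A, (∀ y : L, y ∈ W ↔ a • y ∈ W) → a ∈ φ.range := by
    intro a ha
    by_contra hna
    have h1 : (⟨T 1, hTW 1⟩ : W) ∉ IsLocalRing.maximalIdeal W := by
      rw [← hker, RingHom.mem_ker]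
      have := hT1 1
      rw [map_one] at this
      change (j (T 1)).coeff 0 ≠ 0
      rw [this]; exact hx
    have h2 : (⟨T a, hTW a⟩ : W) ∈ IsLocalRing.maximalIdeal W := by
      rw [← hker, RingHom.mem_ker]
      exact hT2 a hna
    rw [IsLocalRing.mem_maximalIdeal, mem_nonunits_iff, not_not] at h1
    rw [IsLocalRing.mem_maximalIdeal, mem_nonunits_iff] at h2
    apply h2
    obtain ⟨⟨z, hz⟩, hz1⟩ := h1.exists_right_inv
    rw [isUnit_iff_exists_inv]
    refine ⟨⟨a • z, (ha z).mp hz⟩, ?_⟩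
    have hz2 : T 1 * z = 1 := congrArg Subtype.val hz1
    apply Subtype.ext
    change T a * a • z = 1
    rw [← mul_one a, ← hT, mul_one, ← smul_mul', hz2, smul_one]
  let e := FixedPoints.toAlgAutMulEquiv A L
  have he : ∀ a y, e a y = a • y := fun _ _ => rfl
  refine ⟨{ F := F, L := L, W := W, e := e.symm, resL := resL, resF := resF, decomp := ?_, tame := ?_ }⟩
  · intro a
    constructor
    · rintro ⟨g, rfl⟩
      exact ⟨e (φ g), fun y => hstab g y, e.symm_apply_apply _⟩
    · rintro ⟨σ, h, rfl⟩
      apply hdec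
      intro y
      rw [← he, e.apply_symm_apply]
      exact h y
  · intro σ h h1
    obtain ⟨a, rfl⟩ := e.surjective σ
    obtain ⟨g, rfl⟩ := hdec a h
    have h2 := h1 (T 1) (hTW 1)
    rw [he, hT, mul_one] at h2
    have h3 : (⟨T (φ g), hTW _⟩ - ⟨T 1, hTW 1⟩ : W) ∈ RingHom.ker ρ := by
      rw [hker, ValuationSubring.valuation_lt_one_iff]
      exact h2
    rw [RingHom.mem_ker, map_sub, sub_eq_zero, hρ, hρ] at h3
    have h4 := hT1 1
    rw [map_one] at h4
    have h5 := (hT1 g).symm.trans (h3.trans h4)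
    rw [(IsGalois.normalBasis F₀ L₀).injective h5, map_one, map_one]

theorem exists_xx (F₀ L₀ : Type) [Field F₀] [Field L₀] [Algebra F₀ L₀]
    [FiniteDimensional F₀ L₀] [IsGalois F₀ L₀]
    (A : Type) [Group A]
    (φ : (L₀ ≃ₐ[F₀] L₀) →* A) (hφ : Function.Injective φ) : ∃ xx : A → L₀, (∀ g, xx (φ g) = IsGalois.normalBasis F₀ L₀ g) ∧
    (∀ a ∉ φ.range, xx a = 0) ∧ ∀ (g : L₀ ≃ₐ[F₀] L₀) b, g (xx b) = xx (φ g * b) := by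
  classical
  have h1 : ∀ g, (fun b => if h : ∃ g, φ g = b then IsGalois.normalBasis F₀ L₀ h.choose else 0) (φ g) =
      IsGalois.normalBasis F₀ L₀ g := by
    intro g
    have h : ∃ g', φ g' = φ g := ⟨g, rfl⟩
    simp only [dif_pos h]
    rw [hφ h.choose_spec]
  have h2 : ∀ a ∉ φ.range, (fun b => if h : ∃ g, φ g = b then IsGalois.normalBasis F₀ L₀ h.choose else 0) a = 0 := by
    intro a ha
    exact dif_neg ha
  generalize (fun b => if h : ∃ g, φ g = b then IsGalois.normalBasis F₀ L₀ h.choose else 0) = xx at h1 h2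
  refine ⟨xx, h1, h2, ?_⟩
  intro g b
  by_cases hb : b ∈ φ.range
  · obtain ⟨k, rfl⟩ := hb
    rw [← map_mul, h1, h1, IsGalois.normalBasis_apply, IsGalois.normalBasis_apply (g * k)]
    rfl
  · rw [h2 b hb, h2 (φ g * b), map_zero]
    intro h
    apply hb
    have := φ.range.mul_mem (φ.range.inv_mem ⟨g, rfl⟩) h
    simpa using this

theorem det_xx (F₀ L₀ : Type) [Field F₀] [Field L₀] [Algebra F₀ L₀]
    [FiniteDimensional F₀ L₀] [IsGalois F₀ L₀]
    (A : Type) [Group A]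
    (φ : (L₀ ≃ₐ[F₀] L₀) →* A) (hφ : Function.Injective φ)
    [Fintype A] [DecidableEq A] (xx : A → L₀) (h1 : ∀ g, xx (φ g) = IsGalois.normalBasis F₀ L₀ g)
    (h2 : ∀ a ∉ φ.range, xx a = 0) : (Matrix.of fun b c : A => xx (b * c⁻¹)).det ≠ 0 := by
  rw [Ne, ← Matrix.exists_vecMul_eq_zero_iff]
  rintro ⟨v, hv, h0⟩
  apply hv
  have e1 : ∀ c, ∑ g : L₀ ≃ₐ[F₀] L₀, v (φ g * c) * IsGalois.normalBasis F₀ L₀ g = 0 := by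
    intro c
    have := congrFun h0 c
    simp only [Matrix.vecMul, dotProduct, Matrix.of_apply, Pi.zero_apply] at this
    rw [← Equiv.sum_comp (Equiv.mulRight c)] at this
    simp only [Equiv.coe_mulRight, mul_inv_cancel_right] at this
    rw [← this]
    apply Fintype.sum_of_injective φ hφ
    · intro a ha
      rw [h2 a ha, mul_zero]
    · intro g; rw [h1]
  funext c
  have e2 : ∀ k : L₀ ≃ₐ[F₀] L₀, ∑ g : L₀ ≃ₐ[F₀] L₀, v (φ g * c) * g (IsGalois.normalBasis F₀ L₀ k) = 0 := by
    intro k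
    rw [← e1 (φ k⁻¹ * c), ← Equiv.sum_comp (Equiv.mulRight k) (fun g => v (φ g * (φ k⁻¹ * c)) * _)]
    refine Finset.sum_congr rfl fun g _ => ?_
    simp only [Equiv.coe_mulRight]
    rw [← mul_assoc (φ (g * k)), ← map_mul, mul_inv_cancel_right, IsGalois.normalBasis_apply k,
      IsGalois.normalBasis_apply (g * k)]
    rfl
  have e3 : ∀ y : L₀, ∑ g : L₀ ≃ₐ[F₀] L₀, v (φ g * c) * g y = 0 := by
    intro y
    have : (∑ g : L₀ ≃ₐ[F₀] L₀, (LinearMap.mulLeft F₀ (v (φ g * c))).comp g.toLinearMap) = 0 := by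
      apply (IsGalois.normalBasis F₀ L₀).ext
      intro k
      simpa using e2 k
    simpa using LinearMap.congr_fun this y
  have li := (linearIndependent_monoidHom L₀ L₀).comp
    (fun g : L₀ ≃ₐ[F₀] L₀ => ((g : L₀ →+* L₀) : L₀ →* L₀)) (by
      intro g h hgh
      ext y
      exact DFunLike.congr_fun hgh y)
  rw [Fintype.linearIndependent_iff] at li
  have := li (fun g => v (φ g * c)) (by
    funext y
    simpa using e3 y) 1
  simpa using this


theorem aff_inj {K A : Type} [Field K] [Fintype A] [DecidableEq A] (M : Matrix A A K) (hM : M.det ≠ 0) (x : A → K) :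
    Function.Injective (MvPolynomial.aeval (R := K)
      (fun b => (MvPolynomial.C (x b) + ∑ c, MvPolynomial.C (M b c) * MvPolynomial.X c : MvPolynomial A K))) := by
  have hu : M * M⁻¹ = 1 := Matrix.mul_nonsing_inv M (isUnit_iff_ne_zero.mpr hM)
  apply Function.LeftInverse.injective (g := MvPolynomial.aeval (R := K)
    (fun c => (∑ b, MvPolynomial.C (M⁻¹ c b) * (MvPolynomial.X b - MvPolynomial.C (x b)) : MvPolynomial A K)))
  intro p
  rw [← AlgHom.comp_apply]
  conv_rhs => rw [← AlgHom.id_apply (R := K) p]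
  congr 1
  apply MvPolynomial.algHom_ext
  intro b
  simp only [AlgHom.comp_apply, MvPolynomial.aeval_X, map_add, map_sum, map_mul, MvPolynomial.algHom_C,
    MvPolynomial.algebraMap_eq, AlgHom.id_apply]
  have : ∀ c, (MvPolynomial.C (M b c) * ∑ b', MvPolynomial.C (M⁻¹ c b') * (MvPolynomial.X b' - MvPolynomial.C (x b')) : MvPolynomial A K)
    = ∑ b', MvPolynomial.C (M b c * M⁻¹ c b') * (MvPolynomial.X b' - MvPolynomial.C (x b')) := by
    intro c; rw [Finset.mul_sum]; simp [mul_assoc]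
  simp only [this]
  rw [Finset.sum_comm]
  simp only [← Finset.sum_mul, ← map_sum]
  have h2 : ∀ b', ∑ c, M b c * M⁻¹ c b' = (1 : Matrix A A K) b b' := by
    intro b'; rw [← hu, Matrix.mul_apply]
  simp only [h2, Matrix.one_apply]
  simp

theorem hahn_inj {K A Γ : Type} [Field K] [AddCommGroup Γ] [LinearOrder Γ] [IsOrderedAddMonoid Γ] (γ : A → Γ)
    (hγ : Function.Injective (fun m : A →₀ ℕ => m.sum fun a k => k • γ a)) :
    Function.Injective (MvPolynomial.eval₂Hom (HahnSeries.C : K →+* HahnSeries Γ K) (fun a => single (γ a) (1 : K))) := by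
  classical
  have hmon : ∀ (m : A →₀ ℕ), (m.prod fun i k => (single (γ i) (1 : K)) ^ k : HahnSeries Γ K) =
      single (m.sum fun a k => k • γ a) 1 := by
    intro m
    induction m using Finsupp.induction_linear with
    | zero => simp
    | add f g hf hg =>
      rw [Finsupp.prod_add_index' (by simp) (by intros; rw [_root_.pow_add]),
        Finsupp.sum_add_index' (by simp) (by intros; rw [add_smul]), hf, hg, single_mul_single, one_mul]
    | single a b =>
      rw [Finsupp.prod_single_index (by simp), Finsupp.sum_single_index (by simp), single_pow, one_pow]
  have key : ∀ (p : MvPolynomial A K) (m : A →₀ ℕ), (MvPolynomial.eval₂Hom (HahnSeries.C : K →+* HahnSeries Γ K)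
      (fun a => single (γ a) (1 : K)) p).coeff (m.sum fun a k => k • γ a) = p.coeff m := by
    intro p m
    induction p using MvPolynomial.induction_on' with
    | monomial n a =>
      rw [MvPolynomial.coe_eval₂Hom, MvPolynomial.eval₂_monomial, hmon, C_apply, single_mul_single, zero_add,
        mul_one, MvPolynomial.coeff_monomial, coeff_single]
      congr 1
      exact propext (hγ.eq_iff.trans eq_comm)
    | add p q hp hq => rw [map_add, coeff_add, hp, hq, MvPolynomial.coeff_add]
  intro p q h
  ext m
  rw [← key, ← key, h]

@[reducible]
noncomputable def polyAct (F₀ A : Type) [Field F₀] [Group A] : MulSemiringAction A (MvPolynomial A F₀) where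
  smul a p := MvPolynomial.rename (a * ·) p
  one_smul p := by
    change MvPolynomial.rename (1 * ·) p = p
    simp only [one_mul]
    exact MvPolynomial.rename_id_apply p
  mul_smul a b p := by
    change MvPolynomial.rename (a * b * ·) p = MvPolynomial.rename (a * ·) (MvPolynomial.rename (b * ·) p)
    rw [MvPolynomial.rename_rename]
    simp only [Function.comp_def, mul_assoc]
  smul_zero a := map_zero (MvPolynomial.rename (a * ·))
  smul_add a := map_add (MvPolynomial.rename (a * ·))
  smul_one a := map_one (MvPolynomial.rename (a * ·))
  smul_mul a := map_mul (MvPolynomial.rename (a * ·))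

theorem stmt9 (F₀ L₀ : Type) [Field F₀] [Field L₀] [Algebra F₀ L₀]
    [FiniteDimensional F₀ L₀] [IsGalois F₀ L₀]
    (A : Type) [Group A] [Finite A]
    (φ : (L₀ ≃ₐ[F₀] L₀) →* A) (hφ : Function.Injective φ) :
    Nonempty (ValuedRealization F₀ L₀ A φ) := by
  classical
  have := Fintype.ofFinite A
  obtain ⟨Γ, _, _, _, γ, hγ0, hγ⟩ := exists_grp A
  obtain ⟨xx, hx1, hx2, hx3⟩ := exists_xx F₀ L₀ A φ hφ
  have hdet := det_xx F₀ L₀ A φ hφ xx hx1 hx2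
  let R := MvPolynomial A F₀
  let L := FractionRing R
  let _ : MulSemiringAction A R := polyAct F₀ A
  let _ : MulSemiringAction A L := IsFractionRing.mulSemiringAction A R L
  have hact : ∀ (a : A) (p : R), a • algebraMap R L p = algebraMap R L (MvPolynomial.rename (a * ·) p) := by
    intro a p
    exact (algebraMap.coe_smul' a p L).symm
  let aff := (MvPolynomial.aeval (R := L₀)
      (fun b => (MvPolynomial.C (xx b) + ∑ c, MvPolynomial.C (xx (b * c⁻¹)) * MvPolynomial.X c : MvPolynomial A L₀)))
  let hh := MvPolynomial.eval₂Hom (HahnSeries.C : L₀ →+* HahnSeries Γ L₀) (fun a => single (γ a) (1 : L₀))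
  let j0 : R →+* HahnSeries Γ L₀ := hh.comp ((aff : MvPolynomial A L₀ →+* MvPolynomial A L₀).comp
    (MvPolynomial.map (algebraMap F₀ L₀)))
  have hj0 : Function.Injective j0 :=
    (hahn_inj γ hγ).comp ((aff_inj _ hdet xx).comp (MvPolynomial.map_injective _ (algebraMap F₀ L₀).injective))
  have hj0C : ∀ c, j0 (MvPolynomial.C c) = C (algebraMap F₀ L₀ c) := by
    intro c
    change hh (aff (MvPolynomial.map (algebraMap F₀ L₀) (MvPolynomial.C c))) = _
    rw [MvPolynomial.map_C, MvPolynomial.algHom_C, MvPolynomial.algebraMap_eq, MvPolynomial.eval₂Hom_C]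
  have hj0X : ∀ b, j0 (MvPolynomial.X b) = C (xx b) + ∑ c, single (γ c) (xx (b * c⁻¹)) := by
    intro b
    change hh (aff (MvPolynomial.map (algebraMap F₀ L₀) (MvPolynomial.X b))) = _
    rw [MvPolynomial.map_X, MvPolynomial.aeval_X]
    simp [hh, C_apply, single_mul_single]
  let j : L →+* HahnSeries Γ L₀ := IsFractionRing.lift hj0
  have hj : ∀ p, j (algebraMap R L p) = j0 p := fun p => IsFractionRing.lift_algebraMap hj0 p
  have hcoeff : ∀ b γ', γ' ≤ 0 → (j0 (MvPolynomial.X b)).coeff γ' = if γ' = 0 then xx b else 0 := by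
    intro b γ' h
    rw [hj0X, coeff_add, coeff_sum, Finset.sum_eq_zero, add_zero, C_apply]; rw [coeff_single]; congr
    · intro c _
      exact coeff_single_of_ne (h.trans_lt (hγ0 c)).ne
  refine core F₀ L₀ A φ Γ L (fun a => algebraMap R L (MvPolynomial.X a)) ?_ ?_
    ((algebraMap R L).comp MvPolynomial.C) ?_ j ?_ ?_ ?_ ?_ ?_
  · intro a b
    rw [hact, MvPolynomial.rename_X]
  · exact (IsFractionRing.injective R L).comp (MvPolynomial.X_injective)
  · intro a c
    rw [RingHom.comp_apply, hact, MvPolynomial.rename_C]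
  · intro g y
    have : j.comp (MulSemiringAction.toRingHom A L (φ g)) = (hmap Γ (g : L₀ →+* L₀)).comp j := by
      apply IsFractionRing.ringHom_ext (A := R)
      intro p
      simp only [RingHom.comp_apply, MulSemiringAction.toRingHom_apply, hact, hj]
      have hC : ∀ c : L₀, hmap Γ (g : L₀ →+* L₀) (C c) = C (g c) := by
        intro c
        exact HahnSeries.map_single (Γ := Γ) (((g : L₀ →+* L₀) : L₀ →+ L₀) : ZeroHom L₀ L₀)
      have hS : ∀ (δ : Γ) (c : L₀), hmap Γ (g : L₀ →+* L₀) (single δ c) = single δ (g c) := by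
        intro δ c
        exact HahnSeries.map_single (Γ := Γ) (((g : L₀ →+* L₀) : L₀ →+ L₀) : ZeroHom L₀ L₀)
      induction p using MvPolynomial.induction_on with
      | C c => rw [MvPolynomial.rename_C, hj0C, hC, AlgEquiv.commutes]
      | add p q hp hq => simp only [map_add, hp, hq]
      | mul_X p b hp =>
        rw [map_mul, map_mul, map_mul, map_mul, hp, MvPolynomial.rename_X, hj0X, hj0X]
        simp only [map_add, map_sum, hC, hS, hx3, mul_assoc]
    exact RingHom.congr_fun this y
  · intro c
    rw [RingHom.comp_apply, hj, hj0C]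
  · intro b
    rw [hj, mem_hV]
    intro δ hδ
    rw [hcoeff b δ hδ.le, if_neg hδ.ne]
  · intro g
    rw [hj, hcoeff _ _ le_rfl, if_pos rfl, hx1]
  · intro a ha
    rw [hj, hcoeff _ _ le_rfl, if_pos rfl, hx2 a ha]
end

section
/- Let (L, w)/(F, v) be a tame unramified finite Galois extension of valued fields with infinite residue field Fv. Then there is a primitive element x ∈ L with L = F(x), whose minimal polynomial f over F has coefficients in O_v, such that the reduction x̄ ∈ Lw is a primitive element for Lw/Fv, the reduction f̄ ∈ Fv[X] is a product of minimal polynomials of pairwise non-conjugate primitive elements of the Galois extension Lw/Fv, and f'(x) ∈ O_wˣ. -/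
open Polynomial in
theorem intPoly_mem {L Γ : Type*} [Field L] [LinearOrderedCommGroupWithZero Γ]
    (v : Valuation L Γ) (p : L[X]) :
    p ∈ (Polynomial.mapRingHom v.integer.subtype).range ↔ ∀ k, v (p.coeff k) ≤ 1 := by
  rw [Polynomial.mem_map_range]
  simp [Valuation.mem_integer_iff]

/-- avoid finitely many subsingleton conditions -/
theorem avoid_aux {ι k : Type*} [Finite ι] [Infinite k] (P : ι → k → Prop)
    (hP : ∀ i e e', P i e → P i e' → e = e') : ∃ e, ∀ i, ¬ P i e := by
  have hfin : (⋃ i, {e | P i e}).Finite :=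
    Set.finite_iUnion fun i => Set.Subsingleton.finite fun e he e' he' => hP i e e' he he'
  obtain ⟨e, he⟩ := hfin.infinite_compl.nonempty
  exact ⟨e, fun i hi => he (Set.mem_iUnion.2 ⟨i, hi⟩)⟩

section
variable {F L Γ : Type*} [Field F] [Field L] [Algebra F L] [LinearOrderedCommGroupWithZero Γ]
  (v : Valuation L Γ)

/-- elements all of whose conjugates are integral -/
def InA (F : Type*) {L Γ : Type*} [Field F] [Field L] [Algebra F L]
    [LinearOrderedCommGroupWithZero Γ] (v : Valuation L Γ) (a : L) : Prop :=
  ∀ σ : L ≃ₐ[F] L, v (σ a) ≤ 1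

theorem InA.self {v : Valuation L Γ} {a : L} (h : InA F v a) : v a ≤ 1 := h 1

theorem InA.conj {v : Valuation L Γ} {a : L} (h : InA F v a) (τ : L ≃ₐ[F] L) :
    InA F v (τ a) := fun σ => h (σ * τ)

theorem InA.add {v : Valuation L Γ} {a b : L} (h : InA F v a) (h' : InA F v b) :
    InA F v (a + b) := fun σ => by
  rw [map_add]; exact v.map_add_le (h σ) (h' σ)

theorem InA.mul {v : Valuation L Γ} {a b : L} (h : InA F v a) (h' : InA F v b) :
    InA F v (a * b) := fun σ => by
  rw [map_mul, map_mul]; exact mul_le_one' (h σ) (h' σ)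

theorem InA.base {v : Valuation L Γ} {c : F} (h : v (algebraMap F L c) ≤ 1) :
    InA F v (algebraMap F L c) := fun σ => by simpa using h

open Polynomial in
theorem InA.aeval {v : Valuation L Γ} {a : L} (h : InA F v a) (p : F[X])
    (hp : ∀ k, v (algebraMap F L (p.coeff k)) ≤ 1) : InA F v (aeval a p) := fun σ => by
  rw [aeval_eq_sum_range, map_sum]
  refine v.map_sum_le fun i _ => ?_
  rw [Algebra.smul_def]
  refine InA.mul (InA.base (hp i)) ?_ σ
  intro τ
  rw [map_pow, map_pow]
  exact pow_le_one' (h τ) i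

open Polynomial in
theorem minpoly_coeff [FiniteDimensional F L] [IsGalois F L]
    {a : L} (h : InA F v a) (k : ℕ) : v (algebraMap F L ((minpoly F a).coeff k)) ≤ 1 := by
  have hs := IsGalois.splits F a
  have hm : ((minpoly F a).map (algebraMap F L)).Monic :=
    (minpoly.monic (IsIntegral.of_finite F a)).map _
  have := hs.eq_prod_roots_of_monic hm
  rw [← Polynomial.coeff_map]
  revert k
  rw [← intPoly_mem, this]
  refine Subring.multiset_prod_mem _ _ ?_
  intro q hq
  obtain ⟨y, hy, rfl⟩ := Multiset.mem_map.1 hq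
  have hy' : Polynomial.aeval y (minpoly F a) = 0 := by
    have := (Polynomial.mem_roots hm.ne_zero).1 hy
    simpa [Polynomial.IsRoot, Polynomial.eval_map_algebraMap] using this
  obtain ⟨σ, rfl⟩ := minpoly.exists_algEquiv_of_root' (Algebra.IsAlgebraic.isAlgebraic a) hy'
  refine Subring.sub_mem _ ?_ ?_
  · exact ⟨X, by simp⟩
  · exact ⟨C ⟨σ a, h σ⟩, by simp⟩

open Polynomial in
theorem inv_aux {s : L} (hs : InA F v s) (hs1 : v s = 1) (n : ℕ) : ∀ f : F[X],
    f.natDegree ≤ n → (∀ k, v (algebraMap F L (f.coeff k)) ≤ 1) →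
    (∃ k, v (algebraMap F L (f.coeff k)) = 1) → v (aeval s f) < 1 →
    ∃ s', InA F v s' ∧ v (1 - s * s') < 1 := by
  induction n with
  | zero =>
    intro f hn hf ⟨k, hk⟩ hlt
    have := eq_C_of_natDegree_le_zero hn
    have hk0 : k = 0 := by
      by_contra h
      rw [this, coeff_C, if_neg h] at hk
      simp at hk
    subst hk0
    rw [this, aeval_C, hk] at hlt
    exact absurd hlt (lt_irrefl _)
  | succ n ih =>
    intro f hn hf ⟨k, hk⟩ hlt
    have hdec := X_mul_divX_add f
    have hd : ∀ k, v (algebraMap F L (f.divX.coeff k)) ≤ 1 := fun k => by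
      rw [coeff_divX]; exact hf _
    have hev : aeval s f = s * aeval s f.divX + algebraMap F L (f.coeff 0) := by
      conv_lhs => rw [← hdec, map_add, map_mul, aeval_X, aeval_C]
    rcases (hf 0).lt_or_eq with h0 | h0
    · refine ih f.divX ?_ hd ?_ ?_
      · rw [natDegree_divX_eq_natDegree_tsub_one]; omega
      · rcases k with _ | k
        · exact absurd hk h0.ne
        · exact ⟨k, by rwa [coeff_divX]⟩
      · have : s * aeval s f.divX = aeval s f - algebraMap F L (f.coeff 0) := by rw [hev]; ring
        have h2 : v (s * aeval s f.divX) < 1 := by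
          rw [this]; exact v.map_sub_lt hlt h0
        rwa [map_mul, hs1, one_mul] at h2
    · have hne : algebraMap F L (f.coeff 0) ≠ 0 := by
        intro h; rw [h] at h0; simp at h0
      refine ⟨algebraMap F L (-(f.coeff 0)⁻¹) * aeval s f.divX, (InA.base ?_).mul (hs.aeval _ hd), ?_⟩
      · rw [map_neg, Valuation.map_neg, map_inv₀, map_inv₀, h0, inv_one]
      · have : 1 - s * (algebraMap F L (-(f.coeff 0)⁻¹) * aeval s f.divX)
            = (algebraMap F L (f.coeff 0))⁻¹ * aeval s f := by
          rw [hev, map_neg, map_inv₀]; field_simp; ring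
        rw [this, map_mul, map_inv₀, h0, inv_one, one_mul]
        exact hlt

theorem inv_mod [FiniteDimensional F L] [IsGalois F L] {s : L} (hs : InA F v s) (hs1 : v s = 1) :
    ∃ s', InA F v s' ∧ v (1 - s * s') < 1 := by
  refine inv_aux v hs hs1 _ (minpoly F s) le_rfl (minpoly_coeff v hs)
    ⟨(minpoly F s).natDegree, ?_⟩ ?_
  · rw [Polynomial.coeff_natDegree, (minpoly.monic (IsIntegral.of_finite F s)).leadingCoeff]
    simp
  · simp

/-- Every element of the valuation ring is a fraction of elements of `A`,
with denominator a unit at `v`. -/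
theorem frac [FiniteDimensional F L] {k : Type*} [Infinite k] (c : k → F)
    (hc : ∀ e, v (algebraMap F L (c e)) ≤ 1)
    (hcc : ∀ e e', e ≠ e' → v (algebraMap F L (c e) - algebraMap F L (c e')) = 1)
    {z : L} (hz : v z ≤ 1) : ∃ s, InA F v s ∧ v s = 1 ∧ InA F v (s * z) := by
  obtain ⟨e, he⟩ := avoid_aux (ι := L ≃ₐ[F] L) (k := k)
    (fun σ e => v (σ z - algebraMap F L (c e)) < 1) (by
      intro σ e e' h h'
      by_contra hne
      have := hcc e e' hne
      have h2 : algebraMap F L (c e) - algebraMap F L (c e')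
        = (σ z - algebraMap F L (c e')) - (σ z - algebraMap F L (c e)) := by ring
      rw [h2] at this
      exact absurd this (v.map_sub_lt h' h).ne)
  have hge : ∀ σ : L ≃ₐ[F] L, 1 ≤ v (σ z - algebraMap F L (c e)) := fun σ => not_lt.1 (he σ)
  have hne : z - algebraMap F L (c e) ≠ 0 := by
    intro h
    have := hge 1
    simp [h] at this
  have hsA : InA F v (z - algebraMap F L (c e))⁻¹ := fun σ => by
    rw [map_inv₀, map_inv₀, map_sub, AlgEquiv.commutes]
    exact inv_le_one_of_one_le₀ (hge σ)
  refine ⟨_, hsA, ?_, ?_⟩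
  · rw [map_inv₀, le_antisymm (v.map_sub_le hz (hc e)) (hge 1), inv_one]
  · have : (z - algebraMap F L (c e))⁻¹ * z
      = algebraMap F L 1 + (z - algebraMap F L (c e))⁻¹ * algebraMap F L (c e) := by
      rw [map_one]; field_simp; ring
    rw [this]
    exact (InA.base (by simp)).add (hsA.mul (InA.base (hc e)))

theorem surj [FiniteDimensional F L] [IsGalois F L] {k : Type*} [Infinite k] (c : k → F)
    (hc : ∀ e, v (algebraMap F L (c e)) ≤ 1)
    (hcc : ∀ e e', e ≠ e' → v (algebraMap F L (c e) - algebraMap F L (c e')) = 1)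
    {z : L} (hz : v z ≤ 1) : ∃ a, InA F v a ∧ v (z - a) < 1 := by
  obtain ⟨s, hs, hs1, hsz⟩ := frac v c hc hcc hz
  obtain ⟨t, ht, hst⟩ := inv_mod v hs hs1
  refine ⟨s * z * t, hsz.mul ht, ?_⟩
  rw [show z - s * z * t = (1 - s * t) * z by ring, map_mul]
  exact mul_lt_one_of_lt_of_le hst hz

theorem fix_aux [FiniteDimensional F L] {k : Type*} [Infinite k] (c : k → F)
    (hc : ∀ e, v (algebraMap F L (c e)) ≤ 1)
    (hcc : ∀ e e', e ≠ e' → v (algebraMap F L (c e) - algebraMap F L (c e')) = 1)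
    (ρ : L ≃ₐ[F] L) (hρ : ∀ b, InA F v b → v (ρ b - b) < 1)
    {z : L} (hz : v z ≤ 1) : v (ρ z) ≤ 1 ∧ v (ρ z - z) < 1 := by
  obtain ⟨s, hs, hs1, hsz⟩ := frac v c hc hcc hz
  have h1 := hρ s hs
  have h2 := hρ _ hsz
  have hs' : v (ρ s) = 1 := by
    have : v (s + (ρ s - s)) = v s := v.map_add_eq_of_lt_left (by rwa [hs1])
    rw [← hs1, ← this]; congr 1; ring
  have h3 : v (ρ z - z) < 1 := by
    have e : ρ s * (ρ z - z) = (ρ (s * z) - s * z) - (ρ s - s) * z := by rw [map_mul]; ring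
    have : v (ρ s * (ρ z - z)) < 1 := by
      rw [e]
      refine v.map_sub_lt h2 ?_
      rw [map_mul]; exact mul_lt_one_of_lt_of_le h1 hz
    rwa [map_mul, hs', one_mul] at this
  refine ⟨?_, h3⟩
  rw [show ρ z = z + (ρ z - z) by ring]
  exact v.map_add_le hz h3.le

theorem sep_aux [FiniteDimensional F L] {k : Type*} [Infinite k] (c : k → F)
    (hc : ∀ e, v (algebraMap F L (c e)) ≤ 1)
    (hcc : ∀ e e', e ≠ e' → v (algebraMap F L (c e) - algebraMap F L (c e')) = 1)
    (htame : ∀ σ : L ≃ₐ[F] L, (∀ x : L, v x ≤ 1 ↔ v (σ x) ≤ 1) →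
      (∀ x : L, v x ≤ 1 → v (σ x - x) < 1) → σ = 1)
    (σ τ : L ≃ₐ[F] L) (hne : σ ≠ τ) : ∃ a, InA F v a ∧ v (σ a - τ a) = 1 := by
  by_contra! hcon
  have key : ∀ a, InA F v a → v (σ a - τ a) < 1 := fun a ha =>
    lt_of_le_of_ne (v.map_sub_le (ha σ) (ha τ)) (hcon a ha)
  have k1 : ∀ b, InA F v b → v ((σ * τ⁻¹) b - b) < 1 := fun b hb => by
    have := key _ (hb.conj τ⁻¹)
    rwa [← AlgEquiv.mul_apply, ← AlgEquiv.mul_apply τ, mul_inv_cancel, AlgEquiv.one_apply] at this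
  have k2 : ∀ b, InA F v b → v ((τ * σ⁻¹) b - b) < 1 := fun b hb => by
    have := key _ (hb.conj σ⁻¹)
    rw [← AlgEquiv.mul_apply, ← AlgEquiv.mul_apply τ, mul_inv_cancel, AlgEquiv.one_apply] at this
    rwa [v.map_sub_swap] at this
  have := htame (σ * τ⁻¹) (fun x => ⟨fun h => (fix_aux v c hc hcc _ k1 h).1, fun h => by
    have := (fix_aux v c hc hcc _ k2 h).1
    rwa [← AlgEquiv.mul_apply, show τ * σ⁻¹ * (σ * τ⁻¹) = 1 by group, AlgEquiv.one_apply] at this⟩)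
    (fun x h => (fix_aux v c hc hcc _ k1 h).2)
  exact hne (mul_inv_eq_one.1 this)

theorem exists_gen [FiniteDimensional F L] {k : Type*} [Infinite k] (c : k → F)
    (hc : ∀ e, v (algebraMap F L (c e)) ≤ 1)
    (hcc : ∀ e e', e ≠ e' → v (algebraMap F L (c e) - algebraMap F L (c e')) = 1)
    (hsep : ∀ σ τ : L ≃ₐ[F] L, σ ≠ τ → ∃ a, InA F v a ∧ v (σ a - τ a) = 1)
    (s : Finset ((L ≃ₐ[F] L) × (L ≃ₐ[F] L))) :
    ∃ x, InA F v x ∧ ∀ q ∈ s, q.1 ≠ q.2 → v (q.1 x - q.2 x) = 1 := by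
  classical
  induction s using Finset.induction_on with
  | empty => exact ⟨algebraMap F L 1, InA.base (by simp), by simp⟩
  | insert p s hp ih =>
    obtain ⟨x, hx, hxs⟩ := ih
    by_cases hpp : p.1 = p.2
    · refine ⟨x, hx, fun q hq hqq => ?_⟩
      rcases Finset.mem_insert.1 hq with rfl | hq
      · exact absurd hpp hqq
      · exact hxs q hq hqq
    obtain ⟨y, hy, hyp⟩ := hsep _ _ hpp
    -- choose `y + c x` or `x + c y`
    obtain ⟨e, he⟩ := avoid_aux (ι := (L ≃ₐ[F] L) × (L ≃ₐ[F] L)) (k := k)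
      (fun q e => (v (q.1 x - q.2 x) = 1 ∨ v (q.1 y - q.2 y) = 1) ∧
        v ((q.1 x - q.2 x) + algebraMap F L (c e) * (q.1 y - q.2 y)) < 1) (by
      rintro q e e' ⟨h0, h⟩ ⟨-, h'⟩
      by_contra hne
      have hd := hcc e e' hne
      have h2 := v.map_sub_lt h h'
      rw [show ((q.1 x - q.2 x) + algebraMap F L (c e) * (q.1 y - q.2 y)) -
        ((q.1 x - q.2 x) + algebraMap F L (c e') * (q.1 y - q.2 y)) =
        (algebraMap F L (c e) - algebraMap F L (c e')) * (q.1 y - q.2 y) by ring,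
        map_mul, hd, one_mul] at h2
      rcases h0 with h0 | h0
      · have h3 : v (algebraMap F L (c e) * (q.1 y - q.2 y)) < 1 := by
          rw [map_mul, mul_comm]; exact mul_lt_one_of_lt_of_le h2 (hc e)
        have h4 := v.map_sub_lt h h3
        rw [add_sub_cancel_right, h0] at h4
        exact lt_irrefl _ h4
      · exact h2.ne h0)
    have hw : InA F v (x + algebraMap F L (c e) * y) := hx.add ((InA.base (hc e)).mul hy)
    have main : ∀ q : (L ≃ₐ[F] L) × (L ≃ₐ[F] L),
        (v (q.1 x - q.2 x) = 1 ∨ v (q.1 y - q.2 y) = 1) →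
        v (q.1 (x + algebraMap F L (c e) * y) - q.2 (x + algebraMap F L (c e) * y)) = 1 := by
      intro q hq
      refine le_antisymm (v.map_sub_le (hw _) (hw _)) (not_lt.1 fun hlt => he q ⟨hq, ?_⟩)
      convert hlt using 2
      simp only [map_add, map_mul, AlgEquiv.commutes]; ring
    refine ⟨_, hw, fun q hq hqq => main q ?_⟩
    rcases Finset.mem_insert.1 hq with rfl | hq
    · exact Or.inr hyp
    · exact Or.inl (hxs q hq hqq)

open Polynomial in
/-- `A = O[x]`. -/
theorem interp [FiniteDimensional F L] [IsGalois F L] {x : L} (hx : InA F v x)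
    (hsep : ∀ σ τ : L ≃ₐ[F] L, σ ≠ τ → v (σ x - τ x) = 1)
    (hprim : IntermediateField.adjoin F {x} = ⊤) {a : L} (ha : InA F v a) :
    ∃ p : F[X], (∀ k, v (algebraMap F L (p.coeff k)) ≤ 1) ∧ aeval x p = a := by
  classical
  have hint := IsIntegral.of_finite F x
  have : a ∈ Algebra.adjoin F {x} := by
    rw [← IntermediateField.adjoin_simple_toSubalgebra_of_isAlgebraic hint.isAlgebraic, hprim]; trivial
  rw [Algebra.adjoin_singleton_eq_range_aeval] at this
  obtain ⟨p₀, hp₀⟩ := this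
  have hm := minpoly.monic hint
  set p := p₀ %ₘ minpoly F x with hp
  have hpa : aeval x p = a := by
    rw [hp, aeval_modByMonic_eq_self_of_root (minpoly.aeval F x)]; exact hp₀
  have hdeg : p.degree < Fintype.card (L ≃ₐ[F] L) := by
    have h1 := degree_modByMonic_lt p₀ hm
    rw [(Field.primitive_element_iff_minpoly_degree_eq F x).1 hprim,
      ← IsGalois.card_aut_eq_finrank, Nat.card_eq_fintype_card] at h1
    exact h1
  refine ⟨p, ?_, hpa⟩
  have hinj : Set.InjOn (fun σ : L ≃ₐ[F] L => σ x) ((Finset.univ : Finset (L ≃ₐ[F] L)) : Set _) := by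
    intro σ _ τ _ h
    by_contra hne
    have := hsep σ τ hne
    simp only at h
    rw [h] at this
    simp at this
  have hI := Lagrange.eq_interpolate_of_eval_eq (s := Finset.univ)
    (v := fun σ : L ≃ₐ[F] L => σ x) (f := p.map (algebraMap F L)) (fun σ => σ a) hinj
    (by simpa using hdeg) (by
      intro σ _
      rw [eval_map_algebraMap, aeval_algHom_apply, hpa])
  intro k
  rw [← coeff_map]
  revert k
  rw [← intPoly_mem, hI, Lagrange.interpolate_apply]
  have hC : ∀ y : L, v y ≤ 1 → C y ∈ (Polynomial.mapRingHom v.integer.subtype).range :=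
    fun y hy => ⟨C ⟨y, hy⟩, by simp⟩
  refine Subring.sum_mem _ fun σ _ => Subring.mul_mem _ (hC _ (ha σ)) ?_
  refine Subring.prod_mem _ fun τ hτ => Subring.mul_mem _ (hC _ ?_) (Subring.sub_mem _ ?_ (hC _ (hx τ)))
  · rw [map_inv₀, hsep σ τ (Finset.ne_of_mem_erase hτ).symm, inv_one]
  · exact ⟨X, by simp⟩

open Polynomial in
theorem deriv_unit [FiniteDimensional F L] [IsGalois F L] {x : L}
    (hsep : ∀ σ τ : L ≃ₐ[F] L, σ ≠ τ → v (σ x - τ x) = 1) :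
    v (aeval x (derivative (minpoly F x))) = 1 := by
  classical
  have hs := IsGalois.splits F x
  have hm : ((minpoly F x).map (algebraMap F L)).Monic :=
    (minpoly.monic (IsIntegral.of_finite F x)).map _
  have hroot : x ∈ ((minpoly F x).map (algebraMap F L)).roots := by
    rw [mem_roots hm.ne_zero]; simp [IsRoot, eval_map_algebraMap]
  have hnd : ((minpoly F x).map (algebraMap F L)).roots.Nodup :=
    nodup_roots (Polynomial.Separable.map (Algebra.IsSeparable.isSeparable F x))
  have h := hs.eval_root_derivative hm hroot
  rw [derivative_map, eval_map_algebraMap] at h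
  rw [h, map_multiset_prod, Multiset.map_map]
  refine Multiset.prod_eq_one fun g hg => ?_
  obtain ⟨y, hy, rfl⟩ := Multiset.mem_map.1 hg
  obtain ⟨hyx, hy⟩ := (hnd.mem_erase_iff).1 hy
  have hy' : Polynomial.aeval y (minpoly F x) = 0 := by
    have := (Polynomial.mem_roots hm.ne_zero).1 hy
    simpa [Polynomial.IsRoot, Polynomial.eval_map_algebraMap] using this
  obtain ⟨σ, rfl⟩ := minpoly.exists_algEquiv_of_root' (Algebra.IsAlgebraic.isAlgebraic x) hy'
  exact hsep 1 σ (by rintro rfl; exact hyx rfl)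

end


set_option maxHeartbeats 1000000 in
theorem stmt10 {F L : Type*} [Field F] [Field L] [Algebra F L]
    [FiniteDimensional F L] [IsGalois F L]
    (W : ValuationSubring L) (O : ValuationSubring F)
    (hO : O = W.comap (algebraMap F L))
    -- the extension is tame unramified: trivial inertia subgroup:
    (htame : ∀ σ : L ≃ₐ[F] L, (∀ x : L, x ∈ W ↔ σ x ∈ W) →
      (∀ x : L, x ∈ W → W.valuation (σ x - x) < 1) → σ = 1)
    -- the residue field of `(F, v)` is infinite:
    (hinf : Infinite (IsLocalRing.ResidueField ↥O)) :
    -- there is a primitive element `x` for `L/F` with minimal polynomial `f` over `O`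
    -- such that the reduction of `x` is primitive for the residue extension, the
    -- reduction of `f` is the product of the minimal polynomials of pairwise
    -- non-conjugate primitive elements (in particular it is separable), and
    -- `f'(x)` is a unit of `O_w`:
    ∃ x : L, IntermediateField.adjoin F {x} = ⊤ ∧
      (∀ k : ℕ, (minpoly F x).coeff k ∈ O) ∧
      -- distinct roots of `f` have distinct (unit-distance) reductions, i.e. the
      -- reduction of `f` is separable:
      (∀ σ τ : L ≃ₐ[F] L, σ x ≠ τ x → W.valuation (σ x - τ x) = 1) ∧
      -- the reduction of every root of `f` is a primitive element for the residue
      -- extension `Lw/Fv`: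
      (∀ σ : L ≃ₐ[F] L, ∀ z : L, z ∈ W → ∃ p : Polynomial F,
        (∀ k : ℕ, p.coeff k ∈ O) ∧ W.valuation (z - Polynomial.aeval (σ x) p) < 1) ∧
      -- `f'(x)` is a unit of the valuation ring of `w`:
      W.valuation (Polynomial.aeval x (Polynomial.derivative (minpoly F x))) = 1 := by
  have hmem : ∀ c : F, c ∈ O ↔ W.valuation (algebraMap F L c) ≤ 1 := fun c => by
    rw [hO, ValuationSubring.mem_comap, ValuationSubring.valuation_le_one_iff]
  have hsurj : Function.Surjective (IsLocalRing.residue ↥O) := IsLocalRing.residue_surjective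
  choose c₀ hc₀ using hsurj
  let c : IsLocalRing.ResidueField ↥O → F := fun e => (c₀ e : F)
  have hc : ∀ e, W.valuation (algebraMap F L (c e)) ≤ 1 := fun e => (hmem _).1 (c₀ e).2
  have hcc : ∀ e e', e ≠ e' →
      W.valuation (algebraMap F L (c e) - algebraMap F L (c e')) = 1 := by
    intro e e' hne
    have hu : IsUnit (c₀ e - c₀ e') := by
      rw [← IsLocalRing.residue_ne_zero_iff_isUnit, map_sub, hc₀, hc₀]
      exact sub_ne_zero.2 hne
    obtain ⟨u, hu⟩ := hu.exists_right_inv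
    have h1 : (c e - c e') * (u : F) = 1 := congrArg Subtype.val hu
    have h2 : W.valuation (algebraMap F L (c e) - algebraMap F L (c e')) *
        W.valuation (algebraMap F L u) = 1 := by
      rw [← map_sub, ← map_mul, ← map_mul, h1, map_one, map_one]
    have h3 := (W.valuation).map_sub_le (hc e) (hc e')
    refine le_antisymm h3 (not_lt.1 fun hlt => ?_)
    exact (mul_lt_one_of_lt_of_le hlt ((hmem _).1 u.2)).ne h2
  have hsep := sep_aux W.valuation c hc hcc (fun σ h h' => htame σ
    (fun x => by simpa only [ValuationSubring.valuation_le_one_iff] using h x)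
    (fun x hx => h' x ((W.valuation_le_one_iff x).2 hx)))
  obtain ⟨x, hx, hxs⟩ := exists_gen W.valuation c hc hcc hsep Finset.univ
  have hxs : ∀ σ τ : L ≃ₐ[F] L, σ ≠ τ → W.valuation (σ x - τ x) = 1 :=
    fun σ τ h => hxs (σ, τ) (Finset.mem_univ _) h
  have hprim : IntermediateField.adjoin F {x} = ⊤ := by
    rw [Field.primitive_element_iff_algHom_eq_of_eval' F L (fun y => IsGalois.splits F y)]
    intro φ ψ h
    by_contra hne
    have h1 := hxs ((Algebra.IsAlgebraic.algEquivEquivAlgHom F L).symm φ)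
      ((Algebra.IsAlgebraic.algEquivEquivAlgHom F L).symm ψ) (fun h => hne (Equiv.injective _ h))
    have e1 : ∀ φ : L →ₐ[F] L, (Algebra.IsAlgebraic.algEquivEquivAlgHom F L).symm φ x = φ x :=
      fun φ => rfl
    rw [e1, e1] at h1
    simp only at h
    rw [h] at h1
    simp at h1
  refine ⟨x, hprim, fun k => (hmem _).2 (minpoly_coeff _ hx k), ?_, ?_, deriv_unit _ hxs⟩
  · intro σ τ h
    exact hxs σ τ (by rintro rfl; exact h rfl)
  · intro σ z hz
    obtain ⟨a, ha, hza⟩ := surj W.valuation c hc hcc ((W.valuation_le_one_iff z).2 hz)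
    obtain ⟨p, hp, hpa⟩ := interp W.valuation hx hxs hprim (ha.conj σ⁻¹)
    refine ⟨p, fun k => (hmem _).2 (hp k), ?_⟩
    rw [Polynomial.aeval_algHom_apply, hpa, ← AlgEquiv.mul_apply, mul_inv_cancel,
      AlgEquiv.one_apply]
    exact hza
end

section
/- Let (F, v) be a non-trivially valued field, L/F a finite Galois extension, K/F a subextension with [K : F] = r, and assume v has at most r prolongations to L. Then K is a decomposition subfield of L/F with respect to v if and only if there is a monic polynomial h(X) = X^r + h_{r−1}X^{r−1} + ⋯ + h₀ ∈ F[X], irreducible over F, with a root in K, such that h₀, …, h_{r−2} and 1 + h_{r−1} all lie in the maximal ideal M_v. -/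
namespace Stmt11Aux
open Polynomial

lemma val_lt_iff {L : Type*} [Field L] (A : ValuationSubring L) (x : L) :
    A.valuation x < 1 ↔ x = 0 ∨ x⁻¹ ∉ A := by
  by_cases hx : x = 0
  · simp [hx]
  · rw [← A.valuation_le_one_iff, map_inv₀, not_le]
    have : 0 < A.valuation x := by simpa [zero_lt_iff] using hx
    simp [hx, one_lt_inv₀ this]

lemma val_comap {F L : Type*} [Field F] [Field L] [Algebra F L] {O : ValuationSubring F}
    {W : ValuationSubring L} (hW : W.comap (algebraMap F L) = O) (x : F) :
    O.valuation x < 1 ↔ W.valuation (algebraMap F L x) < 1 := by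
  subst hW
  rw [val_lt_iff, val_lt_iff]
  simp [ValuationSubring.mem_comap]

lemma exists_prol {F L : Type*} [Field F] [Field L] [Algebra F L] (O : ValuationSubring F) :
    ∃ W : ValuationSubring L, W.comap (algebraMap F L) = O := by
  obtain ⟨W, h1, h2⟩ := ((O.toLocalSubring).map (algebraMap F L)).exists_le_valuationSubring
  refine ⟨W, ?_⟩
  ext x
  rw [ValuationSubring.mem_comap]
  constructor
  · intro hx
    by_contra hxO
    have hxi : x⁻¹ ∈ O := (O.mem_or_inv_mem x).resolve_left hxO
    have hx0 : x ≠ 0 := by rintro rfl; exact hxO O.zero_mem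
    have hm : algebraMap F L x⁻¹ ∈ ((O.toLocalSubring).map (algebraMap F L)).toSubring :=
      ⟨x⁻¹, hxi, rfl⟩
    have hu : IsUnit (⟨_, hm⟩ : ((O.toLocalSubring).map (algebraMap F L)).toSubring) := by
      apply h2.1
      refine IsUnit.of_mul_eq_one (⟨algebraMap F L x, hx⟩ : W.toLocalSubring.toSubring) ?_
      apply Subtype.ext
      change algebraMap F L x⁻¹ * algebraMap F L x = 1
      rw [← map_mul, inv_mul_cancel₀ hx0, map_one]
    obtain ⟨⟨b, z, hz, hzb⟩, hb⟩ := hu.exists_right_inv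
    have hb' : algebraMap F L x⁻¹ * b = 1 := congrArg Subtype.val hb
    rw [← hzb] at hb'
    have h3 : x⁻¹ * z = 1 := by
      apply (algebraMap F L).injective
      rw [map_mul, map_one]; exact hb'
    have : z = x := by
      field_simp at h3; exact h3
    exact hxO (this ▸ hz)
  · intro hx
    exact h1 ⟨x, hx, rfl⟩

section approx
variable {L : Type*} [Field L]

lemma val_one_of_sub (W : ValuationSubring L) {x : L} (h : W.valuation (x - 1) < 1) :
    W.valuation x = 1 := by
  have := Valuation.map_add_eq_of_lt_right W.valuation (x := x - 1) (y := 1) (by simpa using h)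
  simpa using this

lemma val_sub_mul (W : ValuationSubring L) {x y : L} (hx : W.valuation (x - 1) < 1)
    (hy : W.valuation (y - 1) < 1) : W.valuation (x * y - 1) < 1 := by
  have : x * y - 1 = x * (y - 1) + (x - 1) := by ring
  rw [this]
  apply Valuation.map_add_lt _ _ hx
  rw [map_mul, val_one_of_sub W hx, one_mul]; exact hy

lemma val_sub_pow (W : ValuationSubring L) {x : L} (hx : W.valuation (x - 1) < 1) (n : ℕ) :
    W.valuation (x ^ n - 1) < 1 := by
  induction n with
  | zero => simp
  | succ n ih => rw [pow_succ]; exact val_sub_mul W ih hx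

lemma approxD (T : Finset (ValuationSubring L)) (c : L) :
    ∃ m : ℕ, 0 < m ∧ ∀ W ∈ T, W.valuation c = 1 →
      W.valuation (c ^ m * c ^ m - c ^ m + 1) = 1 := by
  classical
  let n : ValuationSubring L → ℕ := fun W =>
    if h : ∃ n : ℕ, 0 < n ∧ W.valuation (c ^ n - 1) < 1 then h.choose else 1
  have hn : ∀ W, 0 < n W := by
    intro W
    by_cases h : ∃ n : ℕ, 0 < n ∧ W.valuation (c ^ n - 1) < 1
    · simp only [n, dif_pos h]; exact h.choose_spec.1
    · simp only [n, dif_neg h]; exact one_pos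
  refine ⟨∏ W ∈ T, n W, Finset.prod_pos fun W _ => hn W, fun W hW hc => ?_⟩
  set m := ∏ W ∈ T, n W with hm
  have hm0 : 0 < m := Finset.prod_pos fun W _ => hn W
  by_contra hne
  set u := c ^ m with hu
  have hu1 : W.valuation u = 1 := by rw [hu, map_pow, hc, one_pow]
  have hle : W.valuation (u * u - u + 1) ≤ 1 := by
    apply Valuation.map_add_le _ _ (by simp)
    refine Valuation.map_sub_le _ ?_ hu1.le
    rw [map_mul, hu1, one_mul]
  have hlt := lt_of_le_of_ne hle hne
  have h6 : W.valuation (u ^ 6 - 1) < 1 := by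
    have : u ^ 6 - 1 = (u * u - u + 1) * ((u + 1) * (u ^ 3 - 1)) := by ring
    rw [this, map_mul]
    apply mul_lt_one_of_lt_of_le hlt
    rw [map_mul]
    apply mul_le_one'
    · exact Valuation.map_add_le _ hu1.le (by simp)
    · exact Valuation.map_sub_le _ (by simp [hu1]) (by simp)
  have hex : ∃ n : ℕ, 0 < n ∧ W.valuation (c ^ n - 1) < 1 :=
    ⟨m * 6, by positivity, by rw [pow_mul]; exact h6⟩
  have hnW : W.valuation (c ^ n W - 1) < 1 := by
    simp only [n, dif_pos hex]; exact hex.choose_spec.2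
  obtain ⟨k, hk⟩ : n W ∣ m := Finset.dvd_prod_of_mem n hW
  have hu2 : W.valuation (u - 1) < 1 := by
    rw [hu, hk, pow_mul]; exact val_sub_pow W hnW k
  apply hne
  have : u * u - u + 1 = u * (u - 1) + 1 := by ring
  rw [this]
  apply val_one_of_sub
  rw [add_sub_cancel_right, map_mul, hu1, one_mul]; exact hu2

lemma approxE (T : Finset (ValuationSubring L)) {W W' : ValuationSubring L} (h1 : ¬ W ≤ W') (h2 : ¬ W' ≤ W) :
    ∃ x : L, (∀ V ∈ T, V.valuation x ≤ 1) ∧ W.valuation (x - 1) < 1 ∧ W'.valuation x < 1 := by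
  obtain ⟨a, haW, haW'⟩ := SetLike.not_le_iff_exists.1 h1
  obtain ⟨b, hbW', hbW⟩ := SetLike.not_le_iff_exists.1 h2
  rw [← ValuationSubring.valuation_le_one_iff] at haW haW' hbW hbW'
  rw [not_le] at haW' hbW
  have key : ∃ c : L, 1 < W.valuation c ∧ W'.valuation c < 1 := by
    refine ⟨b / a, ?_, ?_⟩
    · have : a ≠ 0 := by rintro rfl; simp at haW'
      rw [map_div₀, one_lt_div₀ (by simpa [zero_lt_iff] using this)]
      exact haW.trans_lt hbW
    · rw [map_div₀, div_lt_one₀ (zero_lt_one.trans haW')]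
      exact hbW'.trans_lt haW'
  obtain ⟨c, hc, hc'⟩ := key
  obtain ⟨m, hm, H⟩ := approxD T c
  set u := c ^ m with hu
  have hbig : ∀ V : ValuationSubring L, 1 < V.valuation c →
      V.valuation (u * u / (u * u - u + 1) - 1) < 1 := by
    intro V hV
    have hu1 : 1 < V.valuation u := by rw [hu, map_pow]; exact one_lt_pow₀ hV hm.ne'
    have huu : V.valuation u < V.valuation (u * u) := by
      rw [map_mul]; exact lt_mul_of_one_lt_left (zero_lt_one.trans hu1) hu1
    have hd : V.valuation (u * u - u + 1) = V.valuation (u * u) := by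
      have e : u * u - u + 1 = u * u + (1 - u) := by ring
      rw [e]
      apply Valuation.map_add_eq_of_lt_left
      apply Valuation.map_sub_lt _ _ huu
      rw [map_one]; exact hu1.trans huu
    have hpos : 0 < V.valuation (u * u) := (zero_lt_one.trans hu1).trans huu
    have hd0 : u * u - u + 1 ≠ 0 := by
      rw [← V.valuation.ne_zero_iff, hd]; exact hpos.ne'
    have e : u * u / (u * u - u + 1) - 1 = (u - 1) / (u * u - u + 1) := by
      rw [div_sub_one hd0]; congr 1; ring
    rw [e, map_div₀, hd, div_lt_one₀ hpos]
    apply Valuation.map_sub_lt _ huu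
    rw [map_one]; exact hu1.trans huu
  have hsmall : ∀ V : ValuationSubring L, V.valuation c < 1 →
      V.valuation (u * u / (u * u - u + 1)) < 1 := by
    intro V hV
    have hu1 : V.valuation u < 1 := by rw [hu, map_pow]; exact pow_lt_one₀ zero_le hV hm.ne'
    have huu : V.valuation (u * u) < 1 := by rw [map_mul]; exact mul_lt_one_of_lt_of_le hu1 hu1.le
    have hd : V.valuation (u * u - u + 1) = 1 := by
      apply val_one_of_sub
      rw [add_sub_cancel_right]
      exact Valuation.map_sub_lt _ huu hu1
    rw [map_div₀, hd, div_one]; exact huu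
  refine ⟨u * u / (u * u - u + 1), ?_, hbig W hc, hsmall W' hc'⟩
  intro V hV
  rcases lt_trichotomy (V.valuation c) 1 with h | h | h
  · exact (hsmall V h).le
  · rw [map_div₀, H V hV h]; simp [hu, h]
  · exact (val_one_of_sub V (hbig V h)).le

lemma approxF (T : Finset (ValuationSubring L)) (W : ValuationSubring L)
    (hT : ∀ V ∈ T, ¬ W ≤ V ∧ ¬ V ≤ W) :
    ∃ x : L, W.valuation (x - 1) < 1 ∧ ∀ V ∈ T, V.valuation x < 1 := by
  classical
  have : ∀ V ∈ T, ∃ x : L, (∀ V ∈ insert W T, V.valuation x ≤ 1) ∧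
      W.valuation (x - 1) < 1 ∧ V.valuation x < 1 := fun V hV =>
    approxE (insert W T) (hT V hV).1 (hT V hV).2
  choose! x hx1 hx2 hx3 using this
  refine ⟨∏ V ∈ T, x V, ?_, ?_⟩
  · exact Finset.prod_induction x (fun z => W.valuation (z - 1) < 1)
      (fun a b ha hb => val_sub_mul W ha hb) (by simp) hx2
  · intro V hV
    rw [← Finset.mul_prod_erase T x hV, map_mul]
    apply mul_lt_one_of_lt_of_le (hx3 V hV)
    rw [map_prod]
    exact Finset.prod_le_one' fun V' hV' => hx1 V' (Finset.mem_of_mem_erase hV') V (by simp [hV])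
end approx

section poly
variable {F L : Type*} [Field F] [Field L] [Algebra F L]

/-- The finset of roots in `L`. -/
noncomputable def rts (L : Type*) [Field L] [Algebra F L] (h : F[X]) : Finset L :=
  open Classical in (h.map (algebraMap F L)).roots.toFinset

lemma prod_rts [IsGalois F L] {h : F[X]} (hm : h.Monic) (hi : Irreducible h) {y : L}
    (hy : aeval y h = 0) : h.map (algebraMap F L) = ∏ a ∈ rts L h, (X - C a) := by
  classical
  have hmin : h = minpoly F y := minpoly.eq_of_irreducible_of_monic hi hy hm
  have hs : (h.map (algebraMap F L)).Splits := by
    rw [hmin]; exact Normal.splits inferInstance y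
  have hsep : h.Separable := by rw [hmin]; exact IsGalois.separable F y
  have hnd : (h.map (algebraMap F L)).roots.Nodup := nodup_roots hsep.map
  conv_lhs => rw [hs.eq_prod_roots_of_monic (hm.map _)]
  rw [rts, Finset.prod, Multiset.toFinset_val, hnd.dedup]

lemma mem_rts [IsGalois F L] {h : F[X]} (hm : h.Monic) (a : L) :
    a ∈ rts L h ↔ aeval a h = 0 := by
  classical
  rw [rts, Multiset.mem_toFinset, mem_roots (hm.map _).ne_zero, IsRoot.def, eval_map_algebraMap]

/-- Lift of the product of linear factors. -/
noncomputable def liftQ (W : ValuationSubring L) (s : Finset L) (hs : ∀ a ∈ s, a ∈ W) : W[X] :=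
  ∏ a ∈ s.attach, (X - C (⟨a.1, hs a.1 a.2⟩ : W))

lemma liftQ_map (W : ValuationSubring L) (s : Finset L) (hs : ∀ a ∈ s, a ∈ W) :
    (liftQ W s hs).map (algebraMap W L) = ∏ a ∈ s, (X - C a) := by
  rw [liftQ, Polynomial.map_prod, ← Finset.prod_attach s]
  refine Finset.prod_congr rfl fun a _ => ?_
  simp only [Polynomial.map_sub, map_X, map_C]
  rfl

lemma coeff_eq {W : ValuationSubring L} {h : F[X]} {Q : W[X]}
    (hQ : Q.map (algebraMap W L) = h.map (algebraMap F L)) (i : ℕ) :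
    ((Q.coeff i : W) : L) = algebraMap F L (h.coeff i) := by
  have := congrArg (fun p => coeff p i) hQ
  simp only [coeff_map] at this
  exact this

lemma res_eq_zero {W : ValuationSubring L} (a : W) :
    IsLocalRing.residue W a = 0 ↔ W.valuation (a : L) < 1 := by
  rw [IsLocalRing.residue_eq_zero_iff, ValuationSubring.valuation_lt_one_iff]

lemma coeff_cond {O : ValuationSubring F} {W : ValuationSubring L}
    (hW : W.comap (algebraMap F L) = O) {h : F[X]} {r : ℕ} (hr : 0 < r)
    (hm : h.Monic) (hd : h.natDegree = r) {Q : W[X]}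
    (hQ : Q.map (algebraMap W L) = h.map (algebraMap F L)) :
    ((∀ i : ℕ, i + 2 ≤ r → O.valuation (h.coeff i) < 1) ∧
      O.valuation (1 + h.coeff (r - 1)) < 1) ↔
    Q.map (IsLocalRing.residue W) = (X - 1) * X ^ (r - 1) := by
  obtain ⟨k, rfl⟩ : ∃ k, r = k + 1 := ⟨r - 1, by omega⟩
  have e : ((X - 1) * X ^ (k + 1 - 1) : (IsLocalRing.ResidueField W)[X]) = X ^ (k + 1) - X ^ k := by
    rw [Nat.add_sub_cancel]; ring
  have h1 : ∀ i, O.valuation (h.coeff i) < 1 ↔ IsLocalRing.residue W (Q.coeff i) = 0 := by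
    intro i
    rw [val_comap hW, res_eq_zero, coeff_eq hQ]
  have h2 : ∀ i, O.valuation (1 + h.coeff i) < 1 ↔ IsLocalRing.residue W (Q.coeff i) = -1 := by
    intro i
    rw [val_comap hW, map_add, map_one, ← coeff_eq hQ, eq_neg_iff_add_eq_zero, add_comm,
      ← map_one (IsLocalRing.residue W), ← map_add, res_eq_zero]
    rfl
  have h3 : Q.coeff (k + 1) = 1 := by
    apply Subtype.ext
    rw [coeff_eq hQ, ← hd, hm.coeff_natDegree, map_one]; rfl
  have h4 : ∀ i, k + 1 < i → Q.coeff i = 0 := by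
    intro i hi
    apply Subtype.ext
    rw [coeff_eq hQ, coeff_eq_zero_of_natDegree_lt (by omega), map_zero]; rfl
  rw [e]
  constructor
  · rintro ⟨ha, hb⟩
    ext i
    rw [coeff_map, coeff_sub, coeff_X_pow, coeff_X_pow]
    rcases lt_trichotomy i k with hi | hi | hi
    · rw [(h1 i).1 (ha i (by omega)), if_neg (by omega), if_neg (by omega), sub_zero]
    · subst hi
      rw [(h2 i).1 hb]; simp
    · rcases eq_or_lt_of_le (Nat.succ_le_of_lt hi) with hi' | hi'
      · have : i = k + 1 := by omega
        subst this
        rw [h3]; simp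
      · rw [h4 i hi', if_neg (by omega), if_neg (by omega)]; simp
  · intro H
    have Hc : ∀ i, IsLocalRing.residue W (Q.coeff i) =
        (if i = k + 1 then 1 else 0) - (if i = k then 1 else 0) := by
      intro i
      have := congrArg (fun p => coeff p i) H
      simpa only [coeff_map, coeff_sub, coeff_X_pow] using this
    refine ⟨fun i hi => ?_, ?_⟩
    · rw [h1, Hc, if_neg (by omega), if_neg (by omega), sub_zero]
    · rw [h2, Hc]; simp

lemma exists_lift {O : ValuationSubring F} {W : ValuationSubring L}
    (hW : W.comap (algebraMap F L) = O) {h : F[X]} (hc : ∀ i, h.coeff i ∈ O) :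
    ∃ Q : W[X], Q.map (algebraMap W L) = h.map (algebraMap F L) := by
  have : h.map (algebraMap F L) ∈ lifts (algebraMap W L) := by
    rw [lifts_iff_coeff_lifts]
    intro i
    have hi := hc i
    rw [← hW, ValuationSubring.mem_comap] at hi
    exact ⟨⟨_, hi⟩, by rw [coeff_map]; rfl⟩
  rw [mem_lifts] at this
  exact this

lemma coeff_mem {O : ValuationSubring F} {h : F[X]} {r : ℕ}
    (hm : h.Monic) (hd : h.natDegree = r)
    (h1 : ∀ i : ℕ, i + 2 ≤ r → O.valuation (h.coeff i) < 1)
    (h2 : O.valuation (1 + h.coeff (r - 1)) < 1) (i : ℕ) : h.coeff i ∈ O := by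
  by_cases hi : i + 2 ≤ r
  · exact O.mem_of_valuation_le_one _ (h1 i hi).le
  · by_cases hi1 : i = r - 1
    · have := O.sub_mem (O.mem_of_valuation_le_one _ h2.le) O.one_mem
      rw [hi1]; simpa using this
    · by_cases hi2 : i = r
      · rw [hi2, ← hd, hm.coeff_natDegree]; exact O.one_mem
      · rw [coeff_eq_zero_of_natDegree_lt (by omega)]; exact O.zero_mem

lemma root_mem {W : ValuationSubring L} {h : F[X]} (hm : h.Monic) {Q : W[X]}
    (hQ : Q.map (algebraMap W L) = h.map (algebraMap F L)) {a : L} (ha : aeval a h = 0) :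
    a ∈ W := by
  have hinj : Function.Injective (algebraMap W L) := Subtype.val_injective
  have hQm : Q.Monic := by
    apply monic_of_injective hinj
    rw [hQ]; exact hm.map _
  have : IsIntegral W a := by
    refine ⟨Q, hQm, ?_⟩
    rw [← eval_map, hQ, eval_map_algebraMap]; exact ha
  obtain ⟨b, hb⟩ := IsIntegrallyClosed.isIntegral_iff.1 this
  rw [← hb]; exact b.2

end poly

section main
open scoped Pointwise
variable {F L : Type*} [Field F] [Field L] [Algebra F L]

lemma mem_stab (W : ValuationSubring L) (σ : L ≃ₐ[F] L) :
    (∀ x : L, x ∈ W ↔ σ x ∈ W) ↔ σ • W = W := by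
  constructor
  · intro h
    ext x
    rw [ValuationSubring.mem_pointwise_smul_iff_inv_smul_mem, h]
    change σ • σ⁻¹ • x ∈ W ↔ _
    rw [smul_inv_smul]
  · intro h x
    conv_rhs => rw [← h]
    exact (ValuationSubring.smul_mem_pointwise_smul_iff (g := σ)).symm

lemma comap_smul (W : ValuationSubring L) (σ : L ≃ₐ[F] L) :
    (σ • W).comap (algebraMap F L) = W.comap (algebraMap F L) := by
  ext x
  rw [ValuationSubring.mem_comap, ValuationSubring.mem_comap,
    ValuationSubring.mem_pointwise_smul_iff_inv_smul_mem]
  simp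

lemma val_smul (W : ValuationSubring L) (σ : L ≃ₐ[F] L) (x : L) :
    (σ • W).valuation x < 1 ↔ W.valuation (σ⁻¹ x) < 1 := by
  rw [val_lt_iff, val_lt_iff, ValuationSubring.mem_pointwise_smul_iff_inv_smul_mem]
  simp

lemma smul_le_eq [FiniteDimensional F L] (W : ValuationSubring L) (σ : L ≃ₐ[F] L)
    (h : W ≤ σ • W) : σ • W = W := by
  have h1 : ∀ n : ℕ, W ≤ σ ^ n • W := by
    intro n
    induction n with
    | zero => simp
    | succ n ih =>
      rw [pow_succ', mul_smul]
      exact h.trans (ValuationSubring.pointwise_smul_le_pointwise_smul_iff.2 ih)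
  apply le_antisymm _ h
  have h2 := h1 (orderOf σ - 1)
  rw [← ValuationSubring.pointwise_smul_le_pointwise_smul_iff (g := σ), ← mul_smul, ← pow_succ',
    Nat.sub_add_cancel (orderOf_pos σ), pow_orderOf_eq_one, one_smul] at h2
  exact h2

lemma smul_ge_eq [FiniteDimensional F L] (W : ValuationSubring L) (σ : L ≃ₐ[F] L)
    (h : σ • W ≤ W) : σ • W = W := by
  have := smul_le_eq W σ⁻¹ (ValuationSubring.pointwise_smul_subset_iff.1 h)
  rw [inv_smul_eq_iff] at this
  exact this.symm

lemma exists_elt [FiniteDimensional F L] (W : ValuationSubring L) :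
    ∃ y : L, W.valuation (y - 1) < 1 ∧ (∀ τ : L ≃ₐ[F] L, τ • W = W → τ y = y) ∧
      (∀ τ : L ≃ₐ[F] L, τ • W ≠ W → W.valuation (τ y) < 1) := by
  classical
  obtain ⟨x, hx, hxT⟩ := approxF
    (((Finset.univ : Finset (L ≃ₐ[F] L)).image (fun τ => τ • W)).erase W) W (by
      intro V hV
      rw [Finset.mem_erase, Finset.mem_image] at hV
      obtain ⟨hne, τ, -, rfl⟩ := hV
      exact ⟨fun h => hne (smul_le_eq W τ h), fun h => hne (smul_ge_eq W τ h)⟩)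
  have hxT' : ∀ τ : L ≃ₐ[F] L, τ • W ≠ W → (τ • W).valuation x < 1 := by
    intro τ hτ
    apply hxT
    rw [Finset.mem_erase, Finset.mem_image]
    exact ⟨hτ, τ, Finset.mem_univ _, rfl⟩
  set S := (Finset.univ : Finset (L ≃ₐ[F] L)).filter (fun σ => σ • W = W) with hS
  have hmem : ∀ σ, σ ∈ S ↔ σ • W = W := by intro σ; simp [hS]
  refine ⟨∏ σ ∈ S, σ x, ?_, ?_, ?_⟩
  · refine Finset.prod_induction _ (fun z => W.valuation (z - 1) < 1)
      (fun a b ha hb => val_sub_mul W ha hb) (by simp) ?_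
    intro σ hσ
    have h1 : σ⁻¹ • W = W := by rw [inv_smul_eq_iff, (hmem σ).1 hσ]
    have := val_smul W σ⁻¹ (x - 1)
    rw [h1, inv_inv, map_sub σ, map_one σ] at this
    exact this.1 hx
  · intro τ hτ
    rw [map_prod]
    refine Finset.prod_equiv (Equiv.mulLeft τ) ?_ ?_
    · intro σ
      rw [hmem, hmem, Equiv.coe_mulLeft, mul_smul, ← smul_left_cancel_iff τ (x := σ • W), hτ]
    · intro σ _; rfl
  · intro τ hτ
    rw [map_prod]
    refine Finset.prod_induction_nonempty _ (fun z => W.valuation z < 1) ?_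
      ⟨1, (hmem 1).2 (one_smul _ _)⟩ ?_
    · intro a b ha hb
      rw [map_mul]; exact mul_lt_one_of_lt_of_le ha hb.le
    · intro σ hσ
      have h1 : (σ⁻¹ * τ⁻¹) • W ≠ W := by
        intro h
        rw [mul_smul, inv_smul_eq_iff, (hmem σ).1 hσ, inv_smul_eq_iff] at h
        exact hτ h.symm
      have := (val_smul W (σ⁻¹ * τ⁻¹) x).1 (hxT' _ h1)
      rw [mul_inv_rev, inv_inv, inv_inv] at this
      exact this

lemma forward [FiniteDimensional F L] [IsGalois F L] {O : ValuationSubring F}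
    {W : ValuationSubring L} (hW : W.comap (algebraMap F L) = O) (K : IntermediateField F L)
    {r : ℕ} (hr : Module.finrank F K = r)
    (hK : ∀ σ : L ≃ₐ[F] L, σ ∈ K.fixingSubgroup ↔ σ • W = W) :
    ∃ h : Polynomial F, h.Monic ∧ h.natDegree = r ∧ Irreducible h ∧
      (∃ y : L, y ∈ K ∧ Polynomial.aeval y h = 0) ∧
      (∀ i : ℕ, i + 2 ≤ r → O.valuation (h.coeff i) < 1) ∧
      O.valuation (1 + h.coeff (r - 1)) < 1 := by
  classical
  obtain ⟨y, hy1, hy2, hy3⟩ := exists_elt (F := F) W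
  have hy4 : ∀ τ : L ≃ₐ[F] L, τ y = y → τ • W = W := by
    intro τ hτ
    by_contra h
    have h1 := hy3 τ h
    rw [hτ, val_one_of_sub W hy1] at h1
    exact lt_irrefl _ h1
  have hadj : IntermediateField.adjoin F {y} = K := by
    rw [← IsGalois.fixedField_fixingSubgroup K,
      ← IsGalois.fixedField_fixingSubgroup (IntermediateField.adjoin F {y})]
    congr 1
    ext σ
    rw [hK, IntermediateField.mem_fixingSubgroup_iff]
    constructor
    · intro h
      exact hy4 σ (h y (IntermediateField.mem_adjoin_simple_self F y))
    · intro h z hz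
      have : IntermediateField.adjoin F {y} ≤
          IntermediateField.fixedField (Subgroup.zpowers σ) := by
        rw [IntermediateField.adjoin_simple_le_iff, IntermediateField.mem_fixedField_iff]
        intro τ hτ
        apply hy2
        have : Subgroup.zpowers σ ≤ MulAction.stabilizer (L ≃ₐ[F] L) W := by
          rw [Subgroup.zpowers_le]; exact h
        exact this hτ
      exact (IntermediateField.mem_fixedField_iff _ _).1 (this hz) σ (Subgroup.mem_zpowers σ)
  have hyint : IsIntegral F y := Algebra.IsIntegral.isIntegral y
  have hmon := minpoly.monic hyint
  have hirr := minpoly.irreducible hyint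
  have hae := minpoly.aeval F y
  have hdeg : (minpoly F y).natDegree = r := by
    rw [← hr, ← hadj, IntermediateField.adjoin.finrank hyint]
  have hr0 : 0 < r := by rw [← hr]; exact Module.finrank_pos
  refine ⟨minpoly F y, hmon, hdeg, hirr,
    ⟨y, hadj ▸ IntermediateField.mem_adjoin_simple_self F y, hae⟩, ?_⟩
  have hprod := prod_rts hmon hirr hae
  have hsmall : ∀ a ∈ rts L (minpoly F y), a ≠ y → W.valuation a < 1 := by
    intro a ha hay
    rw [mem_rts hmon] at ha
    obtain ⟨σ, rfl⟩ := minpoly.exists_algEquiv_of_root' hyint.isAlgebraic ha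
    exact hy3 σ fun h => hay (hy2 σ h)
  have hin : ∀ a ∈ rts L (minpoly F y), a ∈ W := by
    intro a ha
    by_cases hay : a = y
    · rw [hay]; exact W.mem_of_valuation_le_one _ (val_one_of_sub W hy1).le
    · exact W.mem_of_valuation_le_one _ (hsmall a ha hay).le
  have hyr : y ∈ rts L (minpoly F y) := (mem_rts hmon y).2 hae
  have hcard : (rts L (minpoly F y)).card = r := by
    have := congrArg natDegree hprod
    rw [natDegree_map, hdeg, natDegree_prod_of_monic _ _ (fun a _ => monic_X_sub_C a)] at this
    simpa using this.symm
  rw [coeff_cond hW hr0 hmon hdeg ((liftQ_map W _ hin).trans hprod.symm)]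
  rw [liftQ, Polynomial.map_prod, ← Finset.mul_prod_erase _ _ (Finset.mem_attach _ ⟨y, hyr⟩)]
  congr 1
  · rw [Polynomial.map_sub, map_X, map_C]
    congr 1
    rw [← C_1]
    congr 1
    rw [← sub_eq_zero, ← map_one (IsLocalRing.residue W), ← map_sub, res_eq_zero]
    exact hy1
  · rw [Finset.prod_congr rfl (g := fun _ => X), Finset.prod_const,
      Finset.card_erase_of_mem (Finset.mem_attach _ _), Finset.card_attach, hcard]
    intro a ha
    rw [Polynomial.map_sub, map_X, map_C, (res_eq_zero _).2, C_0, sub_zero]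
    exact hsmall a.1 a.2 fun h => (Finset.ne_of_mem_erase ha) (Subtype.ext h)

lemma backward [FiniteDimensional F L] [IsGalois F L] {O : ValuationSubring F}
    (K : IntermediateField F L) {r : ℕ} (hr : Module.finrank F K = r)
    (hprol : {W : ValuationSubring L | W.comap (algebraMap F L) = O}.Finite)
    (hcard : {W : ValuationSubring L | W.comap (algebraMap F L) = O}.ncard ≤ r)
    {h : F[X]} (hm : h.Monic) (hd : h.natDegree = r) (hi : Irreducible h) {y : L} (hyK : y ∈ K)
    (hy : aeval y h = 0) (h1 : ∀ i : ℕ, i + 2 ≤ r → O.valuation (h.coeff i) < 1)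
    (h2 : O.valuation (1 + h.coeff (r - 1)) < 1) :
    ∃ W : ValuationSubring L, W.comap (algebraMap F L) = O ∧
      ∀ σ : L ≃ₐ[F] L, σ ∈ K.fixingSubgroup ↔ σ • W = W := by
  classical
  have hr0 : 0 < r := by rw [← hr]; exact Module.finrank_pos
  have hmin : h = minpoly F y := minpoly.eq_of_irreducible_of_monic hi hy hm
  have hyint : IsIntegral F y := Algebra.IsIntegral.isIntegral y
  have hprod := prod_rts hm hi hy
  -- for each prolongation there is exactly one root close to `1`
  have key : ∀ W : ValuationSubring L, W.comap (algebraMap F L) = O →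
      (∃ a ∈ rts L h, W.valuation (a - 1) < 1) ∧
      ∀ a ∈ rts L h, ∀ b ∈ rts L h, W.valuation (a - 1) < 1 → W.valuation (b - 1) < 1 → a = b := by
    intro W hW
    obtain ⟨Q, hQ⟩ := exists_lift hW (coeff_mem hm hd h1 h2)
    have hin : ∀ a ∈ rts L h, a ∈ W := fun a ha => root_mem hm hQ ((mem_rts hm a).1 ha)
    have hc := (coeff_cond hW hr0 hm hd ((liftQ_map W _ hin).trans hprod.symm)).1 ⟨h1, h2⟩
    rw [liftQ, Polynomial.map_prod] at hc
    simp only [Polynomial.map_sub, map_X, map_C] at hc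
    have hres : ∀ a : {a // a ∈ rts L h}, IsLocalRing.residue W ⟨a.1, hin a.1 a.2⟩ = 1 ↔
        W.valuation (a.1 - 1) < 1 := by
      intro a
      rw [← sub_eq_zero, ← map_one (IsLocalRing.residue W), ← map_sub, res_eq_zero]
      rfl
    constructor
    · have := congrArg (eval 1) hc
      simp only [eval_prod, eval_mul, eval_sub, eval_X, eval_one, eval_C, sub_self, zero_mul] at this
      obtain ⟨a, -, ha⟩ := Finset.prod_eq_zero_iff.1 this
      exact ⟨a.1, a.2, (hres a).1 (sub_eq_zero.1 ha).symm⟩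
    · intro a ha b hb hva hvb
      by_contra hab
      rw [← Finset.mul_prod_erase _ _ (Finset.mem_attach _ ⟨a, ha⟩),
        ← Finset.mul_prod_erase _ _ (Finset.mem_erase.2
          ⟨fun h => hab (congrArg Subtype.val h).symm, Finset.mem_attach _ ⟨b, hb⟩⟩),
        (hres ⟨a, ha⟩).2 hva, (hres ⟨b, hb⟩).2 hvb, C_1] at hc
      have hX : (X - 1 : (IsLocalRing.ResidueField W)[X]) ≠ 0 := by
        rw [← C_1]; exact X_sub_C_ne_zero 1
      have := congrArg (eval 1) (mul_left_cancel₀ hX hc)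
      simp at this
  obtain ⟨W₀, hW₀⟩ := exists_prol (L := L) O
  obtain ⟨a, ha, hva⟩ := (key W₀ hW₀).1
  obtain ⟨σ, rfl⟩ := minpoly.exists_algEquiv_of_root' (K := F) hyint.isAlgebraic
    (hmin ▸ (mem_rts hm a).1 ha)
  refine ⟨σ⁻¹ • W₀, by rw [comap_smul, hW₀], ?_⟩
  set W := σ⁻¹ • W₀ with hWdef
  have hW : W.comap (algebraMap F L) = O := by rw [hWdef, comap_smul, hW₀]
  have hyW : W.valuation (y - 1) < 1 := by
    rw [hWdef, val_smul, inv_inv, map_sub σ, map_one σ]; exact hva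
  have hadj : IntermediateField.adjoin F {y} = K := by
    apply IntermediateField.eq_of_le_of_finrank_eq
    · rwa [IntermediateField.adjoin_simple_le_iff]
    · rw [hr, IntermediateField.adjoin.finrank hyint, ← hmin, hd]
  have hle : MulAction.stabilizer (L ≃ₐ[F] L) W ≤ K.fixingSubgroup := by
    intro τ hτ
    rw [MulAction.mem_stabilizer_iff] at hτ
    have hτy : τ y = y := by
      apply (key W hW).2
      · rw [mem_rts hm, show τ y = (τ : L →ₐ[F] L) y from rfl, aeval_algHom_apply, hy, map_zero]
      · rw [mem_rts hm]; exact hy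
      · have := val_smul W τ (τ (y - 1))
        rw [hτ] at this
        have e : τ⁻¹ (τ (y - 1)) = y - 1 := inv_smul_smul τ (y - 1)
        rw [e, map_sub τ, map_one τ] at this
        exact this.2 hyW
      · exact hyW
    have : K ≤ IntermediateField.fixedField (Subgroup.zpowers τ) := by
      rw [← hadj, IntermediateField.adjoin_simple_le_iff, IntermediateField.mem_fixedField_iff]
      intro ρ hρ
      have : Subgroup.zpowers τ ≤ MulAction.stabilizer (L ≃ₐ[F] L) y := by
        rw [Subgroup.zpowers_le]; exact hτy
      exact this hρ
    rw [IntermediateField.mem_fixingSubgroup_iff]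
    intro z hz
    exact (IntermediateField.mem_fixedField_iff _ _).1 (this hz) τ (Subgroup.mem_zpowers τ)
  have hidx : (MulAction.stabilizer (L ≃ₐ[F] L) W).index ≤ K.fixingSubgroup.index := by
    rw [MulAction.index_stabilizer, ← IntermediateField.finrank_eq_fixingSubgroup_index, hr]
    refine (Set.ncard_le_ncard ?_ hprol).trans hcard
    rintro _ ⟨τ, rfl⟩
    change (τ • W).comap _ = O
    rw [comap_smul, hW]
  have heq : MulAction.stabilizer (L ≃ₐ[F] L) W = K.fixingSubgroup := by
    apply Subgroup.eq_of_le_of_card_ge hle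
    have e1 := (MulAction.stabilizer (L ≃ₐ[F] L) W).card_mul_index
    have e2 := K.fixingSubgroup.card_mul_index
    have hpos : 0 < K.fixingSubgroup.index := Nat.pos_of_ne_zero Subgroup.index_ne_zero_of_finite
    by_contra hlt
    rw [not_le] at hlt
    have := Nat.mul_lt_mul_of_lt_of_le hlt hidx hpos
    omega
  intro τ
  rw [← heq, MulAction.mem_stabilizer_iff]

end main
end Stmt11Aux


set_option maxHeartbeats 1000000 in
theorem stmt11 {F L : Type*} [Field F] [Field L] [Algebra F L]
    [FiniteDimensional F L] [IsGalois F L]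
    (O : ValuationSubring F)
    -- `v` is non-trivial:
    (hnontriv : O ≠ ⊤)
    (K : IntermediateField F L) {r : ℕ}
    (hr : Module.finrank F K = r)
    -- `v` has at most `r` prolongations to `L`:
    (hprol : {W : ValuationSubring L | W.comap (algebraMap F L) = O}.Finite)
    (hcard : {W : ValuationSubring L | W.comap (algebraMap F L) = O}.ncard ≤ r) :
    -- `K` is a decomposition subfield of `L/F` w.r.t. `v`, i.e. `Gal(L/K)` is the
    -- decomposition subgroup of some prolongation `W` of `v` to `L`, ...
    (∃ W : ValuationSubring L, W.comap (algebraMap F L) = O ∧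
      ∀ σ : L ≃ₐ[F] L, σ ∈ K.fixingSubgroup ↔ (∀ x : L, x ∈ W ↔ σ x ∈ W))
    ↔
    -- ... iff there is a monic irreducible polynomial `h` of degree `r` over `F` with
    -- a root in `K` whose coefficients `h₀, …, h_{r-2}` and `1 + h_{r-1}` lie in `M_v`:
    (∃ h : Polynomial F, h.Monic ∧ h.natDegree = r ∧ Irreducible h ∧
      (∃ y : L, y ∈ K ∧ Polynomial.aeval y h = 0) ∧
      (∀ i : ℕ, i + 2 ≤ r → O.valuation (h.coeff i) < 1) ∧
      O.valuation (1 + h.coeff (r - 1)) < 1) := by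
  constructor
  · rintro ⟨W, hW, hK⟩
    exact Stmt11Aux.forward hW K hr fun σ => (hK σ).trans (Stmt11Aux.mem_stab W σ)
  · rintro ⟨h, hm, hd, hi, ⟨y, hyK, hy⟩, h1, h2⟩
    obtain ⟨W, hW, hK⟩ := Stmt11Aux.backward K hr hprol hcard hm hd hi hyK hy h1 h2
    exact ⟨W, hW, fun σ => (hK σ).trans (Stmt11Aux.mem_stab W σ).symm⟩
end
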